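/- arXiv:1909.12225 — 12 statements merged into one kernel-verified Lean document; each statement's English description precedes it below -/
import Mathlib

section
/- Let X be a compact metric space, n ≥ 1 an integer, and r > 0. Assume that for every point x of X the n-dimensional Hausdorff content of the closed metric ball B(x,r) is strictly less than (r/(4n))^n. Then UR_{n−1}(X) < r, i.e. there exist r' < r and a finite covering of X by open sets, each contained in a closed metric ball of radius r', such that no n+1 of the covering sets have a common point. -/
/-!
The proof is an induction on `n` in the style of Papasoglu and Nabutovsky. Put `s = r / (4n)`.
`closed_cover` treats a closed `Y ⊆ X` whose intersections with balls of radius `4ns` are covered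
by balls of `X` with `Σ radius ^ n` uniformly below `s ^ n`.

For the step from `m` to `m + 1`, consider closed sets `Z` that cut `Y` into finitely many disjoint
pieces lying in balls of radius `R < 4(m+1)s` (`Separates`), together with finite coverings of `Z`
by balls of radius `< s`, and choose a pair for which `Σ radius ^ m` is almost minimal. Given `x`,
the coarea inequality `exists_radius` yields `ρ` between `4(m+1)s - 2s` and `R` such that the sphere
of radius `ρ` about `x` has a covering with `Σ radius ^ m < s ^ m`. Replacing the part of `Z` in the
open `ρ`-ball by this sphere (`Separates.surgery`) gives a competitor, so the balls of the covering
of `Z` lying in that `ρ`-ball have total size below `s ^ m`. They include all balls meeting the ball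
of radius `4ms` about `x`, because radii are below `s` (`exists_separating`). Hence the induction
hypothesis applies to `Z`. Thickening the resulting sets slightly keeps their multiplicity at most
`m` (`exists_thickening`), and what remains of the disjoint pieces raises it by at most one.

The strict inequality on contents is turned into a uniform bound by compactness (`exists_uniform`),
and a last thickening turns the closed covering into an open one.
-/

open Metric Set
open scoped ENNReal NNReal

/-- The `m`-dimensional Hausdorff content of a subset `A` of a metric space `X`:
the infimum, over all countable coverings of `A` by closed metric balls of `X` with
radii `r_i`, of `∑ r_i ^ m`. -/
noncomputable def HC {X : Type*} [MetricSpace X] (m : ℝ) (A : Set X) : ℝ≥0∞ :=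
  ⨅ (S : Set (X × ℝ≥0)) (_ : S.Countable)
    (_ : A ⊆ ⋃ p ∈ S, Metric.closedBall p.1 (p.2 : ℝ)),
    ∑' p : S, ((p : X × ℝ≥0).2 : ℝ≥0∞) ^ m

/-! ### Ball coverings and separating sets -/

/-- A finite set of pairs (centre, radius) whose closed balls cover `A`, with nonnegative radii;
`Σ radius ^ m` over such a set bounds the content of `A` from above. -/
def BallCover {X : Type*} [MetricSpace X] (A : Set X) (F : Finset (X × ℝ)) : Prop :=
  (∀ p ∈ F, 0 ≤ p.2) ∧ A ⊆ ⋃ p ∈ F, closedBall p.1 p.2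

/-- `Z` separates `Y` into finitely many pairwise disjoint pieces `W j`, each inside a closed ball
of radius `R`. That the pieces are relatively open away from `Z` is encoded by the closedness of
each `Z ∪ W j`. -/
def Separates {X : Type*} [MetricSpace X] (Y : Set X) (R : ℝ) (Z : Set X) : Prop :=
  IsClosed Z ∧ ∃ (ι : Type) (_ : Finite ι) (W : ι → Set X),
    Y ⊆ Z ∪ ⋃ j, W j ∧ (∀ j, IsClosed (Z ∪ W j)) ∧ (∀ j, ∃ c, W j ⊆ closedBall c R) ∧
    ∀ i j, i ≠ j → Disjoint (W i) (W j)

/-- Coarea inequality for ball coverings: some sphere about `x` with radius in `[a, b]` meets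
only balls whose total `m`-dimensional size is at most `t'`, because each ball of radius `ρ` meets
such spheres only for a set of radii of length at most `2ρ`. -/
lemma exists_radius {X : Type*} [MetricSpace X] (x : X) (F : Finset (X × ℝ))
    (hF : ∀ p ∈ F, 0 ≤ p.2) (m : ℕ) (t t' a b : ℝ) (hab : a < b)
    (hsum : ∑ p ∈ F, p.2 ^ (m + 1) ≤ t) (ht : 2 * t < (b - a) * t') :
    ∃ ρ ∈ Icc a b, ∑ p ∈ F with |dist x p.1 - ρ| ≤ p.2, p.2 ^ m ≤ t' := by
  by_contra! hcon
  let J : X × ℝ → Set ℝ := fun p => Icc (dist x p.1 - p.2) (dist x p.1 + p.2)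
  let f : X × ℝ → ℝ → ℝ := fun p => (J p).indicator fun _ => p.2 ^ m
  have hint : ∀ p, MeasureTheory.IntegrableOn (f p) (Icc a b) := fun p =>
    (MeasureTheory.integrableOn_const (by simp)).indicator measurableSet_Icc
  have h1 : ∫ _ in Icc a b, t' ≤ ∫ ρ in Icc a b, ∑ p ∈ F, f p ρ := by
    refine MeasureTheory.setIntegral_mono_on (MeasureTheory.integrableOn_const (by simp))
      (MeasureTheory.integrable_finsetSum _ fun p _ => hint p) measurableSet_Icc ?_
    intro ρ hρ
    refine (hcon ρ hρ).le.trans (le_of_eq ?_)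
    rw [Finset.sum_filter]
    refine Finset.sum_congr rfl fun p _ => ?_
    simp only [f, J, indicator, mem_Icc]
    refine if_congr ?_ rfl rfl
    rw [abs_le]
    constructor <;> rintro ⟨h, h'⟩ <;> constructor <;> linarith
  rw [MeasureTheory.integral_finsetSum _ fun p _ => hint p] at h1
  have h2 : ∀ p ∈ F, ∫ ρ in Icc a b, f p ρ ≤ 2 * p.2 ^ (m + 1) := by
    intro p hp
    have hp0 := hF p hp
    simp only [f]
    rw [MeasureTheory.setIntegral_indicator measurableSet_Icc, MeasureTheory.setIntegral_const,
      smul_eq_mul]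
    have h3 : MeasureTheory.volume.real (Icc a b ∩ J p) ≤ 2 * p.2 := by
      refine (MeasureTheory.measureReal_mono inter_subset_right (by simp [J])).trans ?_
      simp only [J, Real.volume_real_Icc]
      rw [max_eq_left] <;> linarith
    calc _ ≤ 2 * p.2 * p.2 ^ m := mul_le_mul_of_nonneg_right h3 (by positivity)
      _ = _ := by ring
  have h4 := h1.trans (Finset.sum_le_sum h2)
  rw [← Finset.mul_sum, MeasureTheory.setIntegral_const, Real.volume_real_Icc_of_le hab.le,
    smul_eq_mul] at h4
  linarith

/-! ### Thickening of closed families -/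

/-- A finite closed family in a compact space can be thickened without raising its multiplicity:
the thickened sets through `y` are among the original sets through some `x`. -/
lemma exists_thickening {X : Type*} [MetricSpace X] [CompactSpace X] {ι : Type} [Finite ι]
    (C : ι → Set X) (hC : ∀ i, IsClosed (C i)) (e : ℝ) (he : 0 < e) :
    ∃ δ, 0 < δ ∧ δ ≤ e ∧ ∀ y, ∃ x, ∀ i, y ∈ cthickening δ (C i) → x ∈ C i := by
  let O : X → Set X := fun x => ⋂ i ∈ {i | x ∉ C i}, (C i)ᶜ
  have hO : ∀ x, IsOpen (O x) := fun x =>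
    (Set.toFinite _).isOpen_biInter fun i _ => (hC i).isOpen_compl
  have hcov : (univ : Set X) ⊆ ⋃ x, O x := fun x _ =>
    mem_iUnion.2 ⟨x, mem_iInter₂.2 fun i hi => hi⟩
  obtain ⟨l, hl, hL⟩ := lebesgue_number_lemma_of_metric isCompact_univ hO hcov
  refine ⟨min (l / 2) e, by positivity, min_le_right _ _, fun y => ?_⟩
  obtain ⟨x, hx⟩ := hL y (mem_univ y)
  refine ⟨x, fun i hi => ?_⟩
  rw [(hC i).isCompact.cthickening_eq_biUnion_closedBall (by positivity)] at hi
  obtain ⟨z, hz, hyz⟩ := mem_iUnion₂.1 hi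
  by_contra hxi
  have hzO : z ∈ O x := hx (by
    rw [mem_ball, dist_comm]
    exact (mem_closedBall.1 hyz).trans_lt ((min_le_left _ _).trans_lt (by linarith)))
  exact mem_iInter₂.1 hzO i hxi hz

lemma cthickening_subset {X : Type*} [MetricSpace X] [CompactSpace X] {C : Set X}
    (hC : IsClosed C) {c : X} {R δ : ℝ} (hδ : 0 ≤ δ) (h : C ⊆ closedBall c R) :
    cthickening δ C ⊆ closedBall c (R + δ) := by
  rw [hC.isCompact.cthickening_eq_biUnion_closedBall hδ]
  refine iUnion₂_subset fun z hz => ?_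
  exact closedBall_subset_closedBall' (by
    have := mem_closedBall.1 (h hz)
    linarith)

/-! ### Almost minimal separating sets -/

/-- Surgery on a separating set: replace its part inside the open ball about `x` by the
sphere, with the ball becoming a new piece. -/
lemma Separates.surgery {X : Type*} [MetricSpace X] {Y Z : Set X} {R : ℝ} (hY : IsClosed Y)
    (h : Separates Y R Z) (x : X) {ρ : ℝ} (hρ : ρ ≤ R) :
    Separates Y R (Z \ ball x ρ ∪ Y ∩ sphere x ρ) := by
  obtain ⟨hZ, ι, hι, W, hcov, hcl, hR, hdisj⟩ := h
  have hS : IsClosed (Y ∩ sphere x ρ) := hY.inter isClosed_sphere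
  have hZb : IsClosed (Z \ ball x ρ) := hZ.inter isOpen_ball.isClosed_compl
  refine ⟨hZb.union hS, Option ι, inferInstance,
    fun o => o.elim (Y ∩ ball x ρ) fun j => W j \ ball x ρ, ?_, ?_, ?_, ?_⟩
  · intro y hy
    by_cases hb : y ∈ ball x ρ
    · exact Or.inr (mem_iUnion.2 ⟨none, hy, hb⟩)
    · rcases hcov hy with hz | hw
      · exact Or.inl (Or.inl ⟨hz, hb⟩)
      · obtain ⟨j, hj⟩ := mem_iUnion.1 hw
        exact Or.inr (mem_iUnion.2 ⟨some j, hj, hb⟩)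
  · rintro (_ | j)
    · have : Z \ ball x ρ ∪ Y ∩ sphere x ρ ∪ Y ∩ ball x ρ =
          Z \ ball x ρ ∪ Y ∩ closedBall x ρ := by
        rw [← sphere_union_ball, inter_union_distrib_left, union_assoc]
      simp only [Option.elim]
      rw [this]
      exact hZb.union (hY.inter isClosed_closedBall)
    · have : Z \ ball x ρ ∪ Y ∩ sphere x ρ ∪ W j \ ball x ρ =
          (Z ∪ W j) \ ball x ρ ∪ Y ∩ sphere x ρ := by
        rw [union_sdiff_distrib, union_right_comm]
      simp only [Option.elim]
      rw [this]
      exact ((hcl j).inter isOpen_ball.isClosed_compl).union hS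
  · rintro (_ | j)
    · exact ⟨x, fun y hy => (ball_subset_closedBall.trans (closedBall_subset_closedBall hρ)) hy.2⟩
    · obtain ⟨c, hc⟩ := hR j
      exact ⟨c, fun y hy => hc hy.1⟩
  · rintro (_ | i) (_ | j) hij
    · exact absurd rfl hij
    · exact disjoint_left.2 fun y hy hy' => hy'.2 hy.2
    · exact disjoint_left.2 fun y hy hy' => hy.2 hy'.2
    · exact (hdisj i j fun h => hij (by rw [h])).mono sdiff_subset sdiff_subset

/-- Nearly minimal separating sets have small content in every ball: if `Y` has small
`(m+1)`-dimensional content in balls of radius `4(m+1)s`, then it has a separating set with small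
`m`-dimensional content in balls of radius `4ms`. -/
lemma exists_separating {X : Type*} [MetricSpace X] [CompactSpace X] (m : ℕ) (s t : ℝ)
    (hs : 0 < s) (ht : t < s ^ (m + 1)) (Y : Set X) (hY : IsClosed Y)
    (hF : ∀ x, ∃ F, BallCover (Y ∩ closedBall x (4 * (m + 1 : ℕ) * s)) F ∧
      ∑ p ∈ F, p.2 ^ (m + 1) ≤ t) :
    ∃ R < 4 * (m + 1 : ℕ) * s, ∃ t' < s ^ m, ∃ Z, Separates Y R Z ∧
      ∀ x, ∃ F, BallCover (Z ∩ closedBall x (4 * m * s)) F ∧ ∑ p ∈ F, p.2 ^ m ≤ t' := by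
  classical
  wlog ht0 : 0 ≤ t generalizing t
  · refine this 0 (by positivity) (fun x => ?_) le_rfl
    obtain ⟨F, h1, h2⟩ := hF x
    exact ⟨F, h1, h2.trans (not_le.1 ht0).le⟩
  obtain ⟨t', h1, h2⟩ : ∃ t', t / s < t' ∧ t' < s ^ m :=
    exists_between (by rw [div_lt_iff₀ hs, ← pow_succ]; exact ht)
  have ht'0 : 0 < t' := lt_of_le_of_lt (by positivity) h1
  have h1' : t < t' * s := (div_lt_iff₀ hs).1 h1
  -- The radii of the spheres range over `[r - 2s, r - η]`, where `r = 4(m+1)s`.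
  set r : ℝ := 4 * (m + 1 : ℕ) * s with hr
  set η : ℝ := s - t / t' with hη
  have hη0 : 0 < η := by
    have : t / t' < s := by rw [div_lt_iff₀ ht'0, mul_comm]; exact h1'
    linarith
  have hηs : η ≤ s := by
    have : 0 ≤ t / t' := by positivity
    linarith
  have hηt : (r - η - (r - 2 * s)) * t' = s * t' + t := by
    rw [hη]; field_simp; ring
  obtain ⟨ε, hε, hεt⟩ : ∃ ε, 0 < ε ∧ t' + ε < s ^ m := ⟨(s ^ m - t') / 2, by linarith, by linarith⟩
  let A : Set ℝ := {v | ∃ Z F, Separates Y (r - η) Z ∧ BallCover Z F ∧ (∀ p ∈ F, p.2 < s) ∧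
    ∑ p ∈ F, p.2 ^ m = v}
  have hAne : A.Nonempty := by
    obtain ⟨c, hc, hcY⟩ := hY.isCompact.finite_cover_balls (e := s / 2) (by positivity)
    refine ⟨_, Y, hcY.1.toFinset.image fun x => (x, s / 2), ?_, ⟨?_, ?_⟩, ?_, rfl⟩
    · exact ⟨hY, Empty, inferInstance, fun _ => ∅, subset_union_left, by simp, by simp, by simp⟩
    · intro p hp
      obtain ⟨x, _, rfl⟩ := Finset.mem_image.1 hp
      positivity
    · intro y hy
      obtain ⟨x, hx, hyx⟩ := mem_iUnion₂.1 (hcY.2 hy)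
      exact mem_iUnion₂.2 ⟨(x, s / 2), Finset.mem_image_of_mem _ (by simpa using hx),
        ball_subset_closedBall hyx⟩
    · intro p hp
      obtain ⟨x, _, rfl⟩ := Finset.mem_image.1 hp
      exact half_lt_self hs
  have hAbdd : BddBelow A := ⟨0, by
    rintro _ ⟨Z, F, _, hc, _, rfl⟩
    exact Finset.sum_nonneg fun p hp => pow_nonneg (hc.1 p hp) _⟩
  obtain ⟨v, ⟨Z, F, hsep, hcF, hFs, rfl⟩, hv⟩ :=
    exists_lt_of_csInf_lt hAne (lt_add_of_pos_right (sInf A) hε)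
  refine ⟨r - η, by linarith, t' + ε, hεt, Z, hsep, fun x => ?_⟩
  obtain ⟨G, hG, hGt⟩ := hF x
  have hGs : ∀ p ∈ G, p.2 < s := by
    intro p hp
    refine lt_of_pow_lt_pow_left₀ (m + 1) hs.le (lt_of_le_of_lt ?_ ht)
    exact (Finset.single_le_sum (f := fun p : X × ℝ => p.2 ^ (m + 1))
      (fun q hq => pow_nonneg (hG.1 q hq) _) hp).trans hGt
  obtain ⟨ρ, ⟨hρ1, hρ2⟩, hρ⟩ := exists_radius x G hG.1 m t t' (r - 2 * s) (r - η) (by linarith)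
    hGt (by rw [hηt]; linarith)
  set G' := G.filter fun p => |dist x p.1 - ρ| ≤ p.2 with hG'
  -- Only the balls inside the open ball of radius `ρ` are traded for the covering of the sphere.
  set Finside := F.filter fun p => closedBall p.1 p.2 ⊆ ball x ρ with hFinside
  set Foutside := F.filter fun p => ¬ closedBall p.1 p.2 ⊆ ball x ρ with hFoutside
  refine ⟨Finside, ⟨fun p hp => hcF.1 p (Finset.mem_filter.1 hp).1, ?_⟩, ?_⟩
  · rintro y ⟨hyZ, hyx⟩
    obtain ⟨p, hp, hyp⟩ := mem_iUnion₂.1 (hcF.2 hyZ)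
    refine mem_iUnion₂.2 ⟨p, Finset.mem_filter.2 ⟨hp, fun z hz => ?_⟩, hyp⟩
    have := hFs p hp
    have h3 : dist z x ≤ dist z p.1 + dist y p.1 + dist y x := by
      have := dist_triangle4 z p.1 y x
      rwa [dist_comm p.1 y] at this
    rw [mem_closedBall] at hyx hyp hz
    have h4 : r = 4 * m * s + 4 * s := by rw [hr]; push_cast; ring
    rw [mem_ball]
    linarith
  · have hnew : ∑ p ∈ Foutside ∪ G', p.2 ^ m ∈ A := by
      refine ⟨_, Foutside ∪ G', hsep.surgery hY x hρ2, ⟨?_, ?_⟩, ?_, rfl⟩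
      · intro p hp
        rcases Finset.mem_union.1 hp with h | h
        · exact hcF.1 p (Finset.mem_filter.1 h).1
        · exact hG.1 p (Finset.mem_filter.1 h).1
      · rintro y (⟨hyZ, hyb⟩ | ⟨hyY, hyS⟩)
        · obtain ⟨p, hp, hyp⟩ := mem_iUnion₂.1 (hcF.2 hyZ)
          exact mem_iUnion₂.2 ⟨p, Finset.mem_union_left _
            (Finset.mem_filter.2 ⟨hp, fun h => hyb (h hyp)⟩), hyp⟩
        · rw [mem_sphere] at hyS
          obtain ⟨p, hp, hyp⟩ := mem_iUnion₂.1 (hG.2 ⟨hyY, by rw [mem_closedBall]; linarith⟩)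
          refine mem_iUnion₂.2 ⟨p, Finset.mem_union_right _ (Finset.mem_filter.2 ⟨hp, ?_⟩), hyp⟩
          rw [← hyS, dist_comm x]
          exact (abs_dist_sub_le _ _ _).trans (by rw [dist_comm]; exact hyp)
      · intro p hp
        rcases Finset.mem_union.1 hp with h | h
        · exact hFs p (Finset.mem_filter.1 h).1
        · exact hGs p (Finset.mem_filter.1 h).1
    have h5 := csInf_le hAbdd hnew
    have h6 : ∑ p ∈ Foutside ∪ G', p.2 ^ m + ∑ p ∈ Foutside ∩ G', p.2 ^ m =
      ∑ p ∈ Foutside, p.2 ^ m + ∑ p ∈ G', p.2 ^ m := Finset.sum_union_inter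
    have h7 : 0 ≤ ∑ p ∈ Foutside ∩ G', p.2 ^ m := Finset.sum_nonneg fun p hp =>
      pow_nonneg (hG.1 p (Finset.mem_filter.1 (Finset.mem_inter.1 hp).2).1) _
    have h8 : ∑ p ∈ Finside, p.2 ^ m + ∑ p ∈ Foutside, p.2 ^ m = ∑ p ∈ F, p.2 ^ m :=
      Finset.sum_filter_add_sum_filter_not _ _ _
    linarith

/-! ### Induction on the dimension -/

/-- The theorem for closed subsets `Y` of `X`, with contents measured by balls of the ambient `X`,
a uniform bound `t < s ^ n` on them, and closed covering sets; these are the changes that let the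
induction on `n` run. -/
lemma closed_cover {X : Type*} [MetricSpace X] [CompactSpace X] (n : ℕ) (s : ℝ) (hs : 0 < s) :
    ∀ t < s ^ n, ∀ Y : Set X, IsClosed Y →
    (∀ x, ∃ F, BallCover (Y ∩ closedBall x (4 * n * s)) F ∧ ∑ p ∈ F, p.2 ^ n ≤ t) →
    ∃ R < 4 * n * s, ∃ (ι : Type) (_ : Finite ι) (C : ι → Set X),
      (∀ i, IsClosed (C i)) ∧ Y ⊆ ⋃ i, C i ∧ (∀ i, ∃ c, C i ⊆ closedBall c R) ∧
      ∀ x, {i | x ∈ C i}.encard ≤ n := by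
  induction n with
  | zero =>
    intro t ht Y _ hF
    refine ⟨-1, by simp, Empty, inferInstance, fun _ => ∅, by simp, ?_, by simp, by simp⟩
    -- A covering with fewer than `s ^ 0 = 1` balls is empty, so `Y` has no points.
    intro y hy
    obtain ⟨F, hc, hsum⟩ := hF y
    obtain ⟨p, hp, _⟩ := mem_iUnion₂.1 (hc.2 ⟨hy, by simp⟩)
    have : (1 : ℝ) ≤ F.card := by exact_mod_cast Finset.card_pos.2 ⟨p, hp⟩
    simp at hsum ht
    linarith
  | succ m ih =>
    intro t ht Y hY hF
    obtain ⟨R, hR, t', ht', Z, ⟨hZ, κ, hκ, W, hcov, hcl, hWR, hdisj⟩, hZF⟩ :=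
      exists_separating m s t hs ht Y hY hF
    obtain ⟨R', hR', ι, hι, C, hCc, hCcov, hCR, hCm⟩ := ih t' ht' Z hZ hZF
    obtain ⟨δ, hδ, hδs, hthick⟩ := exists_thickening C hCc s hs
    let V : Set X := ⋃ i, thickening δ (C i)
    have hV : IsOpen V := isOpen_iUnion fun i => isOpen_thickening
    have hZV : Z ⊆ V := fun z hz => by
      obtain ⟨i, hi⟩ := mem_iUnion.1 (hCcov hz)
      exact mem_iUnion.2 ⟨i, self_subset_thickening hδ _ hi⟩
    refine ⟨max (R' + δ) R, max_lt (by push_cast; linarith) hR, ι ⊕ κ, inferInstance,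
      Sum.elim (fun i => cthickening δ (C i)) fun j => W j \ V, ?_, ?_, ?_, ?_⟩
    · rintro (i | j)
      · exact isClosed_cthickening
      · have : W j \ V = (Z ∪ W j) \ V := by
          rw [union_sdiff_distrib, sdiff_eq_empty.2 hZV, empty_union]
        simp only [Sum.elim_inr]
        rw [this]
        exact (hcl j).inter hV.isClosed_compl
    · intro y hy
      by_cases hyV : y ∈ V
      · obtain ⟨i, hi⟩ := mem_iUnion.1 hyV
        exact mem_iUnion.2 ⟨Sum.inl i, thickening_subset_cthickening _ _ hi⟩
      · rcases hcov hy with h | h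
        · exact absurd (hZV h) hyV
        · obtain ⟨j, hj⟩ := mem_iUnion.1 h
          exact mem_iUnion.2 ⟨Sum.inr j, hj, hyV⟩
    · rintro (i | j)
      · obtain ⟨c, hc⟩ := hCR i
        exact ⟨c, (cthickening_subset (hCc i) hδ.le hc).trans
          (closedBall_subset_closedBall (le_max_left _ _))⟩
      · obtain ⟨c, hc⟩ := hWR j
        exact ⟨c, (sdiff_subset.trans hc).trans
          (closedBall_subset_closedBall (le_max_right _ _))⟩
    · intro y
      obtain ⟨x, hx⟩ := hthick y
      have hsub : {i | y ∈ Sum.elim (fun i => cthickening δ (C i)) (fun j => W j \ V) i} ⊆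
          Sum.inl '' {i | x ∈ C i} ∪ Sum.inr '' {j | y ∈ W j} := by
        rintro (i | j) h
        · exact Or.inl ⟨i, hx i h, rfl⟩
        · exact Or.inr ⟨j, h.1, rfl⟩
      have hone : {j | y ∈ W j}.encard ≤ 1 := encard_le_one_iff.2 fun i j hi hj => by
        by_contra hij
        exact disjoint_left.1 (hdisj i j hij) hi hj
      refine (encard_le_encard hsub).trans ((encard_union_le _ _).trans ?_)
      rw [Sum.inl_injective.encard_image, Sum.inr_injective.encard_image]
      push_cast
      exact add_le_add (hCm x) hone

/-! ### From Hausdorff content to uniform finite coverings -/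

/-- A compact set of small content is covered by finitely many open balls of small total size. -/
lemma exists_open_cover {X : Type*} [MetricSpace X] (n : ℕ) {B : Set X} (hB : IsCompact B)
    {v : ℝ} (h : HC (n : ℝ) B < ENNReal.ofReal v) :
    ∃ F : Finset (X × ℝ), (∀ p ∈ F, 0 ≤ p.2) ∧ B ⊆ ⋃ p ∈ F, ball p.1 p.2 ∧
      ∑ p ∈ F, p.2 ^ n < v := by
  classical
  unfold HC at h
  simp only [iInf_lt_iff] at h
  obtain ⟨S, hS, hcov, hsum⟩ := h
  have : Countable S := hS
  obtain ⟨w, hw1, hw2⟩ := exists_between hsum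
  obtain ⟨ε, hε, hεw⟩ := ENNReal.exists_pos_sum_of_countable' (tsub_pos_of_lt hw1).ne' S
  -- Each radius is enlarged a little, so that open balls suffice.
  have hfat : ∀ p : S, ∃ q : ℝ≥0, p.1.2 < q ∧ (q : ℝ≥0∞) ^ n ≤ (p.1.2 : ℝ≥0∞) ^ n + ε p := by
    intro p
    have hc : Filter.Tendsto (fun q : ℝ≥0 => (q : ℝ≥0∞) ^ n) (nhdsWithin p.1.2 (Ioi p.1.2))
        (nhds ((p.1.2 : ℝ≥0∞) ^ n)) :=
      (((ENNReal.continuous_pow n).comp ENNReal.continuous_coe).tendsto p.1.2).mono_left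
        nhdsWithin_le_nhds
    have hlt : (p.1.2 : ℝ≥0∞) ^ n < (p.1.2 : ℝ≥0∞) ^ n + ε p :=
      ENNReal.lt_add_right (by simp) (hε p).ne'
    obtain ⟨q, hq1, hq2⟩ := ((hc.eventually_lt_const hlt).and self_mem_nhdsWithin).exists
    exact ⟨q, hq2, hq1.le⟩
  choose q hq1 hq2 using hfat
  obtain ⟨T, hT⟩ := hB.elim_finite_subcover (fun p : S => ball p.1.1 (q p : ℝ))
    (fun _ => isOpen_ball) (fun y hy => by
      obtain ⟨p, hp, hyp⟩ := mem_iUnion₂.1 (hcov hy)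
      exact mem_iUnion.2 ⟨⟨p, hp⟩, mem_ball.2
        ((mem_closedBall.1 hyp).trans_lt (by exact_mod_cast hq1 ⟨p, hp⟩))⟩)
  refine ⟨T.image fun p => (p.1.1, (q p : ℝ)), ?_, ?_, ?_⟩
  · intro p hp
    obtain ⟨x, _, rfl⟩ := Finset.mem_image.1 hp
    exact (q x).2
  · intro y hy
    obtain ⟨p, hp, hyp⟩ := mem_iUnion₂.1 (hT hy)
    exact mem_iUnion₂.2 ⟨(p.1.1, (q p : ℝ)), Finset.mem_image_of_mem _ hp, hyp⟩
  · have h1 : ∑ p ∈ T, (q p : ℝ≥0∞) ^ n < ENNReal.ofReal v := by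
      calc ∑ p ∈ T, (q p : ℝ≥0∞) ^ n ≤ ∑' p, (q p : ℝ≥0∞) ^ n := ENNReal.sum_le_tsum T
        _ ≤ ∑' p : S, ((p.1.2 : ℝ≥0∞) ^ n + ε p) := ENNReal.tsum_le_tsum hq2
        _ = ∑' p : S, (p.1.2 : ℝ≥0∞) ^ (n : ℝ) + ∑' p, ε p := by
          rw [ENNReal.tsum_add]; simp
        _ ≤ ∑' p : S, (p.1.2 : ℝ≥0∞) ^ (n : ℝ) + (w - ∑' p : S, (p.1.2 : ℝ≥0∞) ^ (n : ℝ)) := by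
          gcongr
        _ = w := add_tsub_cancel_of_le hw1.le
        _ < _ := hw2
    have h2 : ∑ p ∈ T, (q p : ℝ≥0∞) ^ n = ENNReal.ofReal (∑ p ∈ T, (q p : ℝ) ^ n) := by
      rw [ENNReal.ofReal_sum_of_nonneg fun p _ => by positivity]
      refine Finset.sum_congr rfl fun p _ => ?_
      rw [ENNReal.ofReal_pow (by positivity), ENNReal.ofReal_coe_nnreal]
    rw [h2] at h1
    refine lt_of_le_of_lt ?_ ((ENNReal.ofReal_lt_ofReal_iff_of_nonneg
      (Finset.sum_nonneg fun _ _ => by positivity)).1 h1)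
    refine Finset.sum_image_le_of_nonneg fun p hp => ?_
    obtain ⟨x, _, rfl⟩ := Finset.mem_image.1 hp
    positivity

/-- An open set containing `closedBall x r` contains a slightly larger ball. -/
lemma exists_larger_closedBall {X : Type*} [MetricSpace X] [CompactSpace X] {x : X} {r : ℝ}
    {O : Set X} (hO : IsOpen O) (h : closedBall x r ⊆ O) :
    ∃ δ, 0 < δ ∧ closedBall x (r + δ) ⊆ O := by
  rcases Oᶜ.eq_empty_or_nonempty with he | hne
  · exact ⟨1, one_pos, by rw [compl_empty_iff.1 he]; exact subset_univ _⟩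
  obtain ⟨y, hy, hmin⟩ := hO.isClosed_compl.isCompact.exists_isMinOn hne
    (f := fun z => dist z x) (by fun_prop)
  have hyr : r < dist y x := by
    by_contra! hle
    exact hy (h hle)
  refine ⟨(dist y x - r) / 2, by linarith, fun z hz => ?_⟩
  by_contra hzO
  have h1 : dist y x ≤ dist z x := hmin hzO
  rw [mem_closedBall] at hz
  linarith

/-- Compactness makes the strict bound on the contents of `r`-balls uniform. -/
lemma exists_uniform {X : Type*} [MetricSpace X] [CompactSpace X] (n : ℕ) (r v : ℝ)
    (h : ∀ x : X, HC (n : ℝ) (closedBall x r) < ENNReal.ofReal v) :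
    ∃ t < v, ∀ x : X, ∃ F, BallCover (closedBall x r) F ∧ ∑ p ∈ F, p.2 ^ n ≤ t := by
  have key : ∃ t < v, ∀ x ∈ (univ : Set X), ∃ F, BallCover (closedBall x r) F ∧
      ∑ p ∈ F, p.2 ^ n ≤ t := by
    refine isCompact_univ.induction_on
      (p := fun A => ∃ t < v, ∀ x ∈ A, ∃ F, BallCover (closedBall x r) F ∧
        ∑ p ∈ F, p.2 ^ n ≤ t) ?_ ?_ ?_ ?_
    · exact ⟨v - 1, by linarith, by simp⟩
    · rintro A A' hA ⟨t, ht, h'⟩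
      exact ⟨t, ht, fun x hx => h' x (hA hx)⟩
    · rintro A A' ⟨t, ht, h1⟩ ⟨t', ht', h2⟩
      refine ⟨max t t', max_lt ht ht', ?_⟩
      rintro x (hx | hx)
      · obtain ⟨F, hF, hFt⟩ := h1 x hx
        exact ⟨F, hF, hFt.trans (le_max_left _ _)⟩
      · obtain ⟨F, hF, hFt⟩ := h2 x hx
        exact ⟨F, hF, hFt.trans (le_max_right _ _)⟩
    · intro x _
      obtain ⟨F, hF0, hFc, hFv⟩ := exists_open_cover n isClosed_closedBall.isCompact (h x)
      obtain ⟨δ, hδ, hsub⟩ := exists_larger_closedBall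
        (isOpen_biUnion fun p _ => isOpen_ball) hFc
      refine ⟨ball x δ, mem_nhdsWithin_of_mem_nhds (ball_mem_nhds x hδ), _, hFv,
        fun y hy => ⟨F, ⟨hF0, ?_⟩, le_rfl⟩⟩
      refine (closedBall_subset_closedBall' ?_).trans
        (hsub.trans (iUnion₂_mono fun p _ => ball_subset_closedBall))
      have := mem_ball.1 hy
      linarith
  obtain ⟨t, ht, h'⟩ := key
  exact ⟨t, ht, fun x => h' x (mem_univ x)⟩

/-! ### The width bound -/

/-- If `X` is a compact metric space, `n ≥ 1`, `r > 0`, and every closed ball of radius `r`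
has `n`-dimensional Hausdorff content less than `(r/(4n))^n`, then `UR_{n-1}(X) < r`:
there are `r' < r` and a finite open covering of `X` by sets contained in closed balls
of radius `r'` with multiplicity at most `n`. -/
theorem stmt0 {X : Type*} [MetricSpace X] [CompactSpace X]
    (n : ℕ) (hn : 1 ≤ n) (r : ℝ) (hr : 0 < r)
    (hball : ∀ x : X, HC (n : ℝ) (Metric.closedBall x r) <
      ENNReal.ofReal ((r / (4 * n)) ^ n)) :
    ∃ r' : ℝ, r' < r ∧ ∃ (k : ℕ) (U : Fin k → Set X),
      (∀ i, IsOpen (U i)) ∧ (∀ x : X, ∃ i, x ∈ U i) ∧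
      (∀ i, ∃ c : X, U i ⊆ Metric.closedBall c r') ∧
      (∀ x : X, {i | x ∈ U i}.encard ≤ n) := by
  have hn0 : (0 : ℝ) < n := by exact_mod_cast hn
  have hrs : 4 * n * (r / (4 * n)) = r := by field_simp
  obtain ⟨t, ht, hF⟩ := exists_uniform n r _ hball
  obtain ⟨R, hR, ι, hι, C, hCc, hCcov, hCR, hCm⟩ :=
    closed_cover n (r / (4 * n)) (by positivity) t ht (univ : Set X) isClosed_univ
      (by simpa only [univ_inter, hrs] using hF)
  rw [hrs] at hR
  obtain ⟨δ, hδ, hδr, hthick⟩ := exists_thickening C hCc ((r - R) / 2) (by linarith)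
  obtain ⟨k, ⟨e⟩⟩ := Finite.exists_equiv_fin ι
  refine ⟨R + δ, by linarith, k, fun i => thickening δ (C (e.symm i)),
    fun i => isOpen_thickening, fun x => ?_, fun i => ?_, fun y => ?_⟩
  · obtain ⟨i, hi⟩ := mem_iUnion.1 (hCcov (mem_univ x))
    exact ⟨e i, self_subset_thickening hδ _ (by simpa using hi)⟩
  · obtain ⟨c, hc⟩ := hCR (e.symm i)
    exact ⟨c, (thickening_subset_cthickening _ _).trans
      (cthickening_subset (hCc _) hδ.le hc)⟩
  · obtain ⟨x, hx⟩ := hthick y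
    refine le_trans ?_ (hCm x)
    rw [← e.symm.injective.encard_image]
    refine encard_le_encard ?_
    rintro _ ⟨i, hi, rfl⟩
    exact hx _ (thickening_subset_cthickening _ _ hi)
end

section
/- Let X be a compact metric space and n ≥ 1 an integer. Then UR_{n−1}(X) ≤ 4n·HC_n(X)^{1/n}; that is, for every t > 4n·HC_n(X)^{1/n} there exists a finite covering of X by open sets, each contained in a closed metric ball of radius t, such that no n+1 of the covering sets have a common point. -/
/-!
The proof is by induction on the dimension, in the local form `exists_openCover_of_localContent`.
Put `b = t / (4n)`. The induction statement says: if every closed ball of radius `4nb` meets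
`K ⊆ X` in a set with a finite cover by balls of radii `≤ b` and `∑ r ^ n ≤ v`, where `v < b ^ n` is
fixed, then `K` has a finite open cover of multiplicity `≤ n` by sets lying in balls of radius `4nb`.

For the step from `n` to `n + 1`, look at all ways to cover `K` by a finite family `𝒰` of pairwise
disjoint open sets lying in balls of radius `4(n+1)b` together with a finite family `F` of balls of
radii `≤ b`, and choose one for which `∑_F r ^ n` is minimal up to a small `δ`. The remainder
`Z = K \ ⋃ 𝒰` satisfies the induction hypothesis. Indeed, given `x`, cover `K ∩ B(x, 4(n+1)b)` by
balls `G` with `∑_G r ^ (n+1) ≤ v`. The discrete coarea inequality `exists_radius_sum_le` gives a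
radius `s` between `4nb + 2b` and `4nb + 4b` for which the balls of `G` meeting the sphere of radius
`s` around `x` have `∑ r ^ n ≤ v / b < b ^ n`. Cutting along this sphere (adding the open ball
`B(x, s)` to `𝒰` and keeping only the parts of the old pieces outside it) makes all balls of `F` that
meet `B(x, 4nb)` superfluous, since they have diameter `≤ 2b`. By near minimality their sum
`∑ r ^ n` is at most `v / b + δ`. The cover of `Z` of multiplicity `≤ n` together with the disjoint
family `𝒰` is the required cover of `K`.

The hypothesis on the Hausdorff content gives, after slightly enlarging the radii and using
compactness, a single finite cover of `X` with `∑ r ^ n < b ^ n`.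
-/

open Metric Set
open scoped ENNReal NNReal

/-! ### The coarea inequality for finite families of balls -/

open Classical in
/-- Discrete coarea inequality: among the radii `s ∈ [α, α + 2b]` there is one for which the
balls `(c, r) ∈ G` that may meet the sphere of radius `s` about `x` have `∑ r ^ n ≤ v / b`. Each ball
is counted for a set of radii `s` of length at most `2r`, so this follows by averaging over `s`. -/
lemma exists_radius_sum_le {X : Type*} [MetricSpace X] (n : ℕ) {b : ℝ} (hb : 0 < b)
    (G : Finset (X × ℝ)) (hG : ∀ p ∈ G, 0 ≤ p.2) {v : ℝ} (hv : ∑ p ∈ G, p.2 ^ (n + 1) ≤ v)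
    (x : X) (α : ℝ) :
    ∃ s ∈ Set.Icc α (α + 2 * b),
      ∑ p ∈ G.filter (fun p => s ∈ Set.Icc (dist p.1 x - p.2) (dist p.1 x + p.2)), p.2 ^ n
        ≤ v / b := by
  by_contra! h
  let I : X × ℝ → Set ℝ := fun p => Set.Icc (dist p.1 x - p.2) (dist p.1 x + p.2)
  let f : ℝ → ℝ := fun s => ∑ p ∈ G, (I p).indicator (fun _ => p.2 ^ n) s
  have hint : ∀ p ∈ G, MeasureTheory.Integrable ((I p).indicator (fun _ => p.2 ^ n)) := by
    intro p _
    refine (MeasureTheory.integrable_indicator_iff measurableSet_Icc).2 ?_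
    exact MeasureTheory.integrableOn_const (by simp)
  have hf : MeasureTheory.Integrable f := MeasureTheory.integrable_finsetSum _ hint
  have hf0 : ∀ s, 0 ≤ f s := fun s => Finset.sum_nonneg fun p hp =>
    Set.indicator_nonneg (fun _ _ => pow_nonneg (hG p hp) n) s
  have hvol : MeasureTheory.volume.real (Set.Icc α (α + 2 * b)) = 2 * b := by
    rw [Real.volume_real_Icc_of_le (by linarith)]; ring
  have htot : ∫ s, f s ≤ 2 * v := by
    rw [MeasureTheory.integral_finsetSum _ hint]
    calc _ = ∑ p ∈ G, 2 * p.2 ^ (n + 1) := by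
          refine Finset.sum_congr rfl fun p hp => ?_
          have := hG p hp
          rw [MeasureTheory.integral_indicator measurableSet_Icc, MeasureTheory.setIntegral_const,
            Real.volume_real_Icc_of_le (by linarith)]
          simp only [smul_eq_mul]; ring
      _ ≤ 2 * v := by rw [← Finset.mul_sum]; linarith
  have hle : ∫ s in Set.Icc α (α + 2 * b), f s ≤ ∫ s, f s :=
    MeasureTheory.setIntegral_le_integral hf (Filter.Eventually.of_forall hf0)
  obtain ⟨s, hs, hsf⟩ := MeasureTheory.exists_le_setAverage
    (μ := MeasureTheory.volume) (s := Set.Icc α (α + 2 * b)) (f := f)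
    (by simp [hb]) isCompact_Icc.measure_ne_top hf.integrableOn
  rw [MeasureTheory.setAverage_eq, hvol, smul_eq_mul] at hsf
  have h1 := h s hs
  have h2 : f s = ∑ p ∈ G.filter (fun p => s ∈ I p), p.2 ^ n := by
    simp only [f, Set.indicator_apply, Finset.sum_filter]
  rw [← h2] at h1
  have h3 : (2 * b)⁻¹ * ∫ s in Set.Icc α (α + 2 * b), f s ≤ (2 * b)⁻¹ * (2 * v) :=
    mul_le_mul_of_nonneg_left (hle.trans htot) (by positivity)
  have h4 : (2 * b)⁻¹ * (2 * v) = v / b := by field_simp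
  linarith

/-! ### Cutting a set into small disjoint open pieces -/

/-- `(F, 𝒰)` is a *cut* of `K` at scale `b` with pieces of size `R`: the set `K` is covered by the
finite family `F` of closed balls (recorded as pairs of centre and radius) of radii in `[0, b]`
together with the finite family `𝒰` of pairwise disjoint open sets, each lying in a closed ball of
radius `R`. -/
structure IsCut {X : Type*} [MetricSpace X] (K : Set X) (b R : ℝ)
    (F : Finset (X × ℝ)) (𝒰 : Finset (Set X)) : Prop where
  radius : ∀ p ∈ F, 0 ≤ p.2 ∧ p.2 ≤ b
  isOpen : ∀ A ∈ 𝒰, IsOpen A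
  size : ∀ A ∈ 𝒰, ∃ c, A ⊆ Metric.closedBall c R
  disj : ∀ A ∈ 𝒰, ∀ B ∈ 𝒰, ∀ y, y ∈ A → y ∈ B → A = B
  cover : ∀ y ∈ K, (∃ p ∈ F, dist y p.1 ≤ p.2) ∨ ∃ A ∈ 𝒰, y ∈ A

/-- A compact space has a cut with no pieces, given by finitely many balls of radius `b`. -/
lemma exists_isCut {X : Type*} [MetricSpace X] [CompactSpace X] (K : Set X) {b : ℝ} (hb : 0 < b)
    (R : ℝ) : ∃ F 𝒰, IsCut K b R F 𝒰 := by
  classical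
  obtain ⟨T, hT⟩ := isCompact_univ.elim_finite_subcover (fun x : X => Metric.ball x b)
    (fun _ => Metric.isOpen_ball) (fun y _ => Set.mem_iUnion.2 ⟨y, Metric.mem_ball_self hb⟩)
  refine ⟨T.image fun x => (x, b), ∅, ?_, by simp, by simp, by simp, fun y _ => Or.inl ?_⟩
  · simp only [Finset.mem_image]
    rintro _ ⟨x, -, rfl⟩
    exact ⟨hb.le, le_rfl⟩
  · obtain ⟨x, hx, hy⟩ := Set.mem_iUnion₂.1 (hT (Set.mem_univ y))
    exact ⟨_, Finset.mem_image_of_mem _ hx, (Metric.mem_ball.1 hy).le⟩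

open Classical in
/-- Cutting along the sphere of radius `s` about `x`. The balls of `F` meeting `B(x, ρ)` are
discarded, and those members of a cover `G` of `K ∩ B(x, R)` that may meet the sphere are added. -/
lemma IsCut.cutSphere {X : Type*} [MetricSpace X] {K : Set X} {b R ρ s : ℝ}
    {F G : Finset (X × ℝ)} {𝒰 : Finset (Set X)} (h : IsCut K b R F 𝒰) (x : X)
    (hs : ρ + 2 * b ≤ s) (hsR : s ≤ R) (hGr : ∀ p ∈ G, 0 ≤ p.2 ∧ p.2 ≤ b)
    (hG : ∀ y ∈ K, dist y x ≤ R → ∃ p ∈ G, dist y p.1 ≤ p.2) :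
    IsCut K b R
      (F.filter (fun p => ¬ dist p.1 x ≤ ρ + p.2) ∪
        G.filter (fun p => s ∈ Set.Icc (dist p.1 x - p.2) (dist p.1 x + p.2)))
      (insert (Metric.ball x s) (𝒰.image (fun A => A ∩ {y | s < dist y x}))) where
  radius := by
    intro p hp
    rw [Finset.mem_union, Finset.mem_filter, Finset.mem_filter] at hp
    rcases hp with hp | hp
    exacts [h.radius p hp.1, hGr p hp.1]
  isOpen := by
    simp only [Finset.mem_insert, Finset.mem_image]
    rintro A (rfl | ⟨A, hA, rfl⟩)
    · exact Metric.isOpen_ball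
    · exact (h.isOpen A hA).inter (isOpen_lt continuous_const (by fun_prop))
  size := by
    simp only [Finset.mem_insert, Finset.mem_image]
    rintro A (rfl | ⟨A, hA, rfl⟩)
    · exact ⟨x, Metric.ball_subset_closedBall.trans (Metric.closedBall_subset_closedBall hsR)⟩
    · obtain ⟨c, hc⟩ := h.size A hA
      exact ⟨c, Set.inter_subset_left.trans hc⟩
  disj := by
    simp only [Finset.mem_insert, Finset.mem_image]
    rintro A (rfl | ⟨A, hA, rfl⟩) B (rfl | ⟨B, hB, rfl⟩) y hyA hyB
    · rfl
    · exact absurd (Metric.mem_ball.1 hyA) (not_lt.2 (le_of_lt hyB.2))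
    · exact absurd (Metric.mem_ball.1 hyB) (not_lt.2 (le_of_lt hyA.2))
    · rw [h.disj A hA B hB y hyA.1 hyB.1]
  cover := by
    intro y hy
    rcases lt_trichotomy (dist y x) s with hlt | heq | hgt
    · exact Or.inr ⟨_, Finset.mem_insert_self _ _, hlt⟩
    · obtain ⟨p, hp, hyp⟩ := hG y hy (heq.le.trans hsR)
      refine Or.inl ⟨p, Finset.mem_union_right _ (Finset.mem_filter.2 ⟨hp, ?_, ?_⟩), hyp⟩
      · linarith [dist_triangle_left p.1 x y]
      · linarith [dist_triangle y p.1 x]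
    · rcases h.cover y hy with ⟨p, hp, hyp⟩ | ⟨A, hA, hyA⟩
      · refine Or.inl ⟨p, Finset.mem_union_left _ (Finset.mem_filter.2 ⟨hp, fun hpx => ?_⟩), hyp⟩
        linarith [dist_triangle y p.1 x, (h.radius p hp).2]
      · exact Or.inr ⟨_, Finset.mem_insert_of_mem (Finset.mem_image_of_mem _ hA), hyA, hgt⟩

/-- There is a cut minimizing `∑_F r ^ n` up to an error `δ`. -/
lemma exists_nearlyMinimal_isCut {X : Type*} [MetricSpace X] [CompactSpace X] (K : Set X) (n : ℕ)
    {b δ : ℝ} (hb : 0 < b) (hδ : 0 < δ) (R : ℝ) :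
    ∃ F 𝒰, IsCut K b R F 𝒰 ∧
      ∀ F' 𝒰', IsCut K b R F' 𝒰' → ∑ p ∈ F, p.2 ^ n ≤ ∑ p ∈ F', p.2 ^ n + δ := by
  let S : Set ℝ := {w | ∃ F 𝒰, IsCut K b R F 𝒰 ∧ ∑ p ∈ F, p.2 ^ n = w}
  have hne : S.Nonempty := by
    obtain ⟨F, 𝒰, h⟩ := exists_isCut K hb R
    exact ⟨_, F, 𝒰, h, rfl⟩
  have hbdd : BddBelow S := by
    refine ⟨0, ?_⟩
    rintro _ ⟨F, 𝒰, h, rfl⟩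
    exact Finset.sum_nonneg fun p hp => pow_nonneg (h.radius p hp).1 n
  obtain ⟨_, ⟨F, 𝒰, h, rfl⟩, hlt⟩ := exists_lt_of_csInf_lt hne (lt_add_of_pos_right (sInf S) hδ)
  refine ⟨F, 𝒰, h, fun F' 𝒰' h' => ?_⟩
  have := csInf_le hbdd ⟨F', 𝒰', h', rfl⟩
  linarith

/-! ### The local theorem -/

open Classical in
/-- The local form of the theorem: if every ball of radius `4nb` meets `K` in a set of
`n`-dimensional content at most `v < b ^ n`, witnessed by balls of radii `≤ b`, then `K` has an open
cover of multiplicity `≤ n` by sets lying in balls of radius `4nb`. In dimension `0` the content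
counts balls, so the hypothesis forces `K = ∅`. -/
lemma exists_openCover_of_localContent {X : Type*} [MetricSpace X] [CompactSpace X]
    {b : ℝ} (hb : 0 < b) (n : ℕ) :
    ∀ (K : Set X) (v : ℝ), v < b ^ n →
      (∀ x, ∃ G : Finset (X × ℝ), (∀ p ∈ G, 0 ≤ p.2 ∧ p.2 ≤ b) ∧
        (∀ y ∈ K, dist y x ≤ 4 * n * b → ∃ p ∈ G, dist y p.1 ≤ p.2) ∧
        ∑ p ∈ G, p.2 ^ n ≤ v) →
      ∃ 𝒱 : Finset (Set X), (∀ A ∈ 𝒱, IsOpen A) ∧ (∀ y ∈ K, ∃ A ∈ 𝒱, y ∈ A) ∧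
        (∀ A ∈ 𝒱, ∃ c, A ⊆ Metric.closedBall c (4 * n * b)) ∧
        ∀ y, (𝒱.filter (fun A => y ∈ A)).card ≤ n := by
  induction n with
  | zero =>
    intro K v hv h
    refine ⟨∅, by simp, fun y hy => ?_, by simp, by simp⟩
    obtain ⟨G, -, hG, hsum⟩ := h y
    obtain ⟨p, hp, -⟩ := hG y hy (by simp)
    have : (1 : ℝ) ≤ G.card := by exact_mod_cast Finset.card_pos.2 ⟨p, hp⟩
    simp at hsum hv
    linarith
  | succ n ih =>
    intro K v hv h
    have hvb : v / b < b ^ n := by rw [div_lt_iff₀ hb, ← pow_succ]; exact hv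
    obtain ⟨w, hvw, hwb⟩ := exists_between hvb
    obtain ⟨F, 𝒰, hcut, hmin⟩ := exists_nearlyMinimal_isCut K n hb (sub_pos.2 hvw)
      (4 * (n + 1 : ℕ) * b)
    obtain ⟨𝒱, h𝒱o, h𝒱c, h𝒱s, h𝒱m⟩ := ih {y ∈ K | ∀ A ∈ 𝒰, y ∉ A} w hwb (by
      intro x
      obtain ⟨G, hGr, hG, hsum⟩ := h x
      obtain ⟨s, ⟨hs₁, hs₂⟩, hs⟩ := exists_radius_sum_le n hb G (fun p hp => (hGr p hp).1) hsum x
        (4 * n * b + 2 * b)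
      have hnew := hmin _ _ (hcut.cutSphere x hs₁ (by push_cast; linarith) hGr hG)
      refine ⟨F.filter (fun p => dist p.1 x ≤ 4 * n * b + p.2),
        fun p hp => hcut.radius p (Finset.mem_filter.1 hp).1, fun y hy hyx => ?_, ?_⟩
      · rcases hcut.cover y hy.1 with ⟨p, hp, hyp⟩ | ⟨A, hA, hyA⟩
        · refine ⟨p, Finset.mem_filter.2 ⟨hp, ?_⟩, hyp⟩
          linarith [dist_triangle_left p.1 x y]
        · exact absurd hyA (hy.2 A hA)
      · have hsplit := Finset.sum_filter_add_sum_filter_not F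
          (fun p => dist p.1 x ≤ 4 * n * b + p.2) (fun p => p.2 ^ n)
        have hunion : ∀ A B : Finset (X × ℝ), (∀ p ∈ A, 0 ≤ p.2) →
            ∑ p ∈ A ∪ B, p.2 ^ n ≤ ∑ p ∈ A, p.2 ^ n + ∑ p ∈ B, p.2 ^ n := by
          intro A B hA
          rw [← Finset.sum_union_inter]
          exact le_add_of_nonneg_right (Finset.sum_nonneg fun p hp =>
            pow_nonneg (hA p (Finset.mem_inter.1 hp).1) n)
        have hle := hnew.trans (add_le_add_left (hunion _ _ fun p hp =>
          (hcut.radius p (Finset.mem_filter.1 hp).1).1) _)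
        linarith)
    refine ⟨𝒱 ∪ 𝒰, ?_, ?_, ?_, ?_⟩
    · intro A hA
      rcases Finset.mem_union.1 hA with hA | hA
      exacts [h𝒱o A hA, hcut.isOpen A hA]
    · intro y hy
      by_cases hyU : ∃ A ∈ 𝒰, y ∈ A
      · obtain ⟨A, hA, hyA⟩ := hyU
        exact ⟨A, Finset.mem_union_right _ hA, hyA⟩
      · push Not at hyU
        obtain ⟨A, hA, hyA⟩ := h𝒱c y ⟨hy, hyU⟩
        exact ⟨A, Finset.mem_union_left _ hA, hyA⟩
    · intro A hA
      rcases Finset.mem_union.1 hA with hA | hA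
      · obtain ⟨c, hc⟩ := h𝒱s A hA
        refine ⟨c, hc.trans (Metric.closedBall_subset_closedBall ?_)⟩
        push_cast
        linarith
      · exact hcut.size A hA
    · intro y
      rw [Finset.filter_union]
      refine (Finset.card_union_le _ _).trans (add_le_add (h𝒱m y) ?_)
      refine Finset.card_le_one.2 fun A hA B hB => ?_
      rw [Finset.mem_filter] at hA hB
      exact hcut.disj A hA.1 B hB.1 y hA.2 hB.2

/-! ### From Hausdorff content to finite covers -/

/-- A bound on the Hausdorff content of a compact space is witnessed by a finite cover. -/
lemma exists_finite_cover_of_HC_lt {X : Type*} [MetricSpace X] [CompactSpace X]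
    {n : ℕ} (hn : n ≠ 0) {b : ℝ} (hb : 0 < b)
    (h : HC (n : ℝ) (Set.univ : Set X) < ENNReal.ofReal (b ^ n)) :
    ∃ G : Finset (X × ℝ), (∀ p ∈ G, 0 ≤ p.2) ∧ (∀ y, ∃ p ∈ G, dist y p.1 ≤ p.2) ∧
      ∑ p ∈ G, p.2 ^ n < b ^ n := by
  classical
  simp only [HC, iInf_lt_iff] at h
  obtain ⟨S, hSc, hcov, hlt⟩ := h
  simp only [ENNReal.rpow_natCast] at hlt
  have := hSc.to_subtype
  obtain ⟨ε, hε, hεsum⟩ := ENNReal.exists_pos_sum_of_countable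
    (ι := S) (tsub_pos_of_lt hlt).ne'
  have htot : ∑' p : S, ((p.1.2 : ℝ≥0∞) ^ n + ε p) < ENNReal.ofReal (b ^ n) := by
    rw [ENNReal.tsum_add, add_comm]
    exact lt_tsub_iff_right.1 hεsum
  -- the enlarged radii, with `ρ p ^ n = r ^ n + ε p`
  let ρ : S → ℝ≥0 := fun p => (p.1.2 ^ n + ε p) ^ ((n : ℝ)⁻¹)
  have hρn : ∀ p, ρ p ^ n = p.1.2 ^ n + ε p := fun p => NNReal.rpow_inv_natCast_pow _ hn
  have hρ : ∀ p : S, p.1.2 < ρ p := fun p =>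
    lt_of_pow_lt_pow_left₀ n (zero_le) (by rw [hρn]; exact lt_add_of_pos_right _ (hε p))
  obtain ⟨T, hT⟩ := isCompact_univ.elim_finite_subcover
    (fun p : S => Metric.ball p.1.1 (ρ p : ℝ)) (fun _ => Metric.isOpen_ball) (by
      intro y _
      obtain ⟨p, hp, hy⟩ := Set.mem_iUnion₂.1 (hcov (Set.mem_univ y))
      exact Set.mem_iUnion.2 ⟨⟨p, hp⟩, Metric.mem_ball.2
        (lt_of_le_of_lt hy (NNReal.coe_lt_coe.2 (hρ ⟨p, hp⟩)))⟩)
  refine ⟨T.image fun p => (p.1.1, (ρ p : ℝ)), ?_, ?_, ?_⟩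
  · simp only [Finset.mem_image]
    rintro _ ⟨p, -, rfl⟩
    exact (ρ p).2
  · intro y
    obtain ⟨p, hp, hy⟩ := Set.mem_iUnion₂.1 (hT (Set.mem_univ y))
    exact ⟨_, Finset.mem_image_of_mem _ hp, (Metric.mem_ball.1 hy).le⟩
  · have h1 : ∑ p ∈ T.image (fun p : S => (p.1.1, (ρ p : ℝ))), p.2 ^ n
        ≤ ∑ p ∈ T, (ρ p : ℝ) ^ n := by
      refine Finset.sum_image_le_of_nonneg fun q hq => ?_
      obtain ⟨p, -, rfl⟩ := Finset.mem_image.1 hq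
      exact pow_nonneg (ρ p).2 n
    refine h1.trans_lt ?_
    have h2 : ∑ p ∈ T, ((p.1.2 : ℝ≥0∞) ^ n + ε p) < ENNReal.ofReal (b ^ n) :=
      (ENNReal.sum_le_tsum T).trans_lt htot
    have h3 : ∑ p ∈ T, ((p.1.2 : ℝ≥0∞) ^ n + ε p)
        = ENNReal.ofReal (∑ p ∈ T, (ρ p : ℝ) ^ n) := by
      rw [ENNReal.ofReal_sum_of_nonneg (fun p _ => by positivity)]
      refine Finset.sum_congr rfl fun p _ => ?_
      rw [← NNReal.coe_pow, ENNReal.ofReal_coe_nnreal, hρn]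
      push_cast
      rfl
    rw [h3] at h2
    exact (ENNReal.ofReal_lt_ofReal_iff (pow_pos hb n)).1 h2

/-- For a compact metric space `X` and integer `n ≥ 1`, `UR_{n-1}(X) ≤ 4n·HC_n(X)^{1/n}`:
for every `t` with `4n·HC_n(X)^{1/n} < t` there is a finite open covering of `X` by sets
contained in closed balls of radius `t` with multiplicity at most `n`. -/
theorem stmt1 {X : Type*} [MetricSpace X] [CompactSpace X]
    (n : ℕ) (hn : 1 ≤ n) (t : ℝ)
    (ht : (4 * n : ℝ≥0∞) * HC (n : ℝ) (Set.univ : Set X) ^ ((n : ℝ)⁻¹) < ENNReal.ofReal t) :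
    ∃ (k : ℕ) (U : Fin k → Set X),
      (∀ i, IsOpen (U i)) ∧ (∀ x : X, ∃ i, x ∈ U i) ∧
      (∀ i, ∃ c : X, U i ⊆ Metric.closedBall c t) ∧
      (∀ x : X, {i | x ∈ U i}.encard ≤ n) := by
  classical
  have ht0 : 0 < t := ENNReal.ofReal_pos.1 (lt_of_le_of_lt zero_le ht)
  have hn0 : n ≠ 0 := by omega
  have hnpos : (0 : ℝ) < n := by exact_mod_cast hn
  obtain ⟨b, hbt⟩ : ∃ b : ℝ, 4 * n * b = t := ⟨t / (4 * n), by field_simp⟩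
  have hb : 0 < b := by
    rw [← hbt] at ht0
    exact pos_of_mul_pos_right ht0 (by positivity)
  have hHC : HC (n : ℝ) (Set.univ : Set X) < ENNReal.ofReal (b ^ n) := by
    rw [← hbt, ENNReal.ofReal_mul (by positivity)] at ht
    have h4 : ENNReal.ofReal (4 * n) = 4 * n := by
      rw [ENNReal.ofReal_mul (by norm_num)]; simp
    rw [h4] at ht
    have h5 := lt_of_mul_lt_mul_left' ht
    rw [ENNReal.rpow_inv_lt_iff hnpos, ENNReal.rpow_natCast, ← ENNReal.ofReal_pow hb.le] at h5
    exact h5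
  obtain ⟨G, hG0, hGc, hGs⟩ := exists_finite_cover_of_HC_lt hn0 hb hHC
  have hGb : ∀ p ∈ G, p.2 ≤ b := fun p hp => le_of_lt <|
    lt_of_pow_lt_pow_left₀ n hb.le <|
      (Finset.single_le_sum (f := fun p : X × ℝ => p.2 ^ n)
        (fun q hq => pow_nonneg (hG0 q hq) n) hp).trans_lt hGs
  obtain ⟨𝒱, ho, hc, hs, hm⟩ := exists_openCover_of_localContent hb n (Set.univ : Set X) _ hGs
    fun x => ⟨G, fun p hp => ⟨hG0 p hp, hGb p hp⟩, fun y _ _ => hGc y, le_rfl⟩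
  rw [hbt] at hs
  refine ⟨𝒱.card, fun i => (𝒱.equivFin.symm i : Set X), fun i => ho _ (𝒱.equivFin.symm i).2,
    fun x => ?_, fun i => hs _ (𝒱.equivFin.symm i).2, fun x => ?_⟩
  · obtain ⟨A, hA, hxA⟩ := hc x (Set.mem_univ x)
    exact ⟨𝒱.equivFin ⟨A, hA⟩, by simpa using hxA⟩
  · have hinj : Function.Injective fun i => (𝒱.equivFin.symm i : Set X) :=
      Subtype.val_injective.comp 𝒱.equivFin.symm.injective
    rw [← hinj.encard_image]
    have hsub : (fun i => (𝒱.equivFin.symm i : Set X)) '' {i | x ∈ (𝒱.equivFin.symm i : Set X)}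
        ⊆ (𝒱.filter (fun A => x ∈ A) : Finset (Set X)) := by
      rintro _ ⟨i, hi, rfl⟩
      exact Finset.mem_coe.2 (Finset.mem_filter.2 ⟨(𝒱.equivFin.symm i).2, hi⟩)
    refine (Set.encard_le_encard hsub).trans ?_
    rw [Set.encard_coe_eq_coe_finsetCard]
    exact_mod_cast hm x
end

section
/- Let X be a boundedly compact metric space (all closed metric balls of X are compact), n ≥ 1 an integer, r > 0, and μ > 0. Assume that every closed metric ball B of radius r in X satisfies HC_n(B) ≤ (r/(8n))^n − μ. Then UR_{n−1}(X) < r, i.e. there exist r' < r and a covering of X by open sets, each contained in a closed metric ball of radius r', such that no n+1 of the covering sets have a common point. -/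
/-!
The proof replaces `X` by a well-chosen locally finite cover by small balls and then splits the
balls of this cover into `n` colour classes. Put `h = r / (8 n)` and fix a locally finite `h`-net
`N`.

*The cover.* Each ball `B(x, r)`, `x ∈ N`, has a finite cover `G x` by open balls with
`∑ R ^ n < h ^ n`. Among all subfamilies of `⋃ x, G x` covering `X`, take a locally minimal one
(`local_min`). Exchanging its members contained in `B(x, r)` for `G x` shows that these members
have total cost `∑ R ^ n < h ^ n`, for every `x ∈ N` (`exists_good_cover`).

*The colouring.* Suppose that a locally finite family of balls has `∑ R ^ (k+1) < h ^ (k+1)` over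
the members inside `B(x, a + 4 h)`, for all `x ∈ N`. Call a subfamily `T` separating if the balls
outside `T` can be labelled by points of `N` such that intersecting balls have equal labels and a
ball labelled `x` lies in `B(x, r')`. Take `T` locally minimal for `∑ R ^ k`. By a discrete coarea
inequality (`coarea`), some sphere of radius `s ∈ [a, a + 2 h]` about `x` crosses balls of total
cost `< h ^ k`. Exchanging the members of `T` inside `B(x, s)` for the balls crossed by the sphere
keeps `T` separating, so minimality gives `∑ R ^ k < h ^ k` over the members of `T` inside `B(x, a)`
(`separating_step`). After `n` steps the remaining family satisfies `∑ R ^ 0 < 1` and hence is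
empty (`coloring`). The `k`-th colour class consists of the balls labelled at the `k`-th step. In
each class, the unions of balls with a common label are pairwise disjoint, so all these unions
together have multiplicity at most `n`.

Labels take the place of connected components: they make being separating a condition on
pairs of balls, hence closed in the product topology, which is what the compactness argument
in `local_min` needs. This local minimality is also what makes noncompact `X` accessible.
-/

open Metric Set
open scoped ENNReal NNReal

/-! ### Locally minimal configurations and averaging -/

/-- Existence of locally minimal configurations. A configuration `f` marks each index `i` either
by a label or by `none`, and costs `w i` for every `i` with `f i = none`. A move `m` turns an
admissible configuration into another one whose unlabelled indices lie in `J m` or were already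
unlabelled outside `I m`. There is an admissible configuration whose cost on each `I m` is at most
the cost of the replacement `J m`. For finitely many moves one minimizes the cost over the finite
region they touch; compactness of a product of finite sets handles all moves at once, even if
the total cost is infinite. -/
theorem local_min {F L M : Type*} (C : F → Set (Option L)) (hC : ∀ i, (C i).Finite)
    (A : Set (F → Option L)) (hA : letI : TopologicalSpace (Option L) := ⊥; IsClosed A)
    (hAC : ∀ f ∈ A, ∀ i, f i ∈ C i) (hne : A.Nonempty)
    (w : F → ℝ) (hw : ∀ i, 0 ≤ w i) (I J : M → Finset F)
    (move : ∀ m, ∀ f ∈ A, ∃ f' ∈ A,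
      (∀ i, i ∉ J m → f' i = none → i ∉ I m ∧ f i = none)) :
    ∃ f ∈ A, ∀ m, ∀ s : Finset F, (∀ i ∈ s, i ∈ I m ∧ f i = none) →
      ∑ i ∈ s, w i ≤ ∑ i ∈ J m, w i := by
  classical
  let _ : TopologicalSpace (Option L) := ⊥
  have : DiscreteTopology (Option L) := ⟨rfl⟩
  have hAcomp : IsCompact A := by
    refine (isCompact_univ_pi fun i => (hC i).isCompact).of_isClosed_subset hA ?_
    intro f hf i _
    exact hAC f hf i
  have hcont : ∀ (D : Finset F),
      Continuous fun f : F → Option L => ∑ i ∈ D, if f i = none then w i else 0 := by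
    intro D
    refine continuous_finsetSum _ fun i _ => ?_
    exact (continuous_of_discreteTopology
      (f := fun o : Option L => if o = none then w i else 0)).comp (continuous_apply i)
  have key := hAcomp.inter_iInter_nonempty
    (fun m => {f : F → Option L |
      (∑ i ∈ I m, if f i = none then w i else 0) ≤ ∑ i ∈ J m, w i})
    (fun m => isClosed_le (hcont _) continuous_const) ?_
  · obtain ⟨f, hfA, hf⟩ := key
    refine ⟨f, hfA, fun m s hs => ?_⟩
    have := mem_iInter.1 hf m
    simp only [mem_ofPred_eq] at this
    refine le_trans ?_ this
    rw [← Finset.sum_filter]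
    refine Finset.sum_le_sum_of_subset_of_nonneg ?_ fun i _ _ => hw i
    intro i hi
    exact Finset.mem_filter.2 (hs i hi)
  · intro u
    set D : Finset F := u.biUnion fun m => I m ∪ J m with hD
    obtain ⟨f, hfA, hf⟩ := hAcomp.exists_isMinOn hne (hcont D).continuousOn
    refine ⟨f, hfA, mem_iInter₂.2 fun m hm => ?_⟩
    obtain ⟨f', hf'A, hf'⟩ := move m f hfA
    have h1 : (∑ i ∈ D, if f i = none then w i else 0) ≤
        ∑ i ∈ D, if f' i = none then w i else 0 := hf hf'A
    have hIJ : I m ∪ J m ⊆ D := Finset.subset_biUnion_of_mem (fun m => I m ∪ J m) hm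
    have hI : (∑ i ∈ I m, if f i = none then w i else 0) =
        ∑ i ∈ D, if i ∈ I m then (if f i = none then w i else 0) else 0 := by
      rw [Finset.sum_ite_mem, Finset.inter_eq_right.2 (Finset.subset_union_left.trans hIJ)]
    have hJ : (∑ i ∈ J m, w i) = ∑ i ∈ D, if i ∈ J m then w i else 0 := by
      rw [Finset.sum_ite_mem, Finset.inter_eq_right.2 (Finset.subset_union_right.trans hIJ)]
    have h2 : (∑ i ∈ D, if f' i = none then w i else 0) +
        (∑ i ∈ D, if i ∈ I m then (if f i = none then w i else 0) else 0) ≤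
        (∑ i ∈ D, if f i = none then w i else 0) + ∑ i ∈ D, if i ∈ J m then w i else 0 := by
      rw [← Finset.sum_add_distrib, ← Finset.sum_add_distrib]
      refine Finset.sum_le_sum fun i _ => ?_
      have := hf' i
      have := hw i
      split_ifs <;> first | linarith | (exfalso; tauto)
    simp only [mem_ofPred_eq]
    rw [hI, hJ]
    linarith

/-- A discrete coarea inequality: if the balls indexed by `J` have centers at distance `d i` from
a base point and radii `R i`, then for some `s ∈ [a, a + 2h]` the sphere of radius `s` crosses balls
of total `k`-dimensional cost less than `h ^ k`. Each ball is crossed for a set of radii of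
measure `2 * R i`, so averaging over `s` gives the bound. -/
theorem coarea {F : Type*} (J : Finset F) (d R : F → ℝ) (hR : ∀ i, 0 < R i) (k : ℕ)
    (a h : ℝ) (hh : 0 < h) (hJ : ∑ i ∈ J, R i ^ (k + 1) < h ^ (k + 1)) :
    ∃ s, a ≤ s ∧ s ≤ a + 2 * h ∧
      ∑ i ∈ J with d i - R i < s ∧ s < d i + R i, R i ^ k < h ^ k := by
  classical
  by_contra! hcon
  have h1 : ∫⁻ _ in Icc a (a + 2 * h), ENNReal.ofReal (h ^ k) ≤
      ∫⁻ s in Icc a (a + 2 * h), ∑ i ∈ J,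
        (Ioo (d i - R i) (d i + R i)).indicator (fun _ => ENNReal.ofReal (R i ^ k)) s := by
    refine MeasureTheory.setLIntegral_mono' measurableSet_Icc fun s hs => ?_
    refine (ENNReal.ofReal_le_ofReal (hcon s hs.1 hs.2)).trans ?_
    rw [ENNReal.ofReal_sum_of_nonneg fun i _ => pow_nonneg (hR i).le k, Finset.sum_filter]
    refine Finset.sum_le_sum fun i _ => ?_
    simp only [indicator, mem_Ioo]
    exact le_rfl
  have h2 := h1.trans (MeasureTheory.setLIntegral_le_lintegral _ _)
  rw [MeasureTheory.lintegral_finsetSum' _ (fun i _ =>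
    (measurable_const.indicator measurableSet_Ioo).aemeasurable)] at h2
  simp only [MeasureTheory.lintegral_indicator_const measurableSet_Ioo, Real.volume_Ioo,
    MeasureTheory.setLIntegral_const, Real.volume_Icc] at h2
  have h3 : ∀ i, ENNReal.ofReal (R i ^ k) * ENNReal.ofReal (d i + R i - (d i - R i)) =
      ENNReal.ofReal (2 * R i ^ (k + 1)) := by
    intro i
    rw [← ENNReal.ofReal_mul (pow_nonneg (hR i).le k)]
    congr 1; ring
  simp only [h3] at h2
  rw [← ENNReal.ofReal_sum_of_nonneg (fun i _ => by have := hR i; positivity),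
    ← ENNReal.ofReal_mul (by positivity),
    ENNReal.ofReal_le_ofReal_iff (Finset.sum_nonneg fun i _ => by have := hR i; positivity),
    ← Finset.mul_sum] at h2
  have : h ^ k * (a + 2 * h - a) = 2 * h ^ (k + 1) := by ring
  linarith

/-! ### Nets and finite covers -/

theorem exists_net {X : Type*} [MetricSpace X]
    (hbc : ∀ (x : X) (t : ℝ), IsCompact (Metric.closedBall x t)) (h : ℝ) (hh : 0 < h) :
    ∃ N : Set X, N.Countable ∧ (∀ y t, (N ∩ closedBall y t).Finite) ∧
      ∀ y, ∃ x ∈ N, dist y x ≤ h := by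
  rcases isEmpty_or_nonempty X with hX | ⟨⟨x₀⟩⟩
  · exact ⟨∅, countable_empty, by simp, fun y => (hX.false y).elim⟩
  -- Finite nets of the compact shells `k ≤ dist y x₀ ≤ k + 1` are put together.
  have hK : ∀ k : ℕ, ∃ t ⊆ closedBall x₀ (k + 1) \ ball x₀ k, t.Finite ∧
      closedBall x₀ (k + 1) \ ball x₀ k ⊆ ⋃ x ∈ t, ball x h := fun k =>
    ((hbc x₀ (k + 1)).diff isOpen_ball).finite_cover_balls hh
  choose t hts htf htc using hK
  refine ⟨⋃ k, t k, countable_iUnion fun k => (htf k).countable, fun y T => ?_, fun y => ?_⟩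
  · obtain ⟨m, hm⟩ := exists_nat_gt (T + dist y x₀)
    refine Set.Finite.subset (Set.Finite.biUnion (Finset.range m).finite_toSet
      fun k _ => htf k) ?_
    rintro z ⟨hz, hzy⟩
    obtain ⟨k, hk⟩ := mem_iUnion.1 hz
    have h1 := (hts k hk).2
    rw [mem_ball, not_lt] at h1
    rw [mem_closedBall] at hzy
    have h2 := dist_triangle z y x₀
    have h3 : (k : ℝ) < m := by linarith
    exact mem_biUnion (by simpa using h3) hk
  · have hy : y ∈ closedBall x₀ ((⌊dist y x₀⌋₊ : ℝ) + 1) \ ball x₀ (⌊dist y x₀⌋₊ : ℝ) := by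
      constructor
      · exact mem_closedBall.2 (Nat.lt_floor_add_one _).le
      · rw [mem_ball, not_lt]
        exact Nat.floor_le dist_nonneg
    obtain ⟨x, hx, hyx⟩ := mem_iUnion₂.1 (htc _ hy)
    exact ⟨x, mem_iUnion.2 ⟨_, hx⟩, (mem_ball.1 hyx).le⟩

/-- For compact sets the Hausdorff content may be computed with finitely many open balls of
positive radius, all of which meet the set. -/
theorem exists_finite_cover {X : Type*} [MetricSpace X] (K : Set X) (hK : IsCompact K)
    (n : ℕ) (h : ℝ) (hKh : HC (n : ℝ) K < ENNReal.ofReal (h ^ n)) :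
    ∃ G : Finset (X × ℝ), (∀ p ∈ G, 0 < p.2) ∧ (∀ p ∈ G, (ball p.1 p.2 ∩ K).Nonempty) ∧
      (∀ y ∈ K, ∃ p ∈ G, y ∈ ball p.1 p.2) ∧ ∑ p ∈ G, p.2 ^ n < h ^ n := by
  classical
  simp only [HC, iInf_lt_iff] at hKh
  obtain ⟨S, hS, hcov, hsum⟩ := hKh
  have := hS.to_subtype
  obtain ⟨ε, hε, hεsum⟩ := ENNReal.exists_pos_sum_of_countable'
    (tsub_pos_of_lt hsum).ne' S
  have hR : ∀ p : S, ∃ R : ℝ≥0, (p : X × ℝ≥0).2 < R ∧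
      (R : ℝ≥0∞) ^ n < ((p : X × ℝ≥0).2 : ℝ≥0∞) ^ n + ε p := by
    intro p
    have h1 : Filter.Tendsto (fun R : ℝ≥0 => (R : ℝ≥0∞) ^ n)
        (nhdsWithin (p : X × ℝ≥0).2 (Ioi (p : X × ℝ≥0).2))
        (nhds (((p : X × ℝ≥0).2 : ℝ≥0∞) ^ n)) := by
      refine Filter.Tendsto.mono_left ?_ nhdsWithin_le_nhds
      exact ((ENNReal.continuous_pow n).comp ENNReal.continuous_coe).tendsto _
    have h2 := h1.eventually_lt_const (ENNReal.lt_add_right (by simp) (hε p).ne')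
    exact (h2.and self_mem_nhdsWithin).exists.imp fun R hR => ⟨hR.2, hR.1⟩
  choose R hpR hRε using hR
  have hcov' : K ⊆ ⋃ p : S, ball (p : X × ℝ≥0).1 (R p) := by
    intro y hy
    obtain ⟨p, hp, hyp⟩ := mem_iUnion₂.1 (hcov hy)
    refine mem_iUnion.2 ⟨⟨p, hp⟩, ?_⟩
    exact mem_ball.2 ((mem_closedBall.1 hyp).trans_lt (NNReal.coe_lt_coe.2 (hpR ⟨p, hp⟩)))
  obtain ⟨t, ht⟩ := hK.elim_finite_subcover _ (fun p => isOpen_ball) hcov'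
  have hRsum : ∑ p ∈ t, (R p : ℝ) ^ n < h ^ n := by
    have h1 : ∑ p ∈ t, (R p : ℝ≥0∞) ^ n < ENNReal.ofReal (h ^ n) := by
      calc ∑ p ∈ t, (R p : ℝ≥0∞) ^ n
          ≤ ∑' p : S, (R p : ℝ≥0∞) ^ n := ENNReal.sum_le_tsum t
        _ ≤ ∑' p : S, (((p : X × ℝ≥0).2 : ℝ≥0∞) ^ n + ε p) :=
            ENNReal.tsum_le_tsum fun p => (hRε p).le
        _ = ∑' p : S, ((p : X × ℝ≥0).2 : ℝ≥0∞) ^ n + ∑' p : S, ε p := ENNReal.tsum_add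
        _ < ENNReal.ofReal (h ^ n) := by
            simp only [ENNReal.rpow_natCast] at hsum hεsum
            rw [add_comm]
            exact lt_tsub_iff_right.1 hεsum
    have h2 : ∑ p ∈ t, (R p : ℝ≥0∞) ^ n = ENNReal.ofReal (∑ p ∈ t, (R p : ℝ) ^ n) := by
      rw [ENNReal.ofReal_sum_of_nonneg fun p _ => by positivity]
      refine Finset.sum_congr rfl fun p _ => ?_
      rw [ENNReal.ofReal_pow (R p).coe_nonneg, ENNReal.ofReal_coe_nnreal]
    rw [h2] at h1
    exact lt_of_not_ge fun hle => h1.not_ge (ENNReal.ofReal_le_ofReal hle)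
  refine ⟨{p ∈ t.image (fun p : S => ((p : X × ℝ≥0).1, (R p : ℝ))) |
    (ball p.1 p.2 ∩ K).Nonempty}, ?_, ?_, ?_, ?_⟩
  · intro q hq
    obtain ⟨p, _, rfl⟩ := Finset.mem_image.1 (Finset.mem_filter.1 hq).1
    exact (NNReal.coe_nonneg _).trans_lt (NNReal.coe_lt_coe.2 (hpR p))
  · intro q hq
    exact (Finset.mem_filter.1 hq).2
  · intro y hy
    obtain ⟨p, hp, hyp⟩ := mem_iUnion₂.1 (ht hy)
    exact ⟨_, Finset.mem_filter.2 ⟨Finset.mem_image_of_mem _ hp, ⟨y, hyp, hy⟩⟩, hyp⟩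
  · refine lt_of_le_of_lt ?_ hRsum
    refine (Finset.sum_le_sum_of_subset_of_nonneg (Finset.filter_subset _ _) ?_).trans ?_
    · intro q hq _
      obtain ⟨p, _, rfl⟩ := Finset.mem_image.1 hq
      positivity
    · refine Finset.sum_image_le_of_nonneg (f := fun q : X × ℝ => q.2 ^ n) ?_
      intro q hq
      obtain ⟨p, _, rfl⟩ := Finset.mem_image.1 hq
      positivity

universe u v

/-- A locally finite cover of `X` by small open balls that is efficient in all balls `B(x, r)`,
`x ∈ N`, simultaneously: a locally minimal subcover of the union of efficient finite covers of
these balls. -/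
theorem exists_good_cover {X : Type u} [MetricSpace X]
    (hbc : ∀ (x : X) (t : ℝ), IsCompact (Metric.closedBall x t))
    (n : ℕ) (r h : ℝ) (hh : 0 < h) (hhr : h ≤ r)
    (hball : ∀ x : X, HC (n : ℝ) (Metric.closedBall x r) < ENNReal.ofReal (h ^ n))
    (N : Set X) (hNfin : ∀ y t, (N ∩ closedBall y t).Finite)
    (hNd : ∀ y, ∃ x ∈ N, dist y x ≤ h) :
    ∃ (F : Type u) (c : F → X) (R : F → ℝ), (∀ i, 0 < R i) ∧ (∀ i, R i < h) ∧
      (∀ y t, {i | dist y (c i) ≤ t}.Finite) ∧ (∀ y, ∃ i, y ∈ ball (c i) (R i)) ∧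
      ∀ x ∈ N, ∀ s : Finset F, (∀ i ∈ s, dist x (c i) + R i ≤ r) →
        ∑ i ∈ s, R i ^ n < h ^ n := by
  classical
  choose G hGpos hGmeet hGcov hGsum using fun x : X =>
    exists_finite_cover (closedBall x r) (hbc x r) n h (hball x)
  let E := Σ x : N, G (x : X)
  let c : E → X := fun i => (i.2 : X × ℝ).1
  let R : E → ℝ := fun i => (i.2 : X × ℝ).2
  have hRpos : ∀ i, 0 < R i := fun i => hGpos _ _ i.2.2
  have hRh : ∀ i, R i < h := by
    intro i
    have h1 : R i ^ n ≤ ∑ p ∈ G i.1, p.2 ^ n :=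
      Finset.single_le_sum (f := fun p : X × ℝ => p.2 ^ n)
        (fun p hp => pow_nonneg (hGpos _ p hp).le n) i.2.2
    exact lt_of_pow_lt_pow_left₀ n hh.le (h1.trans_lt (hGsum _))
  have hfin : ∀ y t, {i : E | dist y (c i) ≤ t}.Finite := by
    intro y t
    have h1 := hNfin y (t + h + r)
    have h2 : {x : N | (x : X) ∈ closedBall y (t + h + r)}.Finite := by
      refine Set.Finite.of_finite_image (f := Subtype.val) (h1.subset ?_)
        Subtype.val_injective.injOn
      rintro _ ⟨x, hx, rfl⟩
      exact ⟨x.2, hx⟩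
    refine Set.Finite.subset (h2.biUnion fun x _ =>
      Set.finite_range (fun p : G (x : X) => (⟨x, p⟩ : E))) ?_
    rintro ⟨x, p⟩ hp
    refine mem_iUnion₂.2 ⟨x, ?_, ⟨p, rfl⟩⟩
    obtain ⟨z, hz1, hz2⟩ := hGmeet x p p.2
    have hp' : dist y (p : X × ℝ).1 ≤ t := hp
    have h3 : (p : X × ℝ).2 < h := hRh ⟨x, p⟩
    rw [mem_ball] at hz1
    rw [mem_closedBall] at hz2
    have h4 := dist_triangle4 y (p : X × ℝ).1 z x
    rw [dist_comm _ z] at h4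
    change (x : X) ∈ closedBall y _
    rw [mem_closedBall, dist_comm]
    linarith
  have hcov : ∀ x : N, ∀ y : X, dist y x ≤ r →
      ∃ p : G (x : X), y ∈ ball (c ⟨x, p⟩) (R ⟨x, p⟩) := by
    intro x y hy
    obtain ⟨p, hp, hyp⟩ := hGcov (x : X) y (mem_closedBall.2 hy)
    exact ⟨⟨p, hp⟩, hyp⟩
  -- `none` marks the selected balls.
  let A : Set (E → Option Unit) := {f | ∀ y, ∃ i, y ∈ ball (c i) (R i) ∧ f i = none}
  have hins : ∀ x : N, {i : E | dist (x : X) (c i) + R i ≤ r}.Finite := fun x =>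
    (hfin x r).subset fun i hi => by
      have := hRpos i
      rw [mem_ofPred_eq] at hi ⊢
      linarith
  let J : N → Finset E := fun x => Finset.univ.image fun p : G (x : X) => (⟨x, p⟩ : E)
  have key := local_min (M := N) (fun _ : E => (univ : Set (Option Unit)))
    (fun _ => Set.toFinite _) A ?_ (fun _ _ _ => mem_univ _) ?_ (fun i => R i ^ n)
    (fun i => pow_nonneg (hRpos i).le n) (fun x => (hins x).toFinset) J ?_
  · obtain ⟨f, hfA, hf⟩ := key
    refine ⟨{i // f i = none}, fun i => c i, fun i => R i, fun i => hRpos i, fun i => hRh i,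
      ?_, ?_, ?_⟩
    · intro y t
      exact Set.Finite.of_finite_image (f := Subtype.val)
        ((hfin y t).subset (by rintro _ ⟨i, hi, rfl⟩; exact hi)) Subtype.val_injective.injOn
    · intro y
      obtain ⟨i, hi, hfi⟩ := hfA y
      exact ⟨⟨i, hfi⟩, hi⟩
    · intro x hx s hs
      have h1 := hf ⟨x, hx⟩ (s.map (Function.Embedding.subtype _)) ?_
      · rw [Finset.sum_map] at h1
        refine lt_of_le_of_lt h1 (lt_of_le_of_lt ?_ (hGsum x))
        refine (Finset.sum_image_le_of_nonneg fun i _ => pow_nonneg (hRpos i).le n).trans ?_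
        exact (Finset.sum_coe_sort (G x) fun p : X × ℝ => p.2 ^ n).le
      · intro i hi
        obtain ⟨j, hj, rfl⟩ := Finset.mem_map.1 hi
        exact ⟨(Set.Finite.mem_toFinset _).2 (hs j hj), j.2⟩
  · let _ : TopologicalSpace (Option Unit) := ⊥
    have : DiscreteTopology (Option Unit) := ⟨rfl⟩
    have hAeq : A = ⋂ y, ⋃ i ∈ {i : E | y ∈ ball (c i) (R i)}, {f | f i = none} := by
      ext f
      simp only [mem_iInter, mem_iUnion, A]
      exact forall_congr' fun y => exists_congr fun i =>
        ⟨fun h => ⟨h.1, h.2⟩, fun ⟨h, h'⟩ => ⟨h, h'⟩⟩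
    change IsClosed A
    rw [hAeq]
    refine isClosed_iInter fun y => Set.Finite.isClosed_biUnion ?_ fun i _ => ?_
    · refine (hfin y h).subset fun i hi => ?_
      exact ((mem_ball.1 hi).trans (hRh i)).le
    · exact (isClosed_discrete {(none : Option Unit)}).preimage
        (continuous_apply (A := fun _ : E => Option Unit) i)
  · refine ⟨fun _ => none, fun y => ?_⟩
    obtain ⟨x, hx, hyx⟩ := hNd y
    obtain ⟨p, hp⟩ := hcov ⟨x, hx⟩ y (hyx.trans hhr)
    exact ⟨_, hp, rfl⟩
  · intro x f hf
    refine ⟨fun i => if i ∈ J x then none else if i ∈ (hins x).toFinset then some () else f i,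
      fun y => ?_, fun i hiJ hi => ?_⟩
    · by_cases hy : dist y x ≤ r
      · obtain ⟨p, hp⟩ := hcov x y hy
        refine ⟨_, hp, if_pos ?_⟩
        exact Finset.mem_image_of_mem _ (Finset.mem_univ p)
      · obtain ⟨i, hi, hfi⟩ := hf y
        have hiI : i ∉ (hins x).toFinset := by
          intro hiI
          have h1 : dist (x : X) (c i) + R i ≤ r := (Set.Finite.mem_toFinset (hins x)).1 hiI
          have h2 := dist_triangle y (c i) x
          rw [dist_comm (c i) (x : X)] at h2
          have h3 := mem_ball.1 hi
          exact hy (by linarith)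
        refine ⟨i, hi, ?_⟩
        simp [hiI, hfi]
    · dsimp only at hi
      rw [if_neg hiJ] at hi
      by_cases hiI : i ∈ (hins x).toFinset
      · rw [if_pos hiI] at hi
        cases hi
      · rw [if_neg hiI] at hi
        exact ⟨hiI, hi⟩

/-! ### The colouring -/

/-- One step of the dimension reduction. The balls `i` with `f i = none` form the separating family;
the other balls are labelled by net points, labels being constant along intersecting balls. -/
theorem separating_step {X : Type u} [MetricSpace X] (N : Set X) (h a r' : ℝ) (hh : 0 < h)
    (hNfin : ∀ y t, (N ∩ closedBall y t).Finite) (har : a + 2 * h ≤ r') (k : ℕ)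
    {F : Type v} (c : F → X) (R : F → ℝ) (hRpos : ∀ i, 0 < R i) (hRh : ∀ i, R i < h)
    (hfin : ∀ y t, {i | dist y (c i) ≤ t}.Finite)
    (hsum : ∀ x ∈ N, ∀ s : Finset F, (∀ i ∈ s, dist x (c i) + R i ≤ a + 4 * h) →
      ∑ i ∈ s, R i ^ (k + 1) < h ^ (k + 1)) :
    ∃ f : F → Option N, (∀ i x, f i = some x → dist (x : X) (c i) + R i ≤ r') ∧
      (∀ i j y x x', y ∈ ball (c i) (R i) → y ∈ ball (c j) (R j) → f i = some x →
        f j = some x' → x = x') ∧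
      ∀ x ∈ N, ∀ s : Finset F, (∀ i ∈ s, f i = none ∧ dist x (c i) + R i ≤ a) →
        ∑ i ∈ s, R i ^ k < h ^ k := by
  classical
  have hins : ∀ (x : X) t, {i : F | dist x (c i) + R i ≤ t}.Finite := fun x t =>
    (hfin x t).subset fun i hi => by
      have := hRpos i
      rw [mem_ofPred_eq] at hi ⊢
      linarith
  have hcross : ∀ x : N, ∃ s, a ≤ s ∧ s ≤ a + 2 * h ∧
      ∑ i ∈ (hins x (a + 4 * h)).toFinset with
        dist (x : X) (c i) - R i < s ∧ s < dist (x : X) (c i) + R i, R i ^ k < h ^ k := by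
    intro x
    refine coarea _ (fun i => dist (x : X) (c i)) R hRpos k a h hh (hsum x x.2 _ ?_)
    intro i hi
    exact (Set.Finite.mem_toFinset (hins x (a + 4 * h))).1 hi
  choose s has hsa hs using hcross
  let C : F → Set (Option N) := fun i =>
    insert none (some '' {x : N | dist (x : X) (c i) + R i ≤ r'})
  let A : Set (F → Option N) := {f | (∀ i, f i ∈ C i) ∧ ∀ i j y, y ∈ ball (c i) (R i) →
    y ∈ ball (c j) (R j) → ∀ x x', f i = some x → f j = some x' → x = x'}
  have key := local_min (M := N) C ?_ A ?_ (fun f hf => hf.1) ?_ (fun i => R i ^ k)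
    (fun i => pow_nonneg (hRpos i).le k) (fun x => (hins x (s x)).toFinset)
    (fun x => {i ∈ (hins x (a + 4 * h)).toFinset |
        dist (x : X) (c i) - R i < s x ∧ s x < dist (x : X) (c i) + R i}) ?_
  · obtain ⟨f, hfA, hf⟩ := key
    refine ⟨f, fun i x hix => ?_, fun i j y x x' hi hj => hfA.2 i j y hi hj x x',
      fun x hx t ht => ?_⟩
    · have := hfA.1 i
      rw [hix] at this
      rcases this with h0 | ⟨x', hx', h1⟩
      · cases h0
      · cases h1
        exact hx'
    · refine (hf ⟨x, hx⟩ t fun i hi => ⟨?_, (ht i hi).1⟩).trans_lt (hs ⟨x, hx⟩)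
      exact (Set.Finite.mem_toFinset _).2 ((ht i hi).2.trans (has ⟨x, hx⟩))
  · intro i
    refine Set.Finite.insert _ (Set.Finite.image _ ?_)
    refine Set.Finite.of_finite_image (f := Subtype.val) ((hNfin (c i) r').subset ?_)
      Subtype.val_injective.injOn
    rintro _ ⟨x, hx, rfl⟩
    have hx' : dist (x : X) (c i) + R i ≤ r' := hx
    have := hRpos i
    exact ⟨x.2, mem_closedBall.2 (by linarith)⟩
  · let _ : TopologicalSpace (Option N) := ⊥
    have : DiscreteTopology (Option N) := ⟨rfl⟩
    have hcl : ∀ (i j : F) (P : Option N → Option N → Prop),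
        IsClosed {f : F → Option N | P (f i) (f j)} := by
      intro i j P
      exact (isClosed_discrete {q : Option N × Option N | P q.1 q.2}).preimage
        ((continuous_apply (A := fun _ : F => Option N) i).prodMk
          (continuous_apply (A := fun _ : F => Option N) j))
    have hAeq : A = (⋂ i, {f | f i ∈ C i}) ∩ ⋂ i, ⋂ j, ⋂ y, ⋂ (_ : y ∈ ball (c i) (R i)),
        ⋂ (_ : y ∈ ball (c j) (R j)),
          {f : F → Option N | ∀ x x', f i = some x → f j = some x' → x = x'} := by
      ext f
      simp only [mem_inter_iff, mem_iInter, A]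
      exact Iff.rfl
    change IsClosed A
    rw [hAeq]
    refine IsClosed.inter (isClosed_iInter fun i => hcl i i fun o _ => o ∈ C i) ?_
    exact isClosed_iInter fun i => isClosed_iInter fun j => isClosed_iInter fun y =>
      isClosed_iInter fun _ => isClosed_iInter fun _ =>
        hcl i j fun o o' => ∀ x x', o = some x → o' = some x' → x = x'
  · exact ⟨fun _ => none, fun i => mem_insert _ _, fun i j y _ _ x x' h0 => by cases h0⟩
  · intro x f hf
    -- Balls inside `B(x, s x)` get the label `x`, balls outside keep theirs, the others lose it.
    refine ⟨fun i => if dist (x : X) (c i) + R i ≤ s x then some x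
      else if s x ≤ dist (x : X) (c i) - R i then f i else none, ⟨fun i => ?_, ?_⟩, ?_⟩
    · dsimp only
      split_ifs with h1 h2
      · exact mem_insert_of_mem _ ⟨x, h1.trans ((hsa x).trans har), rfl⟩
      · exact hf.1 i
      · exact mem_insert _ _
    · intro i j y hi hj l l' hl hl'
      have hi' := mem_ball.1 hi
      have hj' := mem_ball.1 hj
      have ti := dist_triangle (x : X) (c i) y
      have ti' := dist_triangle (x : X) y (c i)
      have tj := dist_triangle (x : X) (c j) y
      have tj' := dist_triangle (x : X) y (c j)
      rw [dist_comm (c i) y] at ti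
      rw [dist_comm (c j) y] at tj
      dsimp only at hl hl'
      split_ifs at hl hl' with h1 h2 h3 h4 h5
      · cases hl
        cases hl'
        rfl
      · exfalso; linarith
      · exfalso; linarith
      · exact hf.2 i j y hi hj l l' hl hl'
    · intro i hiJ hi
      dsimp only at hi
      split_ifs at hi with h1 h2
      · exact ⟨fun h0 => h1 ((Set.Finite.mem_toFinset (hins x (s x))).1 h0), hi⟩
      · exfalso
        refine hiJ (Finset.mem_filter.2 ⟨(Set.Finite.mem_toFinset _).2 ?_, ?_, ?_⟩)
        · have h3 := hRh i
          have h4 := hsa x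
          rw [mem_ofPred_eq]
          linarith
        · linarith
        · linarith

/-- `k` applications of `separating_step` use up the whole family; `g i` is the pair of the colour
(the step at which the ball `i` is labelled) and the label of the ball `i`. -/
theorem coloring {X : Type u} [MetricSpace X] (N : Set X) (h ρ r' : ℝ) (hh : 0 < h)
    (hρ : 2 * h ≤ ρ) (hNfin : ∀ y t, (N ∩ closedBall y t).Finite)
    (hNd : ∀ y, ∃ x ∈ N, dist y x ≤ h) (k : ℕ) (hk : ρ + 4 * k * h - 2 * h ≤ r') :
    ∀ (F : Type v) (c : F → X) (R : F → ℝ), (∀ i, 0 < R i) → (∀ i, R i < h) →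
      (∀ y t, {i | dist y (c i) ≤ t}.Finite) →
      (∀ x ∈ N, ∀ s : Finset F, (∀ i ∈ s, dist x (c i) + R i ≤ ρ + 4 * k * h) →
        ∑ i ∈ s, R i ^ k < h ^ k) →
      ∃ g : F → ℕ × N, (∀ i, (g i).1 < k) ∧ (∀ i, dist ((g i).2 : X) (c i) + R i ≤ r') ∧
        ∀ i j y, y ∈ ball (c i) (R i) → y ∈ ball (c j) (R j) → (g i).1 = (g j).1 →
          (g i).2 = (g j).2 := by
  induction k with
  | zero =>
    intro F c R hRpos hRh hfin hsum
    -- A single ball already has `∑ R ^ 0 = 1`, so there are no balls at all.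
    have hF : IsEmpty F := by
      refine ⟨fun i => ?_⟩
      obtain ⟨x, hx, hxi⟩ := hNd (c i)
      have h1 := hsum x hx {i} ?_
      · simp at h1
      · intro j hj
        rw [Finset.mem_singleton.1 hj, dist_comm]
        have := hRh i
        push_cast
        linarith
    exact ⟨fun i => hF.elim i, fun i => hF.elim i, fun i => hF.elim i, fun i => hF.elim i⟩
  | succ k ih =>
    intro F c R hRpos hRh hfin hsum
    push_cast at hk hsum
    obtain ⟨f, hf1, hf2, hf3⟩ := separating_step N h (ρ + 4 * k * h) r' hh hNfin
      (by linarith) k c R hRpos hRh hfin (fun x hx s hs => hsum x hx s fun i hi => by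
        have := hs i hi
        linarith)
    obtain ⟨g, hg1, hg2, hg3⟩ := ih (by linarith) {i // f i = none} (fun i => c i)
      (fun i => R i) (fun i => hRpos i) (fun i => hRh i)
      (fun y t => Set.Finite.of_finite_image (f := Subtype.val)
        ((hfin y t).subset (by rintro _ ⟨i, hi, rfl⟩; exact hi)) Subtype.val_injective.injOn)
      (fun x hx s hs => by
        have h1 := hf3 x hx (s.map (Function.Embedding.subtype _)) ?_
        · rwa [Finset.sum_map] at h1
        · intro i hi
          obtain ⟨j, hj, rfl⟩ := Finset.mem_map.1 hi
          exact ⟨j.2, hs j hj⟩)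
    have key : ∀ i, ∃ q : ℕ × N, (∀ hi : f i = none, q = g ⟨i, hi⟩) ∧
        ∀ x, f i = some x → q = (k, x) := by
      intro i
      by_cases hfi : f i = none
      · exact ⟨g ⟨i, hfi⟩, fun _ => rfl, fun x hx => by rw [hfi] at hx; cases hx⟩
      · obtain ⟨x, hx⟩ := Option.ne_none_iff_exists'.1 hfi
        exact ⟨(k, x), fun h0 => absurd h0 hfi, fun x' hx' => by rw [hx] at hx'; cases hx'; rfl⟩
    choose q hq0 hq1 using key
    refine ⟨q, fun i => ?_, fun i => ?_, fun i j y hi hj hij => ?_⟩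
    · rcases hfi : f i with _ | x
      · rw [hq0 i hfi]
        exact (hg1 _).trans (Nat.lt_succ_self k)
      · rw [hq1 i x hfi]
        exact Nat.lt_succ_self k
    · rcases hfi : f i with _ | x
      · rw [hq0 i hfi]
        exact hg2 ⟨i, hfi⟩
      · rw [hq1 i x hfi]
        exact hf1 i x hfi
    · rcases hfi : f i with _ | x <;> rcases hfj : f j with _ | x'
      · rw [hq0 i hfi, hq0 j hfj] at hij ⊢
        exact hg3 ⟨i, hfi⟩ ⟨j, hfj⟩ y hi hj hij
      · rw [hq0 i hfi, hq1 j x' hfj] at hij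
        exact absurd hij (hg1 _).ne
      · rw [hq1 i x hfi, hq0 j hfj] at hij
        exact absurd hij (hg1 _).ne'
      · rw [hq1 i x hfi, hq1 j x' hfj]
        exact hf2 i j y x x' hi hj hfi hfj

/-- If `X` is boundedly compact (all closed balls are compact), `n ≥ 1`, `r > 0`, `μ > 0`,
and every closed ball of radius `r` has `n`-dimensional Hausdorff content at most
`(r/(8n))^n − μ`, then `UR_{n-1}(X) < r`: there are `r' < r` and an open covering of `X`
by sets contained in closed balls of radius `r'` with multiplicity at most `n`. -/
theorem stmt2 {X : Type*} [MetricSpace X]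
    (hbc : ∀ (x : X) (t : ℝ), IsCompact (Metric.closedBall x t))
    (n : ℕ) (hn : 1 ≤ n) (r : ℝ) (hr : 0 < r) (μ : ℝ) (hμ : 0 < μ)
    (hball : ∀ x : X, HC (n : ℝ) (Metric.closedBall x r) ≤
      ENNReal.ofReal ((r / (8 * n)) ^ n - μ)) :
    ∃ r' : ℝ, r' < r ∧ ∃ (ι : Type) (U : ι → Set X),
      (∀ i, IsOpen (U i)) ∧ (∀ x : X, ∃ i, x ∈ U i) ∧
      (∀ i, ∃ c : X, U i ⊆ Metric.closedBall c r') ∧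
      (∀ x : X, {i | x ∈ U i}.encard ≤ n) := by
  classical
  have hn0 : (0 : ℝ) < n := by exact_mod_cast hn
  have hn1 : (1 : ℝ) ≤ n := by exact_mod_cast hn
  set h : ℝ := r / (8 * n) with hh_def
  have hh : 0 < h := by positivity
  have hrh : r = 8 * n * h := by rw [hh_def]; field_simp
  have hnh : h ≤ n * h := le_mul_of_one_le_left hh.le hn1
  have hball' : ∀ x : X, HC (n : ℝ) (Metric.closedBall x r) < ENNReal.ofReal (h ^ n) := fun x =>
    (hball x).trans_lt ((ENNReal.ofReal_lt_ofReal_iff (by positivity)).2 (by linarith))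
  obtain ⟨N, hNc, hNfin, hNd⟩ := exists_net hbc h hh
  obtain ⟨F, c, R, hRpos, hRh, hfin, hcov, hsum⟩ :=
    exists_good_cover hbc n r h hh (by linarith) hball' N hNfin hNd
  -- The radii `ρ + 4 k h` used in the colouring grow from `ρ = 4 n h` to `8 n h = r`.
  obtain ⟨g, hg1, hg2, hg3⟩ := coloring N h (4 * n * h) (r - 2 * h) hh (by linarith) hNfin hNd n
    (by linarith) F c R hRpos hRh hfin
    (fun x hx s hs => hsum x hx s fun i hi => by
      have := hs i hi
      linarith)
  have := hNc.to_subtype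
  obtain ⟨e, he⟩ := exists_injective_nat N
  refine ⟨r - 2 * h, by linarith, {q : ℕ × ℕ // ∃ x : N, e x = q.2},
    fun q => ⋃ i ∈ {i | (g i).1 = q.1.1 ∧ e (g i).2 = q.1.2}, ball (c i) (R i), ?_, ?_, ?_, ?_⟩
  · exact fun q => isOpen_biUnion fun i _ => isOpen_ball
  · intro x
    obtain ⟨i, hi⟩ := hcov x
    exact ⟨⟨((g i).1, e (g i).2), ⟨_, rfl⟩⟩, mem_biUnion (x := i) ⟨rfl, rfl⟩ hi⟩
  · rintro ⟨q, x, hx⟩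
    refine ⟨x, iUnion₂_subset fun i hi => ?_⟩
    have hgx : (g i).2 = x := he (hi.2.trans hx.symm)
    intro y hy
    have h1 := hg2 i
    rw [hgx, dist_comm] at h1
    have h2 := mem_ball.1 hy
    have h3 := dist_triangle y (c i) x
    exact mem_closedBall.2 (by linarith)
  · intro x
    -- A covering set containing `x` is determined by its colour.
    have hinj : Set.InjOn (fun q : {q : ℕ × ℕ // ∃ x : N, e x = q.2} => q.1.1)
        {q | x ∈ ⋃ i ∈ {i | (g i).1 = q.1.1 ∧ e (g i).2 = q.1.2}, ball (c i) (R i)} := by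
      intro q hq q' hq' hqq
      obtain ⟨i, hi, hxi⟩ := mem_iUnion₂.1 hq
      obtain ⟨j, hj, hxj⟩ := mem_iUnion₂.1 hq'
      have hqq' : q.1.1 = q'.1.1 := hqq
      have h1 := hg3 i j x hxi hxj (hi.1.trans (hqq'.trans hj.1.symm))
      refine Subtype.ext (Prod.ext hqq' ?_)
      rw [← hi.2, ← hj.2, h1]
    rw [← hinj.encard_image]
    refine (Set.encard_le_encard (t := (Finset.range n : Set ℕ)) ?_).trans ?_
    · rintro _ ⟨q, hq, rfl⟩
      obtain ⟨i, hi, hxi⟩ := mem_iUnion₂.1 hq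
      have h1 := hg1 i
      rw [hi.1] at h1
      simpa using h1
    · rw [Set.encard_coe_eq_coe_finsetCard, Finset.card_range]
end

section
/- Let r > 0, let n ≥ 1 be an integer, let X be a metric space, and let Y be a compact subset of X such that for every closed metric ball B of radius r in X one has HC_n(B ∩ Y) < (r/(4n))^n. Then UR_{n−1}(Y) < r; that is, there exist r' < r and a finite covering of Y by sets that are open in Y, each contained in a closed metric ball of X of radius r', such that no n+1 of the covering sets have a common point. -/
/-!
Write `r = 4 n q`, so that the hypothesis says that every ball of radius `4 n q` about a point of `Y`
meets `Y` in a set covered by finitely many open balls with `∑ ρ ^ n < q ^ n`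
(`exists_ballCover_of_HC_lt`: enlarge the radii slightly and use compactness). With `q` fixed, the
theorem is proved in this form by induction on `n` (`exists_open_cover`). For `n = 0` the hypothesis
forces `Y = ∅`.

For the step from `n` to `n + 1`, consider *separators*: closed subsets `Z` of `Y`, together with a
finite cover `F` of `Z` by balls of radius at most `q`, such that `Y \ Z` is covered by finitely many
pairwise disjoint open sets, each in a ball of radius `< 4 (n + 1) q`. The set `Z = Y` is an example.
Choose a separator whose weight `∑ ρ ^ n` is minimal up to a small `δ`. Given `x ∈ Z`, the coarea
inequality (`exists_sphere_weight_le`) yields some `t` in the interval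
`(4 n q + 2 q, 4 (n + 1) q)`, of length `2 q`, such that the sphere of radius `t` about `x` meets `Y`
in a set covered with weight at most `q ^ n - δ`. Replacing the part of `Z` inside the sphere by the
sphere gives another separator (`Separator.cut`), and near-minimality shows that the balls of `F`
lying inside the sphere have weight `< q ^ n`. They cover the part of `Z` in the ball of radius
`4 n q` about `x`, because their diameter is at most `2 q`. So the induction hypothesis applies to
`Z`, and its cover together with the disjoint open pieces has multiplicity at most `n + 1`.
-/

open Metric Set
open scoped ENNReal NNReal

open Filter Topology MeasureTheory

section

variable {X : Type*} [MetricSpace X]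

/-- A finite family `F` of open balls, given as pairs (centre, radius) with positive radii, whose
union contains `A`. -/
def IsBallCover (F : Finset (X × ℝ)) (A : Set X) : Prop :=
  (∀ p ∈ F, 0 < p.2) ∧ ∀ y ∈ A, ∃ p ∈ F, dist y p.1 < p.2

lemma exists_ballCover_of_HC_lt {A : Set X} (hA : IsCompact A) {n : ℕ} {c : ℝ}
    (h : HC (n : ℝ) A < ENNReal.ofReal c) :
    ∃ F : Finset (X × ℝ), IsBallCover F A ∧ ∑ p ∈ F, p.2 ^ n < c := by
  classical
  simp only [HC, iInf_lt_iff] at h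
  obtain ⟨S, hS, hcov, hsum⟩ := h
  have : Countable S := hS.to_subtype
  obtain ⟨e, he, hesum⟩ := ENNReal.exists_pos_sum_of_countable' (tsub_pos_of_lt hsum).ne' S
  have key : ∀ i : S, ∃ ρ : ℝ, ((i : X × ℝ≥0).2 : ℝ) < ρ ∧
      ENNReal.ofReal (ρ ^ n) < ((i : X × ℝ≥0).2 : ℝ≥0∞) ^ (n : ℝ) + e i := by
    intro i
    set a : ℝ≥0 := (i : X × ℝ≥0).2
    have hcont : Continuous fun ρ : ℝ => ENNReal.ofReal (ρ ^ n) :=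
      ENNReal.continuous_ofReal.comp (continuous_pow n)
    have hlt : ENNReal.ofReal ((a : ℝ) ^ n) < (a : ℝ≥0∞) ^ (n : ℝ) + e i := by
      have h1 : ENNReal.ofReal ((a : ℝ) ^ n) = (a : ℝ≥0∞) ^ (n : ℝ) := by
        rw [ENNReal.ofReal_pow a.coe_nonneg, ENNReal.ofReal_coe_nnreal, ENNReal.rpow_natCast]
      rw [h1]
      refine ENNReal.lt_add_right ?_ (he i).ne'
      rw [← h1]; exact ENNReal.ofReal_ne_top
    have hev : ∀ᶠ ρ in 𝓝[>] (a : ℝ), ENNReal.ofReal (ρ ^ n) < (a : ℝ≥0∞) ^ (n : ℝ) + e i :=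
      (hcont.tendsto _).eventually_lt_const hlt |>.filter_mono nhdsWithin_le_nhds
    obtain ⟨ρ, h1, h2⟩ := (hev.and self_mem_nhdsWithin).exists
    exact ⟨ρ, h2, h1⟩
  choose ρ hρ hρe using key
  obtain ⟨t, ht⟩ := hA.elim_finite_subcover (fun i : S => ball (i : X × ℝ≥0).1 (ρ i))
    (fun i => isOpen_ball) (by
      intro y hy
      have := hcov hy
      simp only [mem_iUnion] at this ⊢
      obtain ⟨p, hp, hyp⟩ := this
      exact ⟨⟨p, hp⟩, lt_of_le_of_lt hyp (hρ ⟨p, hp⟩)⟩)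
  have hρ0 : ∀ i, 0 < ρ i := fun i => lt_of_le_of_lt (NNReal.coe_nonneg _) (hρ i)
  refine ⟨t.image fun i : S => ((i : X × ℝ≥0).1, ρ i), ⟨?_, ?_⟩, ?_⟩
  · intro p hp
    obtain ⟨i, -, rfl⟩ := Finset.mem_image.1 hp
    exact hρ0 i
  · intro y hy
    have := ht hy
    simp only [mem_iUnion] at this
    obtain ⟨i, hi, hyi⟩ := this
    exact ⟨_, Finset.mem_image_of_mem _ hi, hyi⟩
  · have h1 : ∑ p ∈ t.image (fun i : S => ((i : X × ℝ≥0).1, ρ i)), p.2 ^ n ≤ ∑ i ∈ t, ρ i ^ n := by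
      refine Finset.sum_image_le_of_nonneg ?_
      intro i hi
      exact pow_nonneg (by
        obtain ⟨j, -, rfl⟩ := Finset.mem_image.1 hi
        exact (hρ0 j).le) n
    refine lt_of_le_of_lt h1 ?_
    rw [← ENNReal.ofReal_lt_ofReal_iff_of_nonneg
      (Finset.sum_nonneg fun i _ => pow_nonneg (hρ0 i).le n),
      ENNReal.ofReal_sum_of_nonneg fun i _ => pow_nonneg (hρ0 i).le n]
    calc ∑ i ∈ t, ENNReal.ofReal (ρ i ^ n)
        ≤ ∑ i ∈ t, (((i : X × ℝ≥0).2 : ℝ≥0∞) ^ (n : ℝ) + e i) :=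
          Finset.sum_le_sum fun i _ => (hρe i).le
      _ ≤ ∑' i : S, (((i : X × ℝ≥0).2 : ℝ≥0∞) ^ (n : ℝ) + e i) := ENNReal.sum_le_tsum t
      _ = (∑' i : S, ((i : X × ℝ≥0).2 : ℝ≥0∞) ^ (n : ℝ)) + ∑' i, e i := ENNReal.tsum_add
      _ < ENNReal.ofReal c := by
          rw [add_comm]
          exact lt_tsub_iff_right.1 hesum

/-- The cover found at one centre still works at nearby centres, so over a compact set of centres
the strict bound on the weights is uniform. -/
lemma exists_uniform_weight {Y : Set X} (hY : IsCompact Y) {n : ℕ} {r c : ℝ}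
    (h : ∀ x ∈ Y, ∃ F : Finset (X × ℝ), IsBallCover F (closedBall x r ∩ Y) ∧
      ∑ p ∈ F, p.2 ^ n < c) :
    ∃ c' < c, ∀ x ∈ Y, ∃ F : Finset (X × ℝ), IsBallCover F (closedBall x r ∩ Y) ∧
      ∑ p ∈ F, p.2 ^ n ≤ c' := by
  refine hY.induction_on (p := fun s => ∃ c' < c, ∀ x ∈ s, ∃ F : Finset (X × ℝ),
    IsBallCover F (closedBall x r ∩ Y) ∧ ∑ p ∈ F, p.2 ^ n ≤ c') ?_ ?_ ?_ ?_
  · exact ⟨c - 1, by linarith, by simp⟩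
  · rintro s t hst ⟨c', hc', H⟩
    exact ⟨c', hc', fun x hx => H x (hst hx)⟩
  · rintro s t ⟨c₁, hc₁, H₁⟩ ⟨c₂, hc₂, H₂⟩
    refine ⟨max c₁ c₂, max_lt hc₁ hc₂, ?_⟩
    rintro x (hx | hx)
    · obtain ⟨F, hF, hs⟩ := H₁ x hx
      exact ⟨F, hF, hs.trans (le_max_left _ _)⟩
    · obtain ⟨F, hF, hs⟩ := H₂ x hx
      exact ⟨F, hF, hs.trans (le_max_right _ _)⟩
  · intro x hx
    obtain ⟨F, ⟨hpos, hF⟩, hs⟩ := h x hx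
    -- the compact part of `Y` missed by `F` lies at distance `> r` from `x`, hence from nearby points
    have hK : IsCompact (Y \ ⋃ p ∈ F, ball p.1 p.2) :=
      hY.diff (isOpen_biUnion fun p _ => isOpen_ball)
    have hev : ∀ᶠ x' in 𝓝 x, ∀ y ∈ Y \ ⋃ p ∈ F, ball p.1 p.2, r < dist y x' := by
      refine hK.eventually_forall_of_forall_eventually fun y hy => ?_
      have hlt : r < dist y x := by
        by_contra hle
        obtain ⟨p, hp, hyp⟩ := hF y ⟨not_lt.1 hle, hy.1⟩
        exact hy.2 (mem_biUnion hp hyp)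
      have hc : Continuous fun z : X × X => dist z.2 z.1 := by fun_prop
      exact (hc.tendsto (x, y)).eventually_const_lt hlt
    refine ⟨_, mem_nhdsWithin_of_mem_nhds hev, ∑ p ∈ F, p.2 ^ n, hs, fun x' hx' =>
      ⟨F, ⟨hpos, ?_⟩, le_rfl⟩⟩
    rintro y ⟨hy, hyY⟩
    by_contra hno
    push Not at hno
    refine (hx' y ⟨hyY, ?_⟩).not_ge hy
    simp only [mem_iUnion, not_exists]
    exact fun p hp hyp => (hno p hp).not_gt hyp

/-- Coarea inequality: a ball of radius `ρ` meets the sphere of radius `t` about `x` only for `t` in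
an interval of length `2 ρ`, so averaging over `t ∈ (a, b)` bounds the weight of the balls met by a
suitable sphere. -/
lemma exists_sphere_weight_le (x : X) (F : Finset (X × ℝ)) (hF : ∀ p ∈ F, 0 < p.2) (n : ℕ)
    {a b : ℝ} (hab : a < b) :
    ∃ t ∈ Ioo a b, ∑ p ∈ F with |t - dist x p.1| < p.2, p.2 ^ n ≤
      2 * (∑ p ∈ F, p.2 ^ (n + 1)) / (b - a) := by
  classical
  let f : ℝ → ℝ≥0∞ := fun t => ∑ p ∈ F,
    (ball (dist x p.1) p.2).indicator (fun _ => ENNReal.ofReal (p.2 ^ n)) t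
  have hfm : Measurable f := Finset.measurable_sum _ fun p _ =>
    measurable_const.indicator measurableSet_ball
  have hint : ∫⁻ t in Ioo a b, f t ≤ ENNReal.ofReal (2 * ∑ p ∈ F, p.2 ^ (n + 1)) := by
    calc ∫⁻ t in Ioo a b, f t ≤ ∫⁻ t, f t := setLIntegral_le_lintegral _ _
      _ = ∑ p ∈ F, ENNReal.ofReal (2 * p.2 ^ (n + 1)) := by
        rw [lintegral_finsetSum _ fun p _ => measurable_const.indicator measurableSet_ball]
        refine Finset.sum_congr rfl fun p hp => ?_
        rw [lintegral_indicator_const measurableSet_ball, Real.volume_ball,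
          ← ENNReal.ofReal_mul (pow_nonneg (hF p hp).le n)]
        congr 1; ring
      _ = ENNReal.ofReal (2 * ∑ p ∈ F, p.2 ^ (n + 1)) := by
        rw [Finset.mul_sum, ENNReal.ofReal_sum_of_nonneg]
        intro p hp
        have := pow_nonneg (hF p hp).le (n + 1)
        positivity
  have hvol : volume (Ioo a b) = ENNReal.ofReal (b - a) := Real.volume_Ioo
  have hba : 0 < b - a := sub_pos.2 hab
  obtain ⟨t, ht, hft⟩ := exists_le_setLAverage (μ := volume) (s := Ioo a b)
    (by rw [hvol]; simpa using hab) (by rw [hvol]; exact ENNReal.ofReal_ne_top)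
    hfm.aemeasurable
  refine ⟨t, ht, ?_⟩
  have hs0 : 0 ≤ 2 * ∑ p ∈ F, p.2 ^ (n + 1) :=
    mul_nonneg zero_le_two (Finset.sum_nonneg fun p hp => pow_nonneg (hF p hp).le _)
  have hval : f t = ENNReal.ofReal (∑ p ∈ F with |t - dist x p.1| < p.2, p.2 ^ n) := by
    rw [ENNReal.ofReal_sum_of_nonneg, Finset.sum_filter]
    · refine Finset.sum_congr rfl fun p _ => ?_
      simp only [indicator_apply, mem_ball, Real.dist_eq]
    · intro p hp
      exact pow_nonneg (hF p (Finset.mem_filter.1 hp).1).le n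
  rw [hval, setLAverage_eq, hvol] at hft
  have h2 := hft.trans (ENNReal.div_le_div_right hint _)
  rw [← ENNReal.ofReal_div_of_pos hba, ENNReal.ofReal_le_ofReal_iff (by positivity)] at h2
  exact h2

/-- A closed subset `Z` of `Y`, covered by the balls of `F`, of radius at most `q`, such that
`Y \ Z` is covered by finitely many disjoint open subsets of `X`, each contained in a ball of radius
less than `R`. -/
def Separator (Y : Set X) (q R : ℝ) (Z : Set X) (F : Finset (X × ℝ)) : Prop :=
  IsClosed Z ∧ Z ⊆ Y ∧ IsBallCover F Z ∧ (∀ p ∈ F, p.2 ≤ q) ∧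
    ∃ 𝒱 : Set (Set X), 𝒱.Finite ∧ (∀ V ∈ 𝒱, IsOpen V ∧ ∃ c, ∃ ρ < R, V ⊆ closedBall c ρ) ∧
      (∀ y, ∀ V ∈ 𝒱, ∀ W ∈ 𝒱, y ∈ V → y ∈ W → V = W) ∧ Y \ Z ⊆ ⋃₀ 𝒱

lemma Separator.self {Y : Set X} (hY : IsCompact Y) {q : ℝ} (hq : 0 < q) (R : ℝ) :
    ∃ F, Separator Y q R Y F := by
  classical
  obtain ⟨t, -, ht⟩ := hY.elim_nhds_subcover (fun x => ball x q) fun x _ => ball_mem_nhds x hq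
  refine ⟨t.image fun x => (x, q), hY.isClosed, subset_rfl, ⟨?_, ?_⟩, ?_, ∅, by simp⟩
  · intro p hp
    obtain ⟨i, -, rfl⟩ := Finset.mem_image.1 hp
    exact hq
  · intro y hy
    obtain ⟨x, hx, hyx⟩ := mem_iUnion₂.1 (ht hy)
    exact ⟨_, Finset.mem_image_of_mem _ hx, hyx⟩
  · intro p hp
    obtain ⟨i, -, rfl⟩ := Finset.mem_image.1 hp
    exact le_rfl

/-- Cut and paste: the part of a separator inside the sphere of radius `t` about `x` may be replaced
by the part of `Y` on that sphere, at the cost of the cover `G` of the latter. The balls of `F`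
contained in the open ball of radius `t` become superfluous. -/
lemma Separator.cut [DecidableEq (X × ℝ)] {Y Z : Set X} {q R : ℝ} {F G : Finset (X × ℝ)}
    (hY : IsClosed Y)
    (h : Separator Y q R Z F) {x : X} {t : ℝ} (ht : t < R) (hG : IsBallCover G (sphere x t ∩ Y))
    (hGq : ∀ p ∈ G, p.2 ≤ q) :
    Separator Y q R (Z \ ball x t ∪ sphere x t ∩ Y) ({p ∈ F | t ≤ dist p.1 x + p.2} ∪ G) := by
  obtain ⟨hZ, hZY, hF, hFq, 𝒱, hfin, h𝒱, hdis, hcov⟩ := h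
  refine ⟨(hZ.sdiff isOpen_ball).union (isClosed_sphere.inter hY),
    union_subset (sdiff_subset.trans hZY) inter_subset_right, ⟨?_, ?_⟩, ?_,
    insert (ball x t) ((· \ closedBall x t) '' 𝒱), (hfin.image _).insert _, ?_, ?_, ?_⟩
  · intro p hp
    rcases Finset.mem_union.1 hp with hp | hp
    · exact hF.1 p (Finset.mem_filter.1 hp).1
    · exact hG.1 p hp
  · rintro y (⟨hyZ, hy⟩ | hy)
    · obtain ⟨p, hp, hyp⟩ := hF.2 y hyZ
      refine ⟨p, Finset.mem_union_left _ (Finset.mem_filter.2 ⟨hp, ?_⟩), hyp⟩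
      have h1 : t ≤ dist y x := not_lt.1 hy
      have h2 := dist_triangle y p.1 x
      linarith
    · obtain ⟨p, hp, hyp⟩ := hG.2 y hy
      exact ⟨p, Finset.mem_union_right _ hp, hyp⟩
  · intro p hp
    rcases Finset.mem_union.1 hp with hp | hp
    · exact hFq p (Finset.mem_filter.1 hp).1
    · exact hGq p hp
  · rintro V (rfl | ⟨V, hV, rfl⟩)
    · exact ⟨isOpen_ball, x, t, ht, ball_subset_closedBall⟩
    · obtain ⟨ho, c, ρ, hρ, hsub⟩ := h𝒱 V hV
      exact ⟨ho.sdiff isClosed_closedBall, c, ρ, hρ, sdiff_subset.trans hsub⟩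
  · rintro y V (rfl | ⟨V, hV, rfl⟩) W (rfl | ⟨W, hW, rfl⟩) hyV hyW
    · rfl
    · exact absurd (ball_subset_closedBall hyV) hyW.2
    · exact absurd (ball_subset_closedBall hyW) hyV.2
    · rw [hdis y V hV W hW hyV.1 hyW.1]
  · rintro y ⟨hyY, hy⟩
    rcases lt_trichotomy (dist y x) t with hlt | heq | hgt
    · exact ⟨ball x t, mem_insert _ _, hlt⟩
    · exact absurd (Or.inr ⟨heq, hyY⟩) hy
    · have hyZ : y ∉ Z := fun hyZ => hy (Or.inl ⟨hyZ, hgt.le.not_gt⟩)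
      obtain ⟨V, hV, hyV⟩ := hcov ⟨hyY, hyZ⟩
      exact ⟨V \ closedBall x t, mem_insert_of_mem _ ⟨V, hV, rfl⟩, hyV, hgt.not_ge⟩

/-- A near-minimal separator satisfies the density hypothesis in dimension one lower. -/
lemma exists_thin_separator {Y : Set X} (hY : IsCompact Y) {n : ℕ} {q : ℝ} (hq : 0 < q)
    (h : ∀ x ∈ Y, ∃ F : Finset (X × ℝ), IsBallCover F (closedBall x (4 * (n + 1 : ℕ) * q) ∩ Y) ∧
      ∑ p ∈ F, p.2 ^ (n + 1) < q ^ (n + 1)) :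
    ∃ Z F, Separator Y q (4 * (n + 1 : ℕ) * q) Z F ∧
      ∀ x ∈ Z, ∃ F : Finset (X × ℝ), IsBallCover F (closedBall x (4 * n * q) ∩ Z) ∧
        ∑ p ∈ F, p.2 ^ n < q ^ n := by
  classical
  set R : ℝ := 4 * (n + 1 : ℕ) * q with hR
  have hR' : R = 4 * n * q + 4 * q := by rw [hR]; push_cast; ring
  obtain ⟨c, hc, hcov⟩ := exists_uniform_weight hY h
  set δ : ℝ := q ^ n - c / q with hδ
  have hδ0 : 0 < δ := by
    rw [hδ, sub_pos, div_lt_iff₀ hq, ← pow_succ]; exact hc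
  let S : Set ℝ := {w | ∃ Z F, Separator Y q R Z F ∧ w = ∑ p ∈ F, p.2 ^ n}
  have hSne : S.Nonempty := by
    obtain ⟨F, hF⟩ := Separator.self hY hq R
    exact ⟨_, Y, F, hF, rfl⟩
  have hSb : BddBelow S := by
    refine ⟨0, ?_⟩
    rintro w ⟨Z, F, hs, rfl⟩
    exact Finset.sum_nonneg fun p hp => pow_nonneg (hs.2.2.1.1 p hp).le n
  obtain ⟨w, ⟨Z, F, hs, rfl⟩, hw⟩ := exists_lt_of_csInf_lt hSne (lt_add_of_pos_right (sInf S) hδ0)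
  refine ⟨Z, F, hs, fun x hx => ?_⟩
  have hF := hs.2.2.1
  have hFq := hs.2.2.2.1
  obtain ⟨G, hG, hGc⟩ := hcov x (hs.2.1 hx)
  obtain ⟨t, ⟨hta, htb⟩, hGt⟩ := exists_sphere_weight_le x G hG.1 n
    (a := 4 * n * q + 2 * q) (b := R) (by rw [hR']; linarith)
  set G' := G.filter fun p => |t - dist x p.1| < p.2 with hG'
  have hGw : ∑ p ∈ G', p.2 ^ n ≤ c / q := by
    refine hGt.trans ?_
    have : R - (4 * n * q + 2 * q) = 2 * q := by rw [hR']; ring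
    rw [this, mul_div_mul_left _ _ two_ne_zero]
    exact div_le_div_of_nonneg_right hGc hq.le
  have hGq : ∀ p ∈ G, p.2 ≤ q := by
    intro p hp
    have h1 : p.2 ^ (n + 1) ≤ ∑ p ∈ G, p.2 ^ (n + 1) :=
      Finset.single_le_sum (f := fun p : X × ℝ => p.2 ^ (n + 1))
        (fun p hp => pow_nonneg (hG.1 p hp).le _) hp
    exact (lt_of_pow_lt_pow_left₀ (n + 1) hq.le (by linarith)).le
  have hcut := hs.cut hY.isClosed (x := x) (t := t) (G := G') htb ⟨?_, ?_⟩ ?_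
  rotate_left
  · exact fun p hp => hG.1 p (Finset.mem_filter.1 hp).1
  · rintro y ⟨hy, hyY⟩
    have hyt : dist y x = t := hy
    obtain ⟨p, hp, hyp⟩ := hG.2 y ⟨by rw [mem_closedBall, hyt]; exact htb.le, hyY⟩
    refine ⟨p, Finset.mem_filter.2 ⟨hp, lt_of_le_of_lt ?_ hyp⟩, hyp⟩
    rw [← hyt, dist_comm x p.1]
    exact abs_dist_sub_le y p.1 x
  · exact fun p hp => hGq p (Finset.mem_filter.1 hp).1
  have hmin := csInf_le hSb ⟨_, _, hcut, rfl⟩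
  have hunion : ∑ p ∈ F.filter (fun p => t ≤ dist p.1 x + p.2) ∪ G', p.2 ^ n ≤
      ∑ p ∈ F with t ≤ dist p.1 x + p.2, p.2 ^ n + ∑ p ∈ G', p.2 ^ n := by
    rw [← Finset.sum_union_inter]
    refine le_add_of_nonneg_right (Finset.sum_nonneg fun p hp => pow_nonneg ?_ n)
    exact (hG.1 p (Finset.mem_filter.1 (Finset.mem_inter.1 hp).2).1).le
  have hsplit := Finset.sum_filter_add_sum_filter_not F (fun p => t ≤ dist p.1 x + p.2)
    (fun p => p.2 ^ n)
  refine ⟨F.filter fun p => ¬ t ≤ dist p.1 x + p.2, ⟨?_, ?_⟩, by linarith⟩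
  · exact fun p hp => hF.1 p (Finset.mem_filter.1 hp).1
  · rintro y ⟨hy, hyZ⟩
    obtain ⟨p, hp, hyp⟩ := hF.2 y hyZ
    refine ⟨p, Finset.mem_filter.2 ⟨hp, not_le.2 ?_⟩, hyp⟩
    have h1 : dist y x ≤ 4 * n * q := hy
    have h2 := dist_triangle_left p.1 x y
    have h3 := hFq p hp
    linarith

lemma exists_open_cover_s3 {q : ℝ} (hq : 0 < q) (n : ℕ) : ∀ Y : Set X, IsCompact Y →
    (∀ x ∈ Y, ∃ F : Finset (X × ℝ), IsBallCover F (closedBall x (4 * n * q) ∩ Y) ∧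
      ∑ p ∈ F, p.2 ^ n < q ^ n) →
    ∃ 𝒰 : Set (Set X), 𝒰.Finite ∧
      (∀ U ∈ 𝒰, IsOpen U ∧ ∃ c, ∃ ρ < 4 * n * q, U ⊆ closedBall c ρ) ∧
      (∀ y, {U ∈ 𝒰 | y ∈ U}.encard ≤ n) ∧ Y ⊆ ⋃₀ 𝒰 := by
  induction n with
  | zero =>
    -- the weight `∑ ρ ^ 0` counts the balls, so a cover of weight `< 1` is empty
    intro Y _ h
    refine ⟨∅, finite_empty, by simp, by simp, fun x hx => ?_⟩
    obtain ⟨F, hF, hs⟩ := h x hx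
    obtain ⟨p, hp, -⟩ := hF.2 x ⟨by simp, hx⟩
    have : F = ∅ := by simpa using hs
    simp [this] at hp
  | succ n ih =>
    intro Y hY h
    obtain ⟨Z, F, ⟨hZ, hZY, -, -, 𝒱, hfin, h𝒱, hdis, hcov⟩, hthin⟩ :=
      exists_thin_separator hY hq h
    obtain ⟨𝒰, hfin', h𝒰, hmult, hcov'⟩ := ih Z (hY.of_isClosed_subset hZ hZY) hthin
    refine ⟨𝒰 ∪ 𝒱, hfin'.union hfin, ?_, fun y => ?_, fun y hy => ?_⟩
    · rintro U (hU | hU)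
      · obtain ⟨ho, c, ρ, hρ, hsub⟩ := h𝒰 U hU
        refine ⟨ho, c, ρ, hρ.trans ?_, hsub⟩
        push_cast
        linarith
      · exact h𝒱 U hU
    · have h1 : {U ∈ 𝒰 ∪ 𝒱 | y ∈ U} = {U ∈ 𝒰 | y ∈ U} ∪ {U ∈ 𝒱 | y ∈ U} := sep_union
      have h2 : {U ∈ 𝒱 | y ∈ U}.encard ≤ 1 :=
        encard_le_one_iff.2 fun V W hV hW => hdis y V hV.1 W hW.1 hV.2 hW.2
      rw [h1]
      push_cast
      exact (encard_union_le _ _).trans (add_le_add (hmult y) h2)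
    · rw [sUnion_union]
      by_cases hyZ : y ∈ Z
      · exact Or.inl (hcov' hyZ)
      · exact Or.inr (hcov ⟨hy, hyZ⟩)

end

/-- If `Y` is a compact subset of a metric space `X`, `n ≥ 1`, `r > 0`, and for every
closed ball `B` of radius `r` in `X` one has `HC_n(B ∩ Y) < (r/(4n))^n`, then
`UR_{n-1}(Y) < r`: there are `r' < r` and a finite covering of `Y` by sets open in `Y`,
each contained in a closed ball of `X` of radius `r'`, with multiplicity at most `n`. -/
theorem stmt3 {X : Type*} [MetricSpace X] (Y : Set X) (hY : IsCompact Y)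
    (n : ℕ) (hn : 1 ≤ n) (r : ℝ) (hr : 0 < r)
    (hball : ∀ x : X, HC (n : ℝ) (Metric.closedBall x r ∩ Y) <
      ENNReal.ofReal ((r / (4 * n)) ^ n)) :
    ∃ r' : ℝ, r' < r ∧ ∃ (k : ℕ) (U : Fin k → Set X),
      (∀ i, ∃ V : Set X, IsOpen V ∧ U i = V ∩ Y) ∧ (Y ⊆ ⋃ i, U i) ∧
      (∀ i, ∃ c : X, U i ⊆ Metric.closedBall c r') ∧
      (∀ x : X, {i | x ∈ U i}.encard ≤ n) := by
  have hn0 : (0 : ℝ) < n := by exact_mod_cast hn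
  have hq : 0 < r / (4 * n) := by positivity
  have hrq : 4 * n * (r / (4 * n)) = r := by field_simp
  obtain ⟨𝒰, hfin, h𝒰, hmult, hcov⟩ := exists_open_cover_s3 hq n Y hY (fun x _ => by
    rw [hrq]
    exact exists_ballCover_of_HC_lt (hY.inter_left isClosed_closedBall) (hball x))
  rw [hrq] at h𝒰
  obtain ⟨k, f, hf⟩ := hfin.fin_param
  have hfm : ∀ i, f i ∈ 𝒰 := fun i => by rw [← hf.2]; exact mem_range_self i
  choose c ρ hρ hsub using fun i => (h𝒰 (f i) (hfm i)).2
  -- a common radius `< r`; the value `r - 1` only serves the empty family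
  obtain ⟨r', hr', hle⟩ : ∃ r' < r, ∀ i, ρ i ≤ r' := by
    rcases isEmpty_or_nonempty (Fin k) with hk | hk
    · exact ⟨r - 1, by linarith, fun i => hk.elim i⟩
    · obtain ⟨i, hi⟩ := Finite.exists_max ρ
      exact ⟨ρ i, hρ i, hi⟩
  refine ⟨r', hr', k, fun i => f i ∩ Y, fun i => ⟨f i, (h𝒰 _ (hfm i)).1, rfl⟩, fun y hy => ?_,
    fun i => ⟨c i, inter_subset_left.trans ((hsub i).trans (closedBall_subset_closedBall (hle i)))⟩,
    fun x => ?_⟩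
  · obtain ⟨U, hU, hyU⟩ := hcov hy
    rw [← hf.2] at hU
    obtain ⟨i, rfl⟩ := hU
    exact mem_iUnion.2 ⟨i, hyU, hy⟩
  · rw [← hf.1.encard_image]
    refine (encard_le_encard ?_).trans (hmult x)
    rintro _ ⟨i, hi, rfl⟩
    exact ⟨hfm i, hi.1⟩
end

section
/- Let X be a compact metric space and n ≥ 1 an integer. Then UW_{n−1}(X) ≤ 8n·HC_n(X)^{1/n}; that is, for every ε > 0 there exists a finite covering of X by open sets, each of diameter at most 8n·HC_n(X)^{1/n} + ε, such that no n+1 of the covering sets have a common point. -/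
/-!
Fix a number `ρ` with `HC n X < ρ ^ n`. By compactness `X` is covered by finitely many open balls
`D i` of radii `r i` with `∑ r i ^ n < ρ ^ n`; in particular every `r i < ρ`. This family of balls
is kept fixed throughout.

Say that `Z` is thin in dimension `k` at scale `s` if, for every point `p`, the sum of `r i ^ k` over
the balls `D i` that meet both `Z` and `closedBall p s` is less than `ρ ^ k`. The key step
(`exists_separating_family`) removes from a `(k+1)`-thin set `Z` at scale `s` a family of pairwise
disjoint open sets, each inside a ball of radius `s`, so that the remaining set is `k`-thin at
scale `s - 4ρ`. The family is chosen to minimise the sum of `r i ^ k` over the balls meeting the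
remainder; the minimum exists since there are finitely many balls. Cutting a minimal family along
a sphere `S(p, t)` and adding the open ball `B(p, t)` does not decrease the cost, so the balls which
meet the remainder and lie inside `B(p, t)` cost no more than the balls which meet `Z ∩ S(p, t)`.
Averaging over `t ∈ [s - 2ρ, s]` (the coarea inequality, `exists_sphere_radius`) gives a `t` for which
the latter cost is less than `ρ ^ k`.

Starting from `X`, which is `n`-thin at scale `4nρ`, after `n` steps the remainder is `0`-thin at
scale `0`: no ball `D i` contains a point of it, so it is empty. The `n` disjoint families together
cover `X` with multiplicity at most `n` by sets of diameter at most `8nρ`, and `ρ` can be taken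
arbitrarily close to `HC n X ^ (1/n)`.
-/

open Metric Set
open scoped ENNReal NNReal

open MeasureTheory in
/-- Averaging over `t ∈ [s - 2ρ, s]`: each interval `[d i - r i, d i + r i]` has length `2 r i`,
hence a suitable `t` meets only intervals of small total weight `∑ r i ^ k`. -/
lemma exists_sphere_radius {ι : Type*} (T : Finset ι) (d r : ι → ℝ) (hr : ∀ i, 0 ≤ r i)
    (k : ℕ) (s ρ : ℝ) (hρ : 0 < ρ) (h : ∑ i ∈ T, r i ^ (k + 1) < ρ ^ (k + 1)) :
    ∃ t ∈ Icc (s - 2 * ρ) s,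
      ∑ i ∈ T with t ∈ Icc (d i - r i) (d i + r i), r i ^ k < ρ ^ k := by
  classical
  by_contra! hcon
  have h1 : ∫⁻ _ in Icc (s - 2 * ρ) s, ENNReal.ofReal (ρ ^ k) ≤
      ∫⁻ t in Icc (s - 2 * ρ) s, ∑ i ∈ T,
        (Icc (d i - r i) (d i + r i)).indicator (fun _ => ENNReal.ofReal (r i ^ k)) t := by
    refine setLIntegral_mono' measurableSet_Icc fun t ht => ?_
    refine (ENNReal.ofReal_le_ofReal (hcon t ht)).trans ?_
    rw [ENNReal.ofReal_sum_of_nonneg fun i _ => pow_nonneg (hr i) k, Finset.sum_filter]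
    simp only [Set.indicator_apply, le_refl]
  have h2 : ∫⁻ t in Icc (s - 2 * ρ) s, ∑ i ∈ T,
        (Icc (d i - r i) (d i + r i)).indicator (fun _ => ENNReal.ofReal (r i ^ k)) t ≤
      ∑ i ∈ T, ENNReal.ofReal (r i ^ k) * ENNReal.ofReal (2 * r i) := by
    refine (setLIntegral_le_lintegral _ _).trans ?_
    rw [lintegral_finsetSum _ fun i _ => measurable_const.indicator measurableSet_Icc]
    refine Finset.sum_le_sum fun i _ => ?_
    rw [lintegral_indicator_const measurableSet_Icc, Real.volume_Icc]
    apply le_of_eq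
    congr 2
    ring
  have h3 := h1.trans h2
  rw [setLIntegral_const, Real.volume_Icc, ← ENNReal.ofReal_mul (by positivity)] at h3
  simp only [← ENNReal.ofReal_mul (pow_nonneg (hr _) k)] at h3
  have hnn : ∀ i ∈ T, 0 ≤ r i ^ k * (2 * r i) := fun i _ =>
    mul_nonneg (pow_nonneg (hr i) k) (mul_nonneg zero_le_two (hr i))
  rw [← ENNReal.ofReal_sum_of_nonneg hnn,
    ENNReal.ofReal_le_ofReal_iff (Finset.sum_nonneg hnn)] at h3
  have h4 : ∑ i ∈ T, r i ^ k * (2 * r i) = 2 * ∑ i ∈ T, r i ^ (k + 1) := by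
    rw [Finset.mul_sum]
    exact Finset.sum_congr rfl fun i _ => by ring
  rw [h4] at h3
  have h5 : ρ ^ k * (s - (s - 2 * ρ)) = 2 * ρ ^ (k + 1) := by ring
  linarith

/-- The admissible families of pieces: finite families of pairwise disjoint open sets, each
contained in a closed ball of radius `s`. -/
def IsPieceFamily {X : Type*} [MetricSpace X] (s : ℝ) (𝒱 : Set (Set X)) : Prop :=
  𝒱.Finite ∧ (∀ V ∈ 𝒱, IsOpen V) ∧ (∀ V ∈ 𝒱, ∃ p, V ⊆ closedBall p s) ∧ 𝒱.PairwiseDisjoint id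

/-- Replacing the part of a piece family inside a closed ball by the open ball. -/
lemma IsPieceFamily.cut {X : Type*} [MetricSpace X] {s t : ℝ} {𝒱 : Set (Set X)}
    (h : IsPieceFamily s 𝒱) (p : X) (ht : t ≤ s) :
    IsPieceFamily s (insert (ball p t) ((fun V => V \ closedBall p t) '' 𝒱)) := by
  obtain ⟨hfin, hopen, hball, hdisj⟩ := h
  refine ⟨(hfin.image _).insert _, ?_, ?_, ?_⟩
  · rintro V (rfl | ⟨V, hV, rfl⟩)
    · exact isOpen_ball
    · exact (hopen V hV).sdiff isClosed_closedBall
  · rintro V (rfl | ⟨V, hV, rfl⟩)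
    · exact ⟨p, ball_subset_closedBall.trans (closedBall_subset_closedBall ht)⟩
    · obtain ⟨q, hq⟩ := hball V hV
      exact ⟨q, sdiff_subset.trans hq⟩
  · have key : ∀ V : Set X, Disjoint (ball p t) (V \ closedBall p t) := fun V =>
      Set.disjoint_left.2 fun x hx hx' => hx'.2 (ball_subset_closedBall hx)
    rintro V (rfl | ⟨V, hV, rfl⟩) W (rfl | ⟨W, hW, rfl⟩) hne
    · exact absurd rfl hne
    · exact key W
    · exact (key V).symm
    · have hVW : V ≠ W := by
        rintro rfl
        exact hne rfl
      exact (hdisj hV hW hVW).mono sdiff_subset sdiff_subset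

/-- `Z` is thin in dimension `k` at scale `s`, relative to the finite family of balls
`ball (c i) (r i)` and the bound `ρ`: around every point `p`, the balls meeting both `Z` and
`closedBall p s` have `∑ r i ^ k < ρ ^ k`. -/
def IsThin {X ι : Type*} [MetricSpace X] [Fintype ι] (c : ι → X) (r : ι → ℝ) (ρ : ℝ)
    (k : ℕ) (s : ℝ) (Z : Set X) : Prop :=
  open Classical in
  ∀ p, ∑ i with (ball (c i) (r i) ∩ Z).Nonempty ∧ (ball (c i) (r i) ∩ closedBall p s).Nonempty,
    r i ^ k < ρ ^ k

/-- A piece family minimising the `k`-dimensional cost of the remainder leaves a thin remainder. -/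
lemma exists_separating_family {X ι : Type*} [MetricSpace X] [Fintype ι] (c : ι → X) (r : ι → ℝ)
    (hr : ∀ i, 0 ≤ r i) (ρ : ℝ) (hρ : 0 < ρ) (hrρ : ∀ i, r i < ρ) (k : ℕ) (s : ℝ) (Z : Set X)
    (hZ : IsThin c r ρ (k + 1) s Z) :
    ∃ 𝒱, IsPieceFamily s 𝒱 ∧ IsThin c r ρ k (s - 4 * ρ) (Z \ ⋃₀ 𝒱) := by
  classical
  let J : Set (Set X) → Finset ι := fun 𝒱 =>
    {i | (ball (c i) (r i) ∩ (Z \ ⋃₀ 𝒱)).Nonempty}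
  obtain ⟨_, ⟨𝒱, h𝒱, rfl⟩, hmin⟩ := Set.exists_min_image (J '' {𝒱 | IsPieceFamily s 𝒱})
    (fun T => ∑ i ∈ T, r i ^ k) (Set.toFinite _)
    ⟨_, ∅, ⟨Set.finite_empty, by simp, by simp, by simp⟩, rfl⟩
  refine ⟨𝒱, h𝒱, fun p => ?_⟩
  obtain ⟨t, ⟨hts, hts'⟩, hsum⟩ := exists_sphere_radius _ (fun i => dist (c i) p) r hr k s ρ hρ (hZ p)
  have hle := hmin _ ⟨_, h𝒱.cut p hts', rfl⟩
  set 𝒱' := insert (ball p t) ((fun V => V \ closedBall p t) '' 𝒱)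
  set T : Finset ι := {i ∈ ({i | (ball (c i) (r i) ∩ Z).Nonempty ∧
    (ball (c i) (r i) ∩ closedBall p s).Nonempty} : Finset ι) |
      t ∈ Icc (dist (c i) p - r i) (dist (c i) p + r i)} with hT
  set A : Finset ι := {i | (ball (c i) (r i) ∩ (Z \ ⋃₀ 𝒱)).Nonempty ∧
    (ball (c i) (r i) ∩ closedBall p (s - 4 * ρ)).Nonempty} with hA
  replace hsum : ∑ i ∈ T, r i ^ k < ρ ^ k := by convert hsum
  suffices h : ∑ i ∈ A, r i ^ k < ρ ^ k by convert h
  have hAJ : A ⊆ J 𝒱 := fun i hi => by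
    simp only [hA, J, Finset.mem_filter, Finset.mem_univ, true_and] at hi ⊢
    exact hi.1
  -- After the cut, a ball meets the remainder either on the sphere or outside the closed ball;
  -- in the latter case it has radius less than `ρ` and cannot reach `closedBall p (s - 4 * ρ)`.
  have hsub : J 𝒱' ⊆ (J 𝒱 \ A) ∪ T := by
    intro i hi
    simp only [J, Finset.mem_filter, Finset.mem_univ, true_and] at hi
    obtain ⟨x, hxD, hxZ, hx𝒱⟩ := hi
    have hxt : t ≤ dist x p := by
      by_contra! hlt
      exact hx𝒱 ⟨_, Set.mem_insert _ _, hlt⟩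
    rw [mem_ball] at hxD
    rcases hxt.eq_or_lt with hxt | hxt
    · apply Finset.mem_union_right
      simp only [hT, Finset.mem_filter, Finset.mem_univ, true_and]
      refine ⟨⟨⟨x, hxD, hxZ⟩, x, hxD, ?_⟩, ?_, ?_⟩
      · rw [mem_closedBall]; linarith
      · linarith [dist_triangle (c i) x p, dist_comm x (c i)]
      · linarith [dist_triangle x (c i) p]
    · apply Finset.mem_union_left
      simp only [J, hA, Finset.mem_sdiff, Finset.mem_filter, Finset.mem_univ, true_and]
      refine ⟨⟨x, hxD, hxZ, ?_⟩, ?_⟩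
      · rintro ⟨V, hV, hxV⟩
        refine hx𝒱 ⟨_, Set.mem_insert_of_mem _ ⟨V, hV, rfl⟩, hxV, ?_⟩
        rw [mem_closedBall]; linarith
      · rintro ⟨-, y, hyD, hyp⟩
        rw [mem_ball] at hyD
        rw [mem_closedBall] at hyp
        linarith [dist_triangle x (c i) p, dist_triangle (c i) y p, dist_comm y (c i), hrρ i]
  have h1 : ∑ i ∈ J 𝒱', r i ^ k ≤ ∑ i ∈ J 𝒱 \ A, r i ^ k + ∑ i ∈ T, r i ^ k :=
    (Finset.sum_le_sum_of_subset_of_nonneg hsub fun i _ _ => pow_nonneg (hr i) k).trans <| by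
      rw [← Finset.sum_union_inter]
      exact le_add_of_nonneg_right (Finset.sum_nonneg fun i _ => pow_nonneg (hr i) k)
  have h2 := Finset.sum_sdiff (f := fun i => r i ^ k) hAJ
  linarith

/-- Iterating the separation step `k` times exhausts a thin set. -/
lemma exists_cover_of_isThin {X ι : Type*} [MetricSpace X] [Fintype ι] (c : ι → X) (r : ι → ℝ)
    (hr : ∀ i, 0 ≤ r i) (hcov : ∀ x, ∃ i, x ∈ ball (c i) (r i))
    (ρ : ℝ) (hρ : 0 < ρ) (hrρ : ∀ i, r i < ρ) (k : ℕ) :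
    ∀ Z : Set X, IsThin c r ρ k (4 * k * ρ) Z →
      ∃ 𝒰 : Set (Set X), 𝒰.Finite ∧ (∀ U ∈ 𝒰, IsOpen U) ∧
        (∀ U ∈ 𝒰, ediam U ≤ ENNReal.ofReal (8 * k * ρ)) ∧ Z ⊆ ⋃₀ 𝒰 ∧
        ∀ x, {U | U ∈ 𝒰 ∧ x ∈ U}.encard ≤ k := by
  classical
  induction k with
  | zero =>
    intro Z hZ
    refine ⟨∅, Set.finite_empty, by simp, by simp, fun p hp => ?_, by simp⟩
    exfalso
    have h := hZ p
    obtain ⟨i, hi⟩ := hcov p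
    -- With exponent `0` the sum counts the balls, so it has no terms; but `p` lies in one of them.
    simp only [pow_zero, Finset.sum_const, nsmul_eq_mul, mul_one, Nat.cast_lt_one,
      Finset.card_eq_zero] at h
    have : i ∈ (∅ : Finset ι) := by
      rw [← h, Finset.mem_filter]
      exact ⟨Finset.mem_univ _, ⟨p, hi, hp⟩, p, hi, by simp⟩
    simp at this
  | succ k ih =>
    intro Z hZ
    obtain ⟨𝒱, ⟨hfin, hopen, hball, hdisj⟩, hthin⟩ :=
      exists_separating_family c r hr ρ hρ hrρ k _ Z hZ
    have hs : 4 * ((k + 1 : ℕ) : ℝ) * ρ - 4 * ρ = 4 * k * ρ := by push_cast; ring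
    rw [hs] at hthin
    obtain ⟨𝒰, ufin, uopen, udiam, ucov, umult⟩ := ih _ hthin
    refine ⟨𝒱 ∪ 𝒰, hfin.union ufin, ?_, ?_, ?_, ?_⟩
    · rintro U (hU | hU)
      exacts [hopen U hU, uopen U hU]
    · rintro U (hU | hU)
      · obtain ⟨p, hp⟩ := hball U hU
        refine ediam_le fun x hx y hy => ?_
        rw [edist_dist]
        apply ENNReal.ofReal_le_ofReal
        have h1 := mem_closedBall.1 (hp hx)
        have h2 := mem_closedBall.1 (hp hy)
        linarith [dist_triangle x p y, dist_comm y p]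
      · refine (udiam U hU).trans (ENNReal.ofReal_le_ofReal ?_)
        push_cast
        nlinarith
    · intro x hx
      rw [Set.sUnion_union]
      by_cases hx𝒱 : x ∈ ⋃₀ 𝒱
      · exact Or.inl hx𝒱
      · exact Or.inr (ucov ⟨hx, hx𝒱⟩)
    · intro x
      have h1 : {U | U ∈ 𝒱 ∪ 𝒰 ∧ x ∈ U} = {U | U ∈ 𝒱 ∧ x ∈ U} ∪ {U | U ∈ 𝒰 ∧ x ∈ U} := by
        ext U
        simp [or_and_right]
      have h2 : {U | U ∈ 𝒱 ∧ x ∈ U}.encard ≤ 1 := by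
        rw [Set.encard_le_one_iff]
        rintro U V ⟨hU, hxU⟩ ⟨hV, hxV⟩
        by_contra hne
        exact Set.disjoint_left.1 (hdisj hU hV hne) hxU hxV
      rw [h1]
      refine (Set.encard_union_le _ _).trans ((add_le_add h2 (umult x)).trans ?_)
      push_cast
      rw [add_comm]

/-- In a compact space, the coverings by countably many closed balls defining `HC` can be replaced
by finite coverings by slightly larger open balls. -/
lemma exists_finite_ball_cover.{u} {X : Type u} [MetricSpace X] [CompactSpace X] (n : ℕ)
    (ρ : ℝ) (hρ : 0 < ρ)
    (h : HC (n : ℝ) (Set.univ : Set X) < ENNReal.ofReal (ρ ^ n)) :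
    ∃ (ι : Type u) (_ : Fintype ι) (c : ι → X) (r : ι → ℝ), (∀ i, 0 ≤ r i) ∧
      (∀ x, ∃ i, x ∈ ball (c i) (r i)) ∧ ∑ i, r i ^ n < ρ ^ n := by
  simp only [HC, iInf_lt_iff] at h
  obtain ⟨S, hS, hcov, hsum⟩ := h
  have := hS.to_subtype
  simp only [ENNReal.rpow_natCast] at hsum
  obtain ⟨δ, hδ, hδsum⟩ := ENNReal.exists_pos_sum_of_countable
    (tsub_pos_of_lt hsum).ne' S
  have hex : ∀ p : S, ∃ q : ℝ≥0, p.1.2 < q ∧ q ^ n < p.1.2 ^ n + δ p := by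
    intro p
    have hc : ContinuousAt (fun q : ℝ≥0 => q ^ n) p.1.2 := (continuous_pow n).continuousAt
    have hev : ∀ᶠ q in nhds p.1.2, q ^ n < p.1.2 ^ n + δ p :=
      hc.eventually_lt_const (lt_add_of_pos_right _ (hδ p))
    obtain ⟨q, hq, hq'⟩ := ((hev.filter_mono nhdsWithin_le_nhds).and
      (self_mem_nhdsWithin (s := Set.Ioi p.1.2))).exists
    exact ⟨q, hq', hq⟩
  choose q hq hqn using hex
  obtain ⟨T, hT⟩ := isCompact_univ.elim_finite_subcover (fun p : S => ball p.1.1 (q p : ℝ))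
    (fun _ => isOpen_ball) (fun x hx => by
      have hx' := hcov hx
      simp only [Set.mem_iUnion] at hx' ⊢
      obtain ⟨p, hp, hxp⟩ := hx'
      exact ⟨⟨p, hp⟩, closedBall_subset_ball (NNReal.coe_lt_coe.2 (hq ⟨p, hp⟩)) hxp⟩)
  refine ⟨T, inferInstance, fun p => p.1.1.1, fun p => q p.1, fun p => NNReal.coe_nonneg _, ?_, ?_⟩
  · intro x
    have hx := hT (Set.mem_univ x)
    simp only [Set.mem_iUnion] at hx
    obtain ⟨p, hp, hxp⟩ := hx
    exact ⟨⟨p, hp⟩, hxp⟩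
  · have h1 : (∑ p ∈ T, (q p : ℝ≥0∞) ^ n) < ENNReal.ofReal (ρ ^ n) := by
      calc (∑ p ∈ T, (q p : ℝ≥0∞) ^ n) ≤ ∑' p, (q p : ℝ≥0∞) ^ n := ENNReal.sum_le_tsum T
        _ ≤ ∑' p : S, ((p.1.2 : ℝ≥0∞) ^ n + δ p) :=
            ENNReal.tsum_le_tsum fun p => by exact_mod_cast (hqn p).le
        _ = (∑' p : S, (p.1.2 : ℝ≥0∞) ^ n) + ∑' p, (δ p : ℝ≥0∞) := ENNReal.tsum_add
        _ < ENNReal.ofReal (ρ ^ n) := lt_tsub_iff_left.1 hδsum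
    have h2 : (∑ p ∈ T, (q p : ℝ≥0∞) ^ n) = ENNReal.ofReal (∑ p ∈ T, (q p : ℝ) ^ n) := by
      rw [ENNReal.ofReal_sum_of_nonneg fun i _ => by positivity]
      exact Finset.sum_congr rfl fun p _ => by
        rw [ENNReal.ofReal_pow (NNReal.coe_nonneg _), ENNReal.ofReal_coe_nnreal]
    rw [h2, ENNReal.ofReal_lt_ofReal_iff (by positivity)] at h1
    rw [← Finset.sum_coe_sort] at h1
    exact h1

/-- For a compact metric space `X` and integer `n ≥ 1`, `UW_{n-1}(X) ≤ 8n·HC_n(X)^{1/n}`: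
for every `ε > 0` there is a finite open covering of `X` by sets of diameter at most
`8n·HC_n(X)^{1/n} + ε` with multiplicity at most `n`. -/
theorem stmt4 {X : Type*} [MetricSpace X] [CompactSpace X] (n : ℕ) (hn : 1 ≤ n) :
    ∀ ε : ℝ, 0 < ε → ∃ (k : ℕ) (U : Fin k → Set X),
      (∀ i, IsOpen (U i)) ∧ (∀ x : X, ∃ i, x ∈ U i) ∧
      (∀ i, EMetric.diam (U i) ≤
        (8 * n : ℝ≥0∞) * HC (n : ℝ) (Set.univ : Set X) ^ ((n : ℝ)⁻¹) + ENNReal.ofReal ε) ∧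
      (∀ x : X, {i | x ∈ U i}.encard ≤ n) := by
  classical
  intro ε hε
  have hn0 : (0 : ℝ) < n := by exact_mod_cast hn
  by_cases htop : HC (n : ℝ) (Set.univ : Set X) = ⊤
  -- The bound is then infinite and the covering by `X` alone suffices.
  · refine ⟨1, fun _ => Set.univ, fun _ => isOpen_univ, fun x => ⟨0, trivial⟩, fun i => ?_,
      fun x => ?_⟩
    · rw [htop, ENNReal.top_rpow_of_pos (inv_pos.2 hn0), ENNReal.mul_top, top_add]
      · exact le_top
      · simp; omega
    · refine (Set.encard_le_encard (Set.subset_univ _)).trans ?_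
      simp only [Set.encard_univ, ENat.card_eq_coe_fintype_card, Fintype.card_fin]
      exact_mod_cast hn
  set H := HC (n : ℝ) (Set.univ : Set X) with hH
  have hroot : H ^ ((n : ℝ)⁻¹) ≠ ⊤ := ENNReal.rpow_ne_top_of_nonneg (by positivity) htop
  set a : ℝ := (H ^ ((n : ℝ)⁻¹)).toReal with ha
  have ha0 : 0 ≤ a := ENNReal.toReal_nonneg
  have haH : H ^ ((n : ℝ)⁻¹) = ENNReal.ofReal a := (ENNReal.ofReal_toReal hroot).symm
  set ρ : ℝ := a + ε / (8 * n) with hρdef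
  have hρ : 0 < ρ := by positivity
  have hlt : H < ENNReal.ofReal (ρ ^ n) := by
    have h1 : H = ENNReal.ofReal (a ^ n) := by
      rw [ENNReal.ofReal_pow ha0, ← haH, ← ENNReal.rpow_natCast, ENNReal.rpow_inv_rpow hn0.ne']
    rw [h1]
    refine (ENNReal.ofReal_lt_ofReal_iff (by positivity)).2 ?_
    have : a < ρ := lt_add_of_pos_right _ (by positivity)
    exact pow_lt_pow_left₀ this ha0 (by omega)
  obtain ⟨ι, _, c, r, hr, hcov, hsum⟩ := exists_finite_ball_cover n ρ hρ hlt
  have hrρ : ∀ i, r i < ρ := fun i => by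
    refine lt_of_pow_lt_pow_left₀ n hρ.le (lt_of_le_of_lt ?_ hsum)
    exact Finset.single_le_sum (f := fun i => r i ^ n) (fun j _ => pow_nonneg (hr j) n)
      (Finset.mem_univ i)
  have hthin : IsThin c r ρ n (4 * n * ρ) (Set.univ : Set X) := fun p =>
    lt_of_le_of_lt (Finset.sum_le_sum_of_subset_of_nonneg (Finset.subset_univ _)
      fun i _ _ => pow_nonneg (hr i) n) hsum
  obtain ⟨𝒰, ufin, uopen, udiam, ucov, umult⟩ :=
    exists_cover_of_isThin c r hr hcov ρ hρ hrρ n _ hthin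
  have := ufin.fintype
  let e := (Fintype.equivFin 𝒰).symm
  refine ⟨Fintype.card 𝒰, fun i => (e i).1, fun i => uopen _ (e i).2, fun x => ?_, fun i => ?_,
    fun x => ?_⟩
  · obtain ⟨U, hU, hxU⟩ := ucov (Set.mem_univ x)
    exact ⟨e.symm ⟨U, hU⟩, by simpa using hxU⟩
  · refine (udiam _ (e i).2).trans (le_of_eq ?_)
    have h8 : (8 * n : ℝ≥0∞) = ENNReal.ofReal (8 * n) := by
      rw [ENNReal.ofReal_mul (by norm_num), ENNReal.ofReal_natCast]
      norm_num
    rw [haH, h8, ← ENNReal.ofReal_mul (by positivity),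
      ← ENNReal.ofReal_add (by positivity) hε.le]
    congr 1
    rw [hρdef]
    field_simp
  · have hinj : Function.Injective fun i => (e i).1 := Subtype.val_injective.comp e.injective
    rw [← hinj.encard_image]
    refine (Set.encard_le_encard ?_).trans (umult x)
    rintro _ ⟨i, hi, rfl⟩
    exact ⟨(e i).2, hi⟩
end

section
/- (Coarea inequality for Hausdorff content.) Let m > 0 and 0 ≤ r₁ < r₂ be real numbers, X a metric space, Y a subset of X, and x a point of X. Let B₁ and B₂ be the closed metric balls of radii r₁ and r₂ centered at x, let A = B₂ ∖ B₁, and for s ∈ (r₁, r₂) let S_s = {y ∈ X : d(x,y) = s}. Then there exists s ∈ (r₁, r₂) such that HC_{m−1}(S_s ∩ Y) ≤ (2/(r₂ − r₁))·HC_m(A ∩ Y). -/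
/-!
Fix a countable covering of the annulus by balls `B(p, r)`. For each `s ∈ (r₁, r₂)` the balls whose
shadow `[d(x,p) - r, d(x,p) + r]` contains `s` cover the sphere of radius `s`, so
`HC_{m-1}(S_s ∩ Y)` is at most `g(s) = ∑ r^(m-1) · 1_{[d(x,p)-r, d(x,p)+r]}(s)` (`HC_sphere_le`).
The shadow has length `2r`, so `∫ g ≤ 2 ∑ r^m` (`lintegral_sphereBound_le`).

To get the inequality without an error term at a single `s`, take a sequence of coverings whose
sums tend to `HC_m(A ∩ Y)`, and let `G` be the pointwise infimum of the corresponding functions `g`.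
Then `G` is measurable, bounds `HC_{m-1}(S_s ∩ Y)` at every `s`, and has integral at most
`2 HC_m(A ∩ Y)`; some value of `G` on `(r₁, r₂)` does not exceed its average. Averaging `G` avoids
the question whether `s ↦ HC_{m-1}(S_s ∩ Y)` is itself measurable.
-/

open Metric Set
open scoped ENNReal NNReal

/-- The radii `s` of spheres about `x` that the ball `p = (center, radius)` can meet, by the
triangle inequality. -/
def shadow {X : Type*} [MetricSpace X] (x : X) (p : X × ℝ≥0) : Set ℝ :=
  Icc (dist x p.1 - p.2) (dist x p.1 + p.2)

/-- The sum of `r ^ (m - 1)` over the balls of the family `S` whose shadow contains `s`. -/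
noncomputable def sphereBound {X : Type*} [MetricSpace X] (m : ℝ) (x : X)
    (S : Set (X × ℝ≥0)) (s : ℝ) : ℝ≥0∞ :=
  ∑' p : S, (shadow x p.1).indicator (fun _ => ((p : X × ℝ≥0).2 : ℝ≥0∞) ^ (m - 1)) s

lemma measurable_sphereBound {X : Type*} [MetricSpace X] (m : ℝ) (x : X)
    (S : Set (X × ℝ≥0)) (hS : S.Countable) : Measurable (sphereBound m x S) := by
  have := hS.to_subtype
  exact Measurable.tsum fun p => measurable_const.indicator measurableSet_Icc

lemma lintegral_sphereBound_le {X : Type*} [MetricSpace X] (m : ℝ) (x : X)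
    (S : Set (X × ℝ≥0)) (hS : S.Countable) (I : Set ℝ) :
    ∫⁻ s in I, sphereBound m x S s ≤ 2 * ∑' p : S, ((p : X × ℝ≥0).2 : ℝ≥0∞) ^ m := by
  have := hS.to_subtype
  refine (MeasureTheory.setLIntegral_le_lintegral _ _).trans ?_
  unfold sphereBound shadow
  rw [MeasureTheory.lintegral_tsum
    fun p => (measurable_const.indicator measurableSet_Icc).aemeasurable, ← ENNReal.tsum_mul_left]
  refine ENNReal.tsum_le_tsum fun p => ?_
  rw [MeasureTheory.lintegral_indicator_const measurableSet_Icc, Real.volume_Icc]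
  obtain ⟨⟨c, r⟩, hp⟩ := p
  have h2 : dist x c + (r : ℝ) - (dist x c - r) = ((2 * r : ℝ≥0) : ℝ) := by push_cast; ring
  simp only [h2, ENNReal.ofReal_coe_nnreal]
  -- For `r = 0` the factor `0 ^ (m - 1)` may be `∞`, but it is multiplied by measure zero.
  rcases eq_or_ne r 0 with rfl | hr
  · simp
  · have hr' : (r : ℝ≥0∞) ≠ 0 := by simpa using hr
    rw [ENNReal.rpow_sub _ _ hr' ENNReal.coe_ne_top, ENNReal.rpow_one, ENNReal.coe_mul,
      mul_left_comm, ENNReal.div_mul_cancel hr' ENNReal.coe_ne_top]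
    simp

lemma HC_sphere_le {X : Type*} [MetricSpace X] (m : ℝ) (x : X)
    (S : Set (X × ℝ≥0)) (hS : S.Countable) (s : ℝ) (E : Set X)
    (hE : {y : X | dist x y = s} ∩ E ⊆ ⋃ p ∈ S, Metric.closedBall p.1 (p.2 : ℝ)) :
    HC (m - 1) ({y : X | dist x y = s} ∩ E) ≤ sphereBound m x S s := by
  have key : sphereBound m x S s =
      ∑' p : ({p ∈ S | s ∈ shadow x p} : Set (X × ℝ≥0)),
        ((p : X × ℝ≥0).2 : ℝ≥0∞) ^ (m - 1) := by
    unfold sphereBound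
    rw [tsum_subtype S (fun p : X × ℝ≥0 =>
        (shadow x p).indicator (fun _ => (p.2 : ℝ≥0∞) ^ (m - 1)) s),
      tsum_subtype {p ∈ S | s ∈ shadow x p} (fun p : X × ℝ≥0 => (p.2 : ℝ≥0∞) ^ (m - 1))]
    congr 1
    ext p
    by_cases h1 : p ∈ S <;> by_cases h2 : s ∈ shadow x p <;> simp [h1, h2]
  rw [key]
  refine iInf_le_of_le _ (iInf₂_le_of_le (hS.mono (sep_subset _ _)) ?_ le_rfl)
  intro y hy
  obtain ⟨p, hp, hyp⟩ := mem_iUnion₂.1 (hE hy)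
  refine mem_iUnion₂.2 ⟨p, ⟨hp, ?_⟩, hyp⟩
  have hs : dist x y = s := hy.1
  rw [mem_closedBall] at hyp
  have h1 := dist_triangle x y p.1
  have h2 := dist_triangle x p.1 y
  rw [dist_comm p.1 y] at h2
  exact ⟨by linarith, by linarith⟩

/-- Coarea inequality for Hausdorff content: for `m > 0`, `0 ≤ r₁ < r₂`, a subset `Y` of a
metric space `X` and a point `x`, there exists `s ∈ (r₁, r₂)` such that
`HC_{m−1}(S(x,s) ∩ Y) ≤ (2/(r₂−r₁))·HC_m((B(x,r₂) ∖ B(x,r₁)) ∩ Y)`. -/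
theorem stmt5 {X : Type*} [MetricSpace X] (m : ℝ) (hm : 0 < m)
    (r₁ r₂ : ℝ) (hr₁ : 0 ≤ r₁) (h₁₂ : r₁ < r₂) (Y : Set X) (x : X) :
    ∃ s ∈ Set.Ioo r₁ r₂,
      HC (m - 1) ({y : X | dist x y = s} ∩ Y) ≤
        ENNReal.ofReal (2 / (r₂ - r₁)) *
          HC m ((Metric.closedBall x r₂ \ Metric.closedBall x r₁) ∩ Y) := by
  set A := (Metric.closedBall x r₂ \ Metric.closedBall x r₁) ∩ Y with hA
  have hpos : 0 < r₂ - r₁ := sub_pos.2 h₁₂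
  by_cases htop : HC m A = ⊤
  · obtain ⟨s, hs⟩ := nonempty_Ioo.2 h₁₂
    refine ⟨s, hs, ?_⟩
    rw [htop, ENNReal.mul_top (by simpa using hpos)]
    exact le_top
  have hcov : ∀ n : ℕ, ∃ S : Set (X × ℝ≥0), S.Countable ∧
      A ⊆ (⋃ p ∈ S, Metric.closedBall p.1 (p.2 : ℝ)) ∧
      ∑' p : S, ((p : X × ℝ≥0).2 : ℝ≥0∞) ^ m < HC m A + (n : ℝ≥0∞)⁻¹ := by
    intro n
    have hlt : HC m A < HC m A + (n : ℝ≥0∞)⁻¹ := ENNReal.lt_add_right htop (by simp)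
    conv_lhs at hlt => unfold HC
    simp only [iInf_lt_iff] at hlt
    obtain ⟨S, h1, h2, h3⟩ := hlt
    exact ⟨S, h1, h2, h3⟩
  choose S hSc hSA hSlt using hcov
  set G : ℝ → ℝ≥0∞ := fun s => ⨅ n, sphereBound m x (S n) s with hG
  have hGm : Measurable G := Measurable.iInf fun n => measurable_sphereBound m x (S n) (hSc n)
  have hint : ∫⁻ s in Ioo r₁ r₂, G s ≤ 2 * HC m A := by
    have hn : ∀ n : ℕ, ∫⁻ s in Ioo r₁ r₂, G s ≤ 2 * (HC m A + (n : ℝ≥0∞)⁻¹) := fun n =>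
      (MeasureTheory.lintegral_mono fun s => iInf_le _ n).trans
        ((lintegral_sphereBound_le m x (S n) (hSc n) _).trans (by gcongr; exact (hSlt n).le))
    have hlim : Filter.Tendsto (fun n : ℕ => 2 * (HC m A + (n : ℝ≥0∞)⁻¹)) Filter.atTop
        (nhds (2 * (HC m A + 0))) :=
      ENNReal.Tendsto.const_mul
        (tendsto_const_nhds.add ENNReal.tendsto_inv_nat_nhds_zero) (Or.inr (by simp))
    rw [add_zero] at hlim
    exact ge_of_tendsto' hlim hn
  have hvol : MeasureTheory.volume (Ioo r₁ r₂) = ENNReal.ofReal (r₂ - r₁) := Real.volume_Ioo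
  obtain ⟨s, hs, hGs⟩ := MeasureTheory.exists_le_setLAverage (μ := MeasureTheory.volume)
    (s := Ioo r₁ r₂) (f := G) (by rw [hvol]; simpa using hpos) (by rw [hvol]; simp)
    hGm.aemeasurable
  refine ⟨s, hs, ?_⟩
  have hle : HC (m - 1) ({y : X | dist x y = s} ∩ Y) ≤ G s := by
    refine le_iInf fun n => HC_sphere_le m x (S n) (hSc n) s Y (Subset.trans ?_ (hSA n))
    rintro y ⟨hy, hyY⟩
    have hy' : dist y x = s := by rw [dist_comm]; exact hy
    refine ⟨⟨?_, ?_⟩, hyY⟩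
    · rw [mem_closedBall, hy']; exact hs.2.le
    · rw [mem_closedBall, hy', not_le]; exact hs.1
  refine hle.trans (hGs.trans ?_)
  rw [MeasureTheory.setLAverage_eq, hvol, ENNReal.ofReal_div_of_pos hpos]
  refine (ENNReal.div_le_div_right hint _).trans (le_of_eq ?_)
  simp only [div_eq_mul_inv, ENNReal.ofReal_ofNat]
  ring
end

section
/- Let m > 0 and r > 0 be real numbers, X a metric space, Y a subset of X, and x a point of X. Let B be the closed metric ball of radius r centered at x, and for s ∈ (0, r) let S_s = {y ∈ X : d(x,y) = s}. Then there exists s ∈ (0, r) such that HC_{m−1}(S_s ∩ Y) ≤ (2/r)·HC_m(B ∩ Y). -/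
/-!
This is the coarea (averaging) argument. A ball `B(p, ρ)` meets the sphere `S(x, s)` only for `s` in
the interval `[d(x,p) - ρ, d(x,p) + ρ]`, of length `2ρ`. Hence, for a covering of `B(x, r) ∩ Y` by balls
of radii `ρ_i`, the balls meeting `S(x, s)` give an upper bound `sliceSum s` for
`HC_{m-1}(S(x, s) ∩ Y)` whose integral over `s` is at most `∑ 2 ρ_i * ρ_i ^ (m-1) = 2 ∑ ρ_i ^ m`
(`lintegral_sliceSum_le`).

The infimum `g` of these bounds along a minimizing sequence of coverings is measurable, dominates
`HC_{m-1}(S(x, s) ∩ Y)` and has integral at most `2 HC_m(B(x, r) ∩ Y)`; so at some `s ∈ (0, r)` it does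
not exceed its average over `(0, r)`. Working with `g` avoids both the possible non-measurability of
the content of the slices and any loss of an `ε` in the inequality.
-/

open Metric Set
open scoped ENNReal NNReal

open MeasureTheory

/-- The `(m-1)`-dimensional cost `∑ ρ ^ (m-1)` of those balls `B(p, ρ)` of the family `S` for which
`s ∈ [d(x,p) - ρ, d(x,p) + ρ]`, as a function of `s`. -/
noncomputable def sliceSum {X : Type*} [MetricSpace X] (m : ℝ) (x : X) (S : Set (X × ℝ≥0))
    (s : ℝ) : ℝ≥0∞ :=
  ∑' p : S, (Icc (dist x (p : X × ℝ≥0).1 - (p : X × ℝ≥0).2)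
    (dist x (p : X × ℝ≥0).1 + (p : X × ℝ≥0).2)).indicator
      (fun _ => ((p : X × ℝ≥0).2 : ℝ≥0∞) ^ (m - 1)) s

lemma measurable_sliceSum {X : Type*} [MetricSpace X] (m : ℝ) (x : X) {S : Set (X × ℝ≥0)}
    (hS : S.Countable) : Measurable (sliceSum m x S) := by
  have := hS.to_subtype
  exact Measurable.tsum fun p => measurable_const.indicator measurableSet_Icc

lemma lintegral_sliceSum_le {X : Type*} [MetricSpace X] (m : ℝ) (x : X)
    {S : Set (X × ℝ≥0)} (hS : S.Countable) (r : ℝ) :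
    ∫⁻ s in Ioo 0 r, sliceSum m x S s ≤ 2 * ∑' p : S, ((p : X × ℝ≥0).2 : ℝ≥0∞) ^ m := by
  have := hS.to_subtype
  refine (setLIntegral_le_lintegral _ _).trans ?_
  unfold sliceSum
  rw [lintegral_tsum fun p => (measurable_const.indicator measurableSet_Icc).aemeasurable,
    ← ENNReal.tsum_mul_left]
  refine ENNReal.tsum_le_tsum fun p => ?_
  obtain ⟨⟨c, ρ⟩, hp⟩ := p
  rw [lintegral_indicator_const measurableSet_Icc, Real.volume_Icc]
  have hlen : dist x c + (ρ : ℝ) - (dist x c - ρ) = 2 * ρ := by ring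
  simp only [hlen]
  rw [ENNReal.ofReal_mul zero_le_two, ENNReal.ofReal_coe_nnreal, ENNReal.ofReal_ofNat]
  -- For `ρ = 0` the weight `0 ^ (m - 1)` may be `∞`, but the interval is then a null set and `∞ * 0 = 0`.
  rcases eq_or_ne ρ 0 with rfl | hρ
  · simp
  · have h0 : (ρ : ℝ≥0∞) ≠ 0 := by simpa using hρ
    refine le_of_eq ?_
    calc (ρ : ℝ≥0∞) ^ (m - 1) * (2 * ρ) = 2 * ((ρ : ℝ≥0∞) ^ (m - 1) * (ρ : ℝ≥0∞) ^ (1 : ℝ)) := by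
          rw [ENNReal.rpow_one]; ring
      _ = 2 * (ρ : ℝ≥0∞) ^ m := by
          rw [← ENNReal.rpow_add _ _ h0 ENNReal.coe_ne_top]; simp

lemma HC_sphere_le_sliceSum {X : Type*} [MetricSpace X] (m : ℝ) (x : X) {S : Set (X × ℝ≥0)}
    (hS : S.Countable) {r s : ℝ} (hs : s ≤ r) {Y : Set X}
    (hcov : closedBall x r ∩ Y ⊆ ⋃ p ∈ S, closedBall p.1 (p.2 : ℝ)) :
    HC (m - 1) ({y : X | dist x y = s} ∩ Y) ≤ sliceSum m x S s := by
  set U : Set (X × ℝ≥0) := {p | s ∈ Icc (dist x p.1 - p.2) (dist x p.1 + p.2)} with hU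
  have hcov' : {y : X | dist x y = s} ∩ Y ⊆ ⋃ p ∈ S ∩ U, closedBall p.1 (p.2 : ℝ) := by
    rintro y ⟨hy, hyY⟩
    have hy' : dist x y = s := hy
    have hyB : y ∈ closedBall x r := by rw [mem_closedBall, dist_comm, hy']; exact hs
    obtain ⟨p, hpS, hp⟩ := mem_iUnion₂.1 (hcov ⟨hyB, hyY⟩)
    refine mem_iUnion₂.2 ⟨p, ⟨hpS, ?_⟩, hp⟩
    rw [mem_closedBall] at hp
    have h1 := dist_triangle x y p.1
    have h2 := dist_triangle x p.1 y
    rw [dist_comm p.1 y] at h2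
    constructor <;> linarith
  have hle : HC (m - 1) ({y : X | dist x y = s} ∩ Y) ≤
      ∑' p : ↥(S ∩ U), ((p : X × ℝ≥0).2 : ℝ≥0∞) ^ (m - 1) := by
    unfold HC
    exact iInf_le_of_le (S ∩ U) (iInf₂_le (hS.mono inter_subset_left) hcov')
  refine hle.trans (le_of_eq ?_)
  unfold sliceSum
  rw [tsum_subtype (S ∩ U) fun p => (p.2 : ℝ≥0∞) ^ (m - 1),
    tsum_subtype S fun p : X × ℝ≥0 => (Icc (dist x p.1 - p.2) (dist x p.1 + p.2)).indicator
      (fun _ => (p.2 : ℝ≥0∞) ^ (m - 1)) s]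
  refine tsum_congr fun p => ?_
  rw [← indicator_indicator]
  rfl

/-- Coarea inequality for Hausdorff content, ball version: for `m > 0`, `r > 0`, a subset
`Y` of a metric space `X` and a point `x`, there exists `s ∈ (0, r)` such that
`HC_{m−1}(S(x,s) ∩ Y) ≤ (2/r)·HC_m(B(x,r) ∩ Y)`. -/
theorem stmt6 {X : Type*} [MetricSpace X] (m : ℝ) (hm : 0 < m)
    (r : ℝ) (hr : 0 < r) (Y : Set X) (x : X) :
    ∃ s ∈ Set.Ioo 0 r,
      HC (m - 1) ({y : X | dist x y = s} ∩ Y) ≤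
        ENNReal.ofReal (2 / r) * HC m (Metric.closedBall x r ∩ Y) := by
  set H := HC m (closedBall x r ∩ Y) with hH
  rcases eq_or_ne H ⊤ with hT | hT
  · refine ⟨r / 2, ⟨by linarith, by linarith⟩, ?_⟩
    have : ENNReal.ofReal (2 / r) ≠ 0 := by
      rw [Ne, ENNReal.ofReal_eq_zero, not_le]; positivity
    rw [hT, ENNReal.mul_top this]
    exact le_top
  have hex : ∀ n : ℕ, ∃ S : Set (X × ℝ≥0), S.Countable ∧
      closedBall x r ∩ Y ⊆ ⋃ p ∈ S, closedBall p.1 (p.2 : ℝ) ∧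
      ∑' p : S, ((p : X × ℝ≥0).2 : ℝ≥0∞) ^ m < H + (n : ℝ≥0∞)⁻¹ := by
    intro n
    have hlt : H < H + (n : ℝ≥0∞)⁻¹ :=
      ENNReal.lt_add_right hT (ENNReal.inv_ne_zero.2 (ENNReal.natCast_ne_top n))
    conv_lhs at hlt => rw [hH, HC]
    simpa only [iInf_lt_iff, exists_prop] using hlt
  choose S hS hcov hsum using hex
  have hmeas : Measurable fun s => ⨅ n, sliceSum m x (S n) s :=
    Measurable.iInf fun n => measurable_sliceSum m x (hS n)
  have hint : ∫⁻ s in Ioo 0 r, ⨅ n, sliceSum m x (S n) s ≤ 2 * H := by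
    have hle : ∀ n : ℕ, ∫⁻ s in Ioo 0 r, ⨅ n, sliceSum m x (S n) s ≤ 2 * (H + (n : ℝ≥0∞)⁻¹) :=
      fun n => (lintegral_mono fun s => iInf_le _ n).trans <|
        (lintegral_sliceSum_le m x (hS n) r).trans (by gcongr; exact (hsum n).le)
    have hlim : Filter.Tendsto (fun n : ℕ => 2 * (H + (n : ℝ≥0∞)⁻¹)) Filter.atTop
        (nhds (2 * (H + 0))) :=
      ENNReal.Tendsto.const_mul (tendsto_const_nhds.add ENNReal.tendsto_inv_nat_nhds_zero)
        (Or.inr ENNReal.ofNat_ne_top)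
    rw [add_zero] at hlim
    exact ge_of_tendsto' hlim hle
  have hvol : volume (Ioo 0 r) = ENNReal.ofReal r := by simp
  obtain ⟨s, hs, hle⟩ := exists_le_setLAverage (μ := volume) (s := Ioo 0 r)
    (by rw [hvol, Ne, ENNReal.ofReal_eq_zero, not_le]; exact hr)
    (by rw [hvol]; exact ENNReal.ofReal_ne_top) hmeas.aemeasurable
  refine ⟨s, hs, ?_⟩
  calc HC (m - 1) ({y : X | dist x y = s} ∩ Y)
      ≤ ⨅ n, sliceSum m x (S n) s :=
        le_iInf fun n => HC_sphere_le_sliceSum m x (hS n) hs.2.le (hcov n)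
    _ ≤ (∫⁻ s in Ioo 0 r, ⨅ n, sliceSum m x (S n) s) / ENNReal.ofReal r := by
        rwa [setLAverage_eq, hvol] at hle
    _ ≤ 2 * H / ENNReal.ofReal r := by gcongr
    _ = ENNReal.ofReal (2 / r) * H := by
        rw [ENNReal.ofReal_div_of_pos hr, ENNReal.ofReal_ofNat, div_eq_mul_inv, div_eq_mul_inv]
        ring
end

section
/- Let X be a metric space, Y a subset of X, and r > 0. Assume that every closed metric ball B of radius r in X satisfies HC_1(B ∩ Y) < r/2. Then UR_0(Y) < r; more precisely, for every x ∈ Y there exists ρ ∈ (0, r) such that the connected component of Y containing x is contained in the open metric ball of radius ρ centered at x. -/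
/-!
The distance function `y ↦ dist y x` is 1-Lipschitz, so it maps a covering of
`closedBall x r ∩ Y` by balls with `∑ r_i < r / 2` to a covering of its image by intervals of
total length `∑ 2 * r_i < r`. These cannot cover `(0, r)`, so some `ρ ∈ (0, r)` is not a distance
from `x` to a point of `Y`. The connected component of `x` in `Y` has connected image in `ℝ`
containing `0` and missing `ρ`, hence it stays in `ball x ρ`.
-/

open Metric Set
open scoped ENNReal NNReal

/-- If `Y ⊆ X` and every closed ball of radius `r` in `X` satisfies
`HC_1(B ∩ Y) < r/2`, then `UR_0(Y) < r`: for every `x ∈ Y` there is `ρ ∈ (0, r)` such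
that the connected component of `Y` containing `x` lies in the open ball `B(x, ρ)`. -/
theorem stmt7 {X : Type*} [MetricSpace X] (Y : Set X) (r : ℝ) (hr : 0 < r)
    (hball : ∀ x : X, HC 1 (Metric.closedBall x r ∩ Y) < ENNReal.ofReal (r / 2)) :
    ∀ x ∈ Y, ∃ ρ : ℝ, 0 < ρ ∧ ρ < r ∧
      connectedComponentIn Y x ⊆ Metric.ball x ρ := by
  intro x hx
  have h := hball x
  simp only [HC, iInf_lt_iff, ENNReal.rpow_one] at h
  obtain ⟨S, hS, hcov, hsum⟩ := h
  have : Countable S := hS.to_subtype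
  obtain ⟨ρ, hρ, hmiss⟩ : ∃ ρ ∈ Ioo 0 r, ∀ y ∈ Y, dist y x ≠ ρ := by
    by_contra! hcon
    have hsub : Ioo 0 r ⊆ ⋃ p : S, closedBall (dist p.1.1 x) (p.1.2 : ℝ) := by
      intro t ht
      obtain ⟨y, hy, rfl⟩ := hcon t ht
      obtain ⟨p, hp, hyp⟩ := mem_iUnion₂.1 (hcov ⟨mem_closedBall.2 ht.2.le, hy⟩)
      exact mem_iUnion.2 ⟨⟨p, hp⟩,
        (dist_dist_dist_le_left y p.1 x).trans (mem_closedBall.1 hyp)⟩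
    have hlt : MeasureTheory.volume (Ioo 0 r) < ENNReal.ofReal r := calc
      _ ≤ ∑' p : S, MeasureTheory.volume (closedBall (dist p.1.1 x) (p.1.2 : ℝ)) :=
        (MeasureTheory.measure_mono hsub).trans (MeasureTheory.measure_iUnion_le _)
      _ = 2 * ∑' p : S, (p.1.2 : ℝ≥0∞) := by
        rw [← ENNReal.tsum_mul_left]
        congr 1 with p
        rw [Real.volume_closedBall, ENNReal.ofReal_mul (by norm_num)]
        simp
      _ < 2 * ENNReal.ofReal (r / 2) :=
        ENNReal.mul_lt_mul_right (by norm_num) (by norm_num) hsum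
      _ = ENNReal.ofReal r := by
        rw [← ENNReal.ofReal_ofNat 2, ← ENNReal.ofReal_mul (by norm_num)]
        congr 1
        ring
    rw [Real.volume_Ioo, sub_zero] at hlt
    exact lt_irrefl _ hlt
  refine ⟨ρ, hρ.1, hρ.2, fun y hy => ?_⟩
  by_contra hfar
  rw [mem_ball, not_lt] at hfar
  obtain ⟨z, hz, hzρ⟩ := isPreconnected_connectedComponentIn.intermediate_value
    (f := fun z => dist z x) (mem_connectedComponentIn hx) hy (by fun_prop)
    ⟨by simpa using hρ.1.le, hfar⟩
  exact hmiss z (connectedComponentIn_subset Y x hz) hzρ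
end

section
/- Let X be a metric space, Y a compact subset of X, r > 0 and μ > 0 real numbers, and n ≥ 1 an integer. Assume that every closed metric ball B of radius r in X satisfies HC_{n+1}(B ∩ Y) < (r/(4(n+1)))^{n+1} − μ. Set μ₁ = r/(4(n+1)) − ((r/(4(n+1)))^n − 4(n+1)μ/r)^{1/n}. Suppose Z is an r-separating set for Y that is (r/(4(n+1)) − μ₁, n, 4(n+1)μ/r)-minimal. Then for every closed metric ball β of radius ρ = r(1 − 1/(n+1)) in X one has HC_n(Z ∩ β) < (ρ/(4n))^n. -/
/-!
Write `a = r / (4(n+1))`, `b = a - μ₁` and `δ = μ / a`, so that `b ^ n = a ^ n - δ`,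
`ρ = r - 4a` and `ρ / (4n) = a`. The claim is `HC_n (Z ∩ B(c, ρ)) < a ^ n`.

Cover `B(c, r) ∩ Y` by balls with `∑ rᵢ ^ (n+1) < a ^ (n+1) - μ = a * b ^ n`. The radii `t` for
which the sphere of radius `t` about `c` meets the `i`-th ball form an interval of length at most
`2 rᵢ`. Averaging over `t ∈ [ρ + 2b, r]`, an interval of length `4a - 2b ≥ 2a`, gives a sphere
meeting only balls with `∑ rᵢ ^ n < b ^ n` (`exists_sphere_small`); in particular these balls have
radii below `b`.

Cutting along that sphere, i.e. replacing the part of `Z` inside it by the sphere's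
intersection with `Y`, gives another `r`-separating set `Z'` (`IsSeparating.cut`). Given a nearly
optimal covering of `Z` by balls of radii `≤ b`, those meeting `B(c, ρ)` lie in `B(c, ρ + 2b)`, so
that `Z'` is covered by the others and the balls covering the sphere. Near-minimality of `Z`
therefore bounds the contribution of the balls meeting `B(c, ρ)` by `s + δ` up to an arbitrarily
small error, where `s < b ^ n` is the contribution of the sphere, and `s + δ < b ^ n + δ = a ^ n`.
-/


open Metric Set
open scoped ENNReal NNReal

/-- The `n`-dimensional Hausdorff content with radii bounded by `b`: the infimum of
`∑ r_i ^ n` over all countable coverings of `Z` by closed balls of `X` with radii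
`r_i ≤ b`. -/
noncomputable def HCb {X : Type*} [MetricSpace X] (b : ℝ) (m : ℝ) (Z : Set X) : ℝ≥0∞ :=
  ⨅ (S : Set (X × ℝ≥0)) (_ : S.Countable) (_ : ∀ p ∈ S, (p.2 : ℝ) ≤ b)
    (_ : Z ⊆ ⋃ p ∈ S, Metric.closedBall p.1 (p.2 : ℝ)),
    ∑' p : S, ((p : X × ℝ≥0).2 : ℝ≥0∞) ^ m

/-- `Z` is an `r`-separating set for `Y`: `Z` is a compact subset of `Y` and every
connected component of `Y \ Z` is contained in a closed metric ball of `X` of radius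
at most `r`. -/
def IsSeparating {X : Type*} [MetricSpace X] (r : ℝ) (Y Z : Set X) : Prop :=
  Z ⊆ Y ∧ IsCompact Z ∧
    ∀ x ∈ Y \ Z, ∃ c : X, connectedComponentIn (Y \ Z) x ⊆ Metric.closedBall c r

/-- `I_Y(r, b, n)`: the infimum of `HC_n^{(b)}(Z)` over all `r`-separating sets `Z`
for `Y`. -/
noncomputable def sepInf {X : Type*} [MetricSpace X] (r b m : ℝ) (Y : Set X) : ℝ≥0∞ :=
  ⨅ (Z : Set X) (_ : IsSeparating r Y Z), HCb b m Z


/-- Coarea inequality for coverings: among the spheres about `c` with radius in `[u, v]`, some one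
meets only balls whose `n`-th powers of radii sum to less than the average bound `K`. -/
theorem exists_sphere_small {X : Type*} [MetricSpace X] (S : Set (X × ℝ≥0)) (hS : S.Countable)
    (c : X) (u v : ℝ) (n : ℕ) (K : ℝ≥0∞)
    (h : 2 * ∑' p : S, ((p : X × ℝ≥0).2 : ℝ≥0∞) ^ ((n : ℝ) + 1) < K * ENNReal.ofReal (v - u)) :
    ∃ t ∈ Icc u v, ∑' p : ↥(S ∩ {p | |t - dist p.1 c| ≤ p.2}),
      ((p : X × ℝ≥0).2 : ℝ≥0∞) ^ (n : ℝ) < K := by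
  by_contra! hcon
  refine absurd h (not_lt.mpr ?_)
  have : Countable S := hS.to_subtype
  let F : S → ℝ → ℝ≥0∞ := fun p =>
    (closedBall (dist (p : X × ℝ≥0).1 c) ((p : X × ℝ≥0).2 : ℝ)).indicator
      (fun _ => ((p : X × ℝ≥0).2 : ℝ≥0∞) ^ (n : ℝ))
  have hF : ∀ t ∈ Icc u v, K ≤ ∑' p : S, F p t := by
    intro t ht
    refine (hcon t ht).trans (le_of_eq ?_)
    rw [tsum_subtype (S ∩ {p : X × ℝ≥0 | |t - dist p.1 c| ≤ p.2})
        (fun p : X × ℝ≥0 => (p.2 : ℝ≥0∞) ^ (n : ℝ)), ← Set.indicator_indicator, ← tsum_subtype]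
    rfl
  calc K * ENNReal.ofReal (v - u)
      = ∫⁻ _ in Icc u v, K := by simp
    _ ≤ ∫⁻ t in Icc u v, ∑' p : S, F p t :=
        MeasureTheory.setLIntegral_mono' measurableSet_Icc hF
    _ ≤ ∫⁻ t, ∑' p : S, F p t := MeasureTheory.setLIntegral_le_lintegral _ _
    _ = ∑' p : S, ∫⁻ t, F p t := by
        refine MeasureTheory.lintegral_tsum fun p => ?_
        exact (measurable_const.indicator measurableSet_closedBall).aemeasurable
    _ = ∑' p : S, 2 * ((p : X × ℝ≥0).2 : ℝ≥0∞) ^ ((n : ℝ) + 1) := by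
        refine tsum_congr fun p => ?_
        simp only [F]
        rw [MeasureTheory.lintegral_indicator measurableSet_closedBall,
          MeasureTheory.setLIntegral_const, Real.volume_closedBall,
          ENNReal.ofReal_mul zero_le_two, ENNReal.ofReal_coe_nnreal,
          ENNReal.rpow_add_of_nonneg _ _ (Nat.cast_nonneg n) zero_le_one, ENNReal.rpow_one]
        simp only [ENNReal.ofReal_ofNat]
        ring
    _ = 2 * ∑' p : S, ((p : X × ℝ≥0).2 : ℝ≥0∞) ^ ((n : ℝ) + 1) := ENNReal.tsum_mul_left

/-- Replacing the part of a separating set inside a sphere of radius at most `r` by the sphere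
itself yields a separating set. -/
theorem IsSeparating.cut {X : Type*} [MetricSpace X] {r t : ℝ} {Y Z : Set X} (hY : IsCompact Y)
    (hZ : IsSeparating r Y Z) (c : X) (ht : t ≤ r) :
    IsSeparating r Y ((Z \ ball c t) ∪ (sphere c t ∩ Y)) := by
  obtain ⟨hZY, hZc, hcomp⟩ := hZ
  refine ⟨union_subset (sdiff_subset.trans hZY) inter_subset_right,
    (hZc.diff isOpen_ball).union (hY.inter_left isClosed_sphere), ?_⟩
  intro x hx
  set W := Y \ ((Z \ ball c t) ∪ (sphere c t ∩ Y)) with hW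
  have hWs : ∀ y ∈ W, dist y c ≠ t := fun y hy h => hy.2 (Or.inr ⟨h, hy.1⟩)
  have hpre : IsPreconnected (connectedComponentIn W x) := isPreconnected_connectedComponentIn
  have hsub : connectedComponentIn W x ⊆ W := connectedComponentIn_subset W x
  have hxm : x ∈ connectedComponentIn W x := mem_connectedComponentIn hx
  have hcover : connectedComponentIn W x ⊆ ball c t ∪ (closedBall c t)ᶜ := by
    intro y hy
    rcases lt_or_gt_of_ne (hWs y (hsub hy)) with h | h
    · exact Or.inl h
    · exact Or.inr (by simpa using h)
  have hdisj : Disjoint (ball c t) (closedBall c t)ᶜ :=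
    disjoint_compl_right_iff_subset.mpr ball_subset_closedBall
  rcases hpre.subset_or_subset isOpen_ball isClosed_closedBall.isOpen_compl hdisj hcover with h | h
  · exact ⟨c, h.trans (ball_subset_closedBall.trans (closedBall_subset_closedBall ht))⟩
  · have hsub' : connectedComponentIn W x ⊆ Y \ Z := by
      intro y hy
      refine ⟨(hsub hy).1, fun hyZ => (hsub hy).2 (Or.inl ⟨hyZ, fun hb => h hy ?_⟩)⟩
      exact ball_subset_closedBall hb
    obtain ⟨c', hc'⟩ := hcomp x (hsub' hxm)
    exact ⟨c', (hpre.subset_connectedComponentIn hxm hsub').trans hc'⟩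

theorem HCb_le {X : Type*} [MetricSpace X] {b m : ℝ} {Z : Set X} (S : Set (X × ℝ≥0))
    (hS : S.Countable) (hb : ∀ p ∈ S, (p.2 : ℝ) ≤ b)
    (hc : Z ⊆ ⋃ p ∈ S, closedBall p.1 (p.2 : ℝ)) :
    HCb b m Z ≤ ∑' p : S, ((p : X × ℝ≥0).2 : ℝ≥0∞) ^ m :=
  iInf_le_of_le S (iInf_le_of_le hS (iInf_le_of_le hb (iInf_le_of_le hc le_rfl)))

theorem HC_le {X : Type*} [MetricSpace X] {m : ℝ} {Z : Set X} (S : Set (X × ℝ≥0))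
    (hS : S.Countable) (hc : Z ⊆ ⋃ p ∈ S, closedBall p.1 (p.2 : ℝ)) :
    HC m Z ≤ ∑' p : S, ((p : X × ℝ≥0).2 : ℝ≥0∞) ^ m :=
  iInf_le_of_le S (iInf_le_of_le hS (iInf_le_of_le hc le_rfl))

theorem HCb_lt_top {X : Type*} [MetricSpace X] {b m : ℝ} {Z : Set X} (hZ : IsCompact Z)
    (hb : 0 < b) (hm : 0 ≤ m) : HCb b m Z < ⊤ := by
  obtain ⟨T, -, hTf, hT⟩ := hZ.finite_cover_balls hb
  have hinj : ((fun x => (x, b.toNNReal)) '' T : Set (X × ℝ≥0)).Finite := hTf.image _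
  refine (HCb_le _ hinj.countable ?_ ?_).trans_lt ?_
  · rintro _ ⟨x, -, rfl⟩
    simp [hb.le]
  · intro z hz
    obtain ⟨x, hx, hzx⟩ := mem_iUnion₂.mp (hT hz)
    refine mem_iUnion₂.mpr ⟨(x, b.toNNReal), mem_image_of_mem _ hx, ?_⟩
    simpa [hb.le] using (mem_ball.mp hzx).le
  · have := hinj.fintype
    rw [tsum_fintype]
    refine ENNReal.sum_lt_top.mpr fun p _ => ?_
    exact ENNReal.rpow_lt_top_of_nonneg hm ENNReal.coe_ne_top

/-- The cut-and-compare estimate: if the sphere of radius `t ≥ ρ + 2b` is covered by balls `S₂` of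
radii at most `b`, then near-minimality of `Z` bounds the content of `Z` in `B(c, ρ)` by the
contribution of `S₂` plus the minimality defect. -/
theorem HC_le_of_cut {X : Type*} [MetricSpace X] {r t ρ b m : ℝ} {δ : ℝ≥0∞} {Y Z : Set X}
    (hY : IsCompact Y) (hZ : IsSeparating r Y Z) (hb : 0 < b) (hm : 0 ≤ m)
    (hmin : HCb b m Z ≤ sepInf r b m Y + δ) (c : X) (htr : t ≤ r) (ht : ρ + 2 * b ≤ t)
    (S₂ : Set (X × ℝ≥0)) (hS₂ : S₂.Countable) (hS₂b : ∀ p ∈ S₂, (p.2 : ℝ) ≤ b)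
    (hS₂c : sphere c t ∩ Y ⊆ ⋃ p ∈ S₂, closedBall p.1 (p.2 : ℝ)) :
    HC m (Z ∩ closedBall c ρ) ≤ (∑' p : S₂, ((p : X × ℝ≥0).2 : ℝ≥0∞) ^ m) + δ := by
  set f : X × ℝ≥0 → ℝ≥0∞ := fun p => (p.2 : ℝ≥0∞) ^ m with hf
  have hfin : HCb b m Z < ⊤ := HCb_lt_top hZ.2.1 hb hm
  refine ENNReal.le_of_forall_pos_le_add fun ε hε _ => ?_
  have hlt : HCb b m Z < HCb b m Z + ε :=
    ENNReal.lt_add_right hfin.ne (by exact_mod_cast hε.ne')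
  obtain ⟨S, hS, hSb, hSc, hSsum⟩ : ∃ S : Set (X × ℝ≥0), S.Countable ∧
      (∀ p ∈ S, (p.2 : ℝ) ≤ b) ∧ (Z ⊆ ⋃ p ∈ S, closedBall p.1 (p.2 : ℝ)) ∧
      ∑' p : S, f p < HCb b m Z + ε := by
    have h := hlt
    conv at h => lhs; unfold HCb
    simp only [iInf_lt_iff] at h
    obtain ⟨S, h1, h2, h3, h4⟩ := h
    exact ⟨S, h1, h2, h3, h4⟩
  let M : Set (X × ℝ≥0) := {p | (closedBall p.1 (p.2 : ℝ) ∩ closedBall c ρ).Nonempty}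
  have hsplit : ∑' p : S, f p = ∑' p : ↥(S ∩ M), f p + ∑' p : ↥(S \ M), f p := by
    rw [← ENNReal.summable.tsum_union_disjoint
      (disjoint_sdiff_right.mono_left inter_subset_right) ENNReal.summable,
      inter_union_sdiff]
  have hHC : HC m (Z ∩ closedBall c ρ) ≤ ∑' p : ↥(S ∩ M), f p := by
    refine HC_le _ (hS.mono inter_subset_left) ?_
    rintro z ⟨hz, hzc⟩
    obtain ⟨p, hp, hzp⟩ := mem_iUnion₂.mp (hSc hz)
    exact mem_iUnion₂.mpr ⟨p, ⟨hp, ⟨z, hzp, hzc⟩⟩, hzp⟩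
  have hcut : HCb b m ((Z \ ball c t) ∪ (sphere c t ∩ Y)) ≤
      ∑' p : ↥(S \ M), f p + ∑' p : S₂, f p := by
    refine (HCb_le ((S \ M) ∪ S₂) ((hS.mono sdiff_subset).union hS₂) ?_ ?_).trans
      (ENNReal.tsum_union_le f _ _)
    · rintro p (hp | hp)
      · exact hSb p hp.1
      · exact hS₂b p hp
    · rw [biUnion_union]
      rintro z (⟨hz, hzt⟩ | hz)
      · by_cases hzs : dist z c = t
        · exact Or.inr (hS₂c ⟨hzs, hZ.1 hz⟩)
        · obtain ⟨p, hp, hzp⟩ := mem_iUnion₂.mp (hSc hz)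
          refine Or.inl (mem_iUnion₂.mpr ⟨p, ⟨hp, ?_⟩, hzp⟩)
          rintro ⟨y, hyp, hyc⟩
          -- A ball meeting `B(c, ρ)` stays within distance `ρ + 2b ≤ t` of `c`.
          have h1 := dist_triangle z p.1 c
          have h2 := dist_triangle p.1 y c
          rw [mem_closedBall] at hzp hyp hyc
          rw [dist_comm] at hyp
          have h3 := hSb p hp
          have h4 : ¬ dist z c < t := hzt
          exact hzs (le_antisymm (by linarith) (not_lt.mp h4))
      · exact Or.inr (hS₂c hz)
  have hinf : sepInf r b m Y ≤ HCb b m ((Z \ ball c t) ∪ (sphere c t ∩ Y)) :=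
    iInf₂_le _ (hZ.cut hY c htr)
  have hDfin : ∑' p : ↥(S \ M), f p ≠ ⊤ := by
    refine ne_top_of_le_ne_top (ENNReal.add_lt_top.mpr ⟨hfin, ENNReal.coe_lt_top⟩).ne
      (le_trans ?_ hSsum.le)
    rw [hsplit]
    exact le_add_self
  refine hHC.trans ?_
  rw [← ENNReal.add_le_add_iff_right hDfin, ← hsplit]
  calc ∑' p : S, f p ≤ HCb b m Z + ε := hSsum.le
    _ ≤ ((∑' p : ↥(S \ M), f p + ∑' p : S₂, f p) + δ) + ε := by
        gcongr
        exact hmin.trans (by gcongr; exact hinf.trans hcut)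
    _ = _ := by ring

/-- Key lemma: let `Y ⊆ X` be compact, `n ≥ 1`, `r, μ > 0`, and suppose every closed ball
`B` of radius `r` in `X` satisfies `HC_{n+1}(B ∩ Y) < (r/(4(n+1)))^{n+1} − μ`. Set
`μ₁ = r/(4(n+1)) − ((r/(4(n+1)))^n − 4(n+1)μ/r)^{1/n}`. If `Z` is an `r`-separating set
for `Y` which is `(r/(4(n+1)) − μ₁, n, 4(n+1)μ/r)`-minimal, then every closed ball `β` of
radius `ρ = r(1 − 1/(n+1))` satisfies `HC_n(Z ∩ β) < (ρ/(4n))^n`. -/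
theorem stmt8 {X : Type*} [MetricSpace X] (Y : Set X) (hY : IsCompact Y)
    (n : ℕ) (hn : 1 ≤ n) (r μ μ₁ : ℝ) (hr : 0 < r) (hμ : 0 < μ)
    (hball : ∀ x : X, HC ((n : ℝ) + 1) (Metric.closedBall x r ∩ Y) <
      ENNReal.ofReal ((r / (4 * ((n : ℝ) + 1))) ^ (n + 1) - μ))
    (hμ₁ : μ₁ = r / (4 * ((n : ℝ) + 1)) -
      ((r / (4 * ((n : ℝ) + 1))) ^ n - 4 * ((n : ℝ) + 1) * μ / r) ^ ((n : ℝ)⁻¹))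
    (Z : Set X) (hZ : IsSeparating r Y Z)
    (hmin : HCb (r / (4 * ((n : ℝ) + 1)) - μ₁) (n : ℝ) Z ≤
      sepInf r (r / (4 * ((n : ℝ) + 1)) - μ₁) (n : ℝ) Y +
        ENNReal.ofReal (4 * ((n : ℝ) + 1) * μ / r)) :
    ∀ c : X, HC (n : ℝ) (Z ∩ Metric.closedBall c (r * (1 - 1 / ((n : ℝ) + 1)))) <
      ENNReal.ofReal ((r * (1 - 1 / ((n : ℝ) + 1)) / (4 * n)) ^ n) := by
  intro c
  have hn0 : (0 : ℝ) < n := by exact_mod_cast hn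
  have hρ : r * (1 - 1 / ((n : ℝ) + 1)) / (4 * n) = r / (4 * ((n : ℝ) + 1)) := by
    field_simp
    ring
  have hρ' : r * (1 - 1 / ((n : ℝ) + 1)) = r - 4 * (r / (4 * ((n : ℝ) + 1))) := by
    field_simp
  have hδ : 4 * ((n : ℝ) + 1) * μ / r = μ / (r / (4 * ((n : ℝ) + 1))) := by
    field_simp
  rw [hρ, hρ']
  rw [hδ] at hmin hμ₁
  have ha : 0 < r / (4 * ((n : ℝ) + 1)) := by positivity
  set a := r / (4 * ((n : ℝ) + 1)) with ha_def
  set b := a - μ₁ with hb_def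
  have hB := hball c
  have hpos : 0 < a ^ (n + 1) - μ := ENNReal.ofReal_pos.mp (pos_of_gt hB)
  have hfac : a ^ (n + 1) - μ = a * (a ^ n - μ / a) := by
    field_simp
    ring
  have hbn0 : 0 < a ^ n - μ / a := by
    rw [hfac] at hpos
    exact pos_of_mul_pos_right hpos ha.le
  have hb_eq : b = (a ^ n - μ / a) ^ ((n : ℝ)⁻¹) := by rw [hb_def, hμ₁]; ring
  have hb : 0 < b := hb_eq ▸ Real.rpow_pos_of_pos hbn0 _
  have hbn : b ^ n = a ^ n - μ / a := by
    rw [hb_eq, Real.rpow_inv_natCast_pow hbn0.le (by omega)]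
  have hδ0 : 0 < μ / a := by positivity
  have hba : b ≤ a := by
    refine le_of_lt (lt_of_pow_lt_pow_left₀ n ha.le ?_)
    rw [hbn]; linarith
  obtain ⟨S, hS, hSc, hSsum⟩ : ∃ S : Set (X × ℝ≥0), S.Countable ∧
      (closedBall c r ∩ Y ⊆ ⋃ p ∈ S, closedBall p.1 (p.2 : ℝ)) ∧
      ∑' p : S, ((p : X × ℝ≥0).2 : ℝ≥0∞) ^ ((n : ℝ) + 1) < ENNReal.ofReal (a ^ (n + 1) - μ) := by
    unfold HC at hB
    simp only [iInf_lt_iff] at hB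
    obtain ⟨S, h1, h2, h3⟩ := hB
    exact ⟨S, h1, h2, h3⟩
  obtain ⟨t, ⟨ht1, ht2⟩, hts⟩ := exists_sphere_small S hS c (r - 4 * a + 2 * b) r n
    (ENNReal.ofReal (b ^ n)) (by
      calc _ < 2 * ENNReal.ofReal (a ^ (n + 1) - μ) :=
            ENNReal.mul_lt_mul_right two_ne_zero ENNReal.ofNat_ne_top hSsum
        _ = ENNReal.ofReal (2 * (a * b ^ n)) := by
            rw [hfac, hbn, ENNReal.ofReal_mul zero_le_two, ENNReal.ofReal_ofNat]
        _ ≤ ENNReal.ofReal (b ^ n * (r - (r - 4 * a + 2 * b))) := by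
            apply ENNReal.ofReal_le_ofReal
            have : 0 < b ^ n := by positivity
            nlinarith
        _ = _ := ENNReal.ofReal_mul (by positivity))
  refine (HC_le_of_cut hY hZ hb hn0.le hmin c ht2 ht1
    (S ∩ {p | |t - dist p.1 c| ≤ p.2}) (hS.mono inter_subset_left) ?_ ?_).trans_lt ?_
  · intro p hp
    -- A single term of the sum over the sphere is already below `b ^ n`.
    have h1 := (ENNReal.le_tsum (f := fun q : ↥(S ∩ {p : X × ℝ≥0 | |t - dist p.1 c| ≤ p.2}) =>
      ((q : X × ℝ≥0).2 : ℝ≥0∞) ^ (n : ℝ)) ⟨p, hp⟩).trans_lt hts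
    simp only [ENNReal.rpow_natCast] at h1
    rw [← ENNReal.ofReal_coe_nnreal, ← ENNReal.ofReal_pow p.2.coe_nonneg,
      ENNReal.ofReal_lt_ofReal_iff (by positivity)] at h1
    exact (lt_of_pow_lt_pow_left₀ n hb.le h1).le
  · rintro y ⟨hyt, hyY⟩
    rw [mem_sphere] at hyt
    obtain ⟨p, hp, hyp⟩ := mem_iUnion₂.mp (hSc ⟨mem_closedBall.mpr (hyt.trans_le ht2), hyY⟩)
    refine mem_iUnion₂.mpr ⟨p, ⟨hp, ?_⟩, hyp⟩
    rw [mem_ofPred_eq, ← hyt]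
    exact (abs_dist_sub_le y p.1 c).trans hyp
  · calc _ < ENNReal.ofReal (b ^ n) + ENNReal.ofReal (μ / a) :=
          ENNReal.add_lt_add_right ENNReal.ofReal_ne_top hts
      _ = ENNReal.ofReal (a ^ n) := by
          rw [← ENNReal.ofReal_add (by positivity) hδ0.le, hbn]
          congr 1
          ring
end

section
/- Let X be a boundedly compact metric space, Y a closed subset of X, x ∈ X, 0 ≤ r₁ < r₂, and m > 0. Let (β_i) be a countable family of closed metric balls of X with radii (r_i). For s ∈ (r₁, r₂) define F(s) = Σ_i r_i^{m−1}·χ_i(s), where χ_i(s) = 1 if β_i ∩ S(x,s) ∩ Y ≠ ∅ and χ_i(s) = 0 otherwise (here S(x,s) = {y : d(x,y) = s}). Then each set {s : χ_i(s) = 1} is contained in an interval of length at most 2r_i, F is Lebesgue measurable on (r₁, r₂), and ∫_{r₁}^{r₂} F(s) ds ≤ 2·Σ_i r_i^m. -/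
/-!
The set of `s` with `χ_i(s) = 1` is the image of `β_i ∩ Y` under the `1`-Lipschitz map `dist x`.
As `β_i ∩ Y` is compact, this image is compact, hence Borel, which gives measurability of `F`; and
it lies in `[d(x, c_i) - r_i, d(x, c_i) + r_i]`, so its Lebesgue measure is at most `2 r_i`.
Integrating the series term by term bounds the integral by `∑ r_i ^ (m - 1) * (2 r_i)`.
-/

open Metric Set MeasureTheory
open scoped ENNReal NNReal

/-- The radii `t` for which the sphere `S(x, t)` meets `closedBall c r ∩ Y`. -/
def hitRadii {X : Type*} [MetricSpace X] (Y : Set X) (x c : X) (r : ℝ≥0) : Set ℝ :=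
  {t : ℝ | (Metric.closedBall c r ∩ {y : X | dist x y = t} ∩ Y).Nonempty}

lemma hitRadii_eq_image {X : Type*} [MetricSpace X] (Y : Set X) (x c : X) (r : ℝ≥0) :
    hitRadii Y x c r = Set.image (dist x) (Metric.closedBall c r ∩ Y) := by
  ext t
  constructor
  · rintro ⟨y, ⟨hyb, hyt⟩, hyY⟩
    exact ⟨y, ⟨hyb, hyY⟩, hyt⟩
  · rintro ⟨y, ⟨hyb, hyY⟩, hyt⟩
    exact ⟨y, ⟨hyb, hyt⟩, hyY⟩

lemma measurableSet_hitRadii {X : Type*} [MetricSpace X]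
    (hbc : ∀ (z : X) (t : ℝ), IsCompact (Metric.closedBall z t))
    (Y : Set X) (hY : IsClosed Y) (x c : X) (r : ℝ≥0) :
    MeasurableSet (hitRadii Y x c r) := by
  rw [hitRadii_eq_image]
  exact (((hbc c r).inter_right hY).image (by fun_prop)).measurableSet

lemma hitRadii_subset_Icc {X : Type*} [MetricSpace X] (Y : Set X) (x c : X) (r : ℝ≥0) :
    hitRadii Y x c r ⊆ Set.Icc (dist x c - r) (dist x c - r + 2 * r) := by
  rintro t ⟨y, ⟨hyb, rfl⟩, -⟩
  rw [Metric.mem_closedBall] at hyb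
  have h1 := dist_triangle x y c
  have h2 := dist_triangle_right x y c
  constructor <;> linarith

lemma volume_hitRadii_le {X : Type*} [MetricSpace X] (Y : Set X) (x c : X) (r : ℝ≥0) :
    volume (hitRadii Y x c r) ≤ 2 * (r : ℝ≥0∞) := by
  refine (measure_mono (hitRadii_subset_Icc Y x c r)).trans_eq ?_
  rw [Real.volume_Icc, add_sub_cancel_left, ENNReal.ofReal_mul zero_le_two]
  simp

/-- For `r = 0` and `m < 1` the factor `r ^ (m - 1)` is `∞`, and the identity reads `∞ * 0 = 0`. -/
lemma rpow_sub_one_mul_two_mul (r : ℝ≥0) {m : ℝ} (hm : 0 < m) :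
    (r : ℝ≥0∞) ^ (m - 1) * (2 * (r : ℝ≥0∞)) = 2 * (r : ℝ≥0∞) ^ m := by
  rcases eq_or_ne r 0 with rfl | hr
  · simp [ENNReal.zero_rpow_of_pos hm]
  · have h := ENNReal.rpow_add (m - 1) 1 (ENNReal.coe_ne_zero.2 hr) (ENNReal.coe_ne_top (r := r))
    rw [sub_add_cancel, ENNReal.rpow_one] at h
    rw [h]
    ring

/-- Let `X` be a boundedly compact metric space, `Y ⊆ X` closed, `x ∈ X`, `0 ≤ r₁ < r₂`,
`m > 0`, and let `(β_i)` be a countable family of closed balls with centers `c i` and radii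
`ri i`. Define `F s = ∑_i (ri i)^{m−1} · χ_i(s)`, where `χ_i(s) = 1` iff
`β_i ∩ S(x,s) ∩ Y ≠ ∅`. Then each set `{s | χ_i(s) = 1}` lies in an interval of length at
most `2·ri i`, `F` is Lebesgue measurable on `(r₁, r₂)`, and
`∫_{r₁}^{r₂} F ≤ 2·∑_i (ri i)^m`. -/
theorem stmt10 {X : Type*} [MetricSpace X]
    (hbc : ∀ (z : X) (t : ℝ), IsCompact (Metric.closedBall z t))
    (Y : Set X) (hY : IsClosed Y) (x : X)
    (r₁ r₂ : ℝ) (hr₁ : 0 ≤ r₁) (h₁₂ : r₁ < r₂)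
    (m : ℝ) (hm : 0 < m) (c : ℕ → X) (ri : ℕ → ℝ≥0)
    (F : ℝ → ℝ≥0∞)
    (hF : ∀ s : ℝ, F s = ∑' i : ℕ, (ri i : ℝ≥0∞) ^ (m - 1) *
      Set.indicator {t : ℝ |
        (Metric.closedBall (c i) (ri i) ∩ {y : X | dist x y = t} ∩ Y).Nonempty}
        (1 : ℝ → ℝ≥0∞) s) :
    (∀ i : ℕ, ∃ a : ℝ,
      {s ∈ Set.Ioo r₁ r₂ |
          (Metric.closedBall (c i) (ri i) ∩ {y : X | dist x y = s} ∩ Y).Nonempty}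
        ⊆ Set.Icc a (a + 2 * ri i)) ∧
    AEMeasurable F (volume.restrict (Set.Ioo r₁ r₂)) ∧
    ∫⁻ s in Set.Ioo r₁ r₂, F s ≤ 2 * ∑' i : ℕ, (ri i : ℝ≥0∞) ^ m := by
  have hF_eq : F = fun s => ∑' i : ℕ, (ri i : ℝ≥0∞) ^ (m - 1) *
      Set.indicator (hitRadii Y x (c i) (ri i)) (1 : ℝ → ℝ≥0∞) s := funext hF
  have hmeas : ∀ i, MeasurableSet (hitRadii Y x (c i) (ri i)) :=
    fun i => measurableSet_hitRadii hbc Y hY x (c i) (ri i)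
  have hind : ∀ i, Measurable (Set.indicator (hitRadii Y x (c i) (ri i)) (1 : ℝ → ℝ≥0∞)) :=
    fun i => measurable_one.indicator (hmeas i)
  have hterm : ∀ i, Measurable fun s => (ri i : ℝ≥0∞) ^ (m - 1) *
      Set.indicator (hitRadii Y x (c i) (ri i)) (1 : ℝ → ℝ≥0∞) s :=
    fun i => (hind i).const_mul _
  refine ⟨fun i => ⟨dist x (c i) - ri i, fun s hs => hitRadii_subset_Icc Y x (c i) (ri i) hs.2⟩,
    ?_, ?_⟩
  · rw [hF_eq]
    exact (Measurable.tsum hterm).aemeasurable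
  · rw [hF_eq, lintegral_tsum fun i => (hterm i).aemeasurable, ← ENNReal.tsum_mul_left]
    refine ENNReal.tsum_le_tsum fun i => ?_
    rw [lintegral_const_mul _ (hind i), lintegral_indicator_one (hmeas i),
      ← rpow_sub_one_mul_two_mul (ri i) hm]
    gcongr
    exact (Measure.restrict_apply_le _ _).trans (volume_hitRadii_le Y x (c i) (ri i))
end

section
/- Let X be a metric space, Y a subset of X, x ∈ Y, and r > 0. Assume that the closed metric ball B(x,r) satisfies HC_1(B(x,r) ∩ Y) < r/2. Then there exists ρ ∈ (0, r) such that the metric sphere S(x,ρ) = {y ∈ X : d(x,y) = ρ} is disjoint from Y. -/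
/-!
Take a countable cover of `B(x,r) ∩ Y` by closed balls `B(c, s)` with `∑ s < r / 2`. The function
`y ↦ d(x,y)` is 1-Lipschitz, so it maps `B(c, s)` into the interval
`[d(x,c) - s, d(x,c) + s]` of length `2s`. These intervals have total length less than `r`, hence
cannot cover `(0, r)`, and any uncovered `ρ ∈ (0, r)` is not a distance from `x` to a point of `Y`.
-/

open Metric Set
open scoped ENNReal NNReal

/-- If `Y ⊆ X`, `x ∈ Y`, `r > 0` and `HC_1(B(x,r) ∩ Y) < r/2`, then there is a radius
`ρ ∈ (0, r)` such that the metric sphere `S(x,ρ)` is disjoint from `Y`. -/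
theorem stmt11 {X : Type*} [MetricSpace X] (Y : Set X) (x : X) (hx : x ∈ Y)
    (r : ℝ) (hr : 0 < r)
    (hball : HC 1 (Metric.closedBall x r ∩ Y) < ENNReal.ofReal (r / 2)) :
    ∃ ρ : ℝ, 0 < ρ ∧ ρ < r ∧ {y : X | dist x y = ρ} ∩ Y = ∅ := by
  simp only [HC, iInf_lt_iff, ENNReal.rpow_one] at hball
  obtain ⟨S, hS, hcov, hsum⟩ := hball
  by_contra! hne
  have hsub : Ioo 0 r ⊆ ⋃ p ∈ S, Metric.closedBall (dist x p.1) (p.2 : ℝ) := by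
    rintro ρ ⟨h0, h1⟩
    obtain ⟨y, hy, hyY⟩ := hne ρ h0 h1
    have hy' : dist x y = ρ := hy
    have hmem := hcov ⟨by rw [Metric.mem_closedBall, dist_comm, hy']; exact h1.le, hyY⟩
    simp only [mem_iUnion, Metric.mem_closedBall, exists_prop] at hmem ⊢
    obtain ⟨p, hp, hpy⟩ := hmem
    refine ⟨p, hp, le_trans ?_ hpy⟩
    rw [← hy']
    exact dist_dist_dist_le_right x y p.1
  have hvol : ENNReal.ofReal r ≤ 2 * ∑' p : S, ((p : X × ℝ≥0).2 : ℝ≥0∞) := by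
    calc ENNReal.ofReal r = MeasureTheory.volume (Ioo 0 r) := by simp
      _ ≤ MeasureTheory.volume (⋃ p ∈ S, Metric.closedBall (dist x p.1) (p.2 : ℝ)) :=
          MeasureTheory.measure_mono hsub
      _ ≤ ∑' p : S, MeasureTheory.volume
            (Metric.closedBall (dist x (p : X × ℝ≥0).1) ((p : X × ℝ≥0).2 : ℝ)) :=
          MeasureTheory.measure_biUnion_le _ hS _
      _ = 2 * ∑' p : S, ((p : X × ℝ≥0).2 : ℝ≥0∞) := by
          rw [← ENNReal.tsum_mul_left]
          refine tsum_congr fun p => ?_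
          rw [Real.volume_closedBall, ENNReal.ofReal_mul zero_le_two]
          simp
  have hlt : 2 * ∑' p : S, ((p : X × ℝ≥0).2 : ℝ≥0∞) < 2 * ENNReal.ofReal (r / 2) :=
    ENNReal.mul_lt_mul_right (by simp) (by simp) hsum
  have heq : 2 * ENNReal.ofReal (r / 2) = ENNReal.ofReal r := by
    rw [← ENNReal.ofReal_ofNat 2, ← ENNReal.ofReal_mul zero_le_two]
    congr 1
    ring
  exact absurd (hvol.trans_lt hlt) (by rw [heq]; exact lt_irrefl _)
end

section
/- Let n ≥ 0 be an integer, c > 0, ε ∈ (0,1), and r > 0. Let f : (0, r) → [0, ∞] be a Lebesgue measurable function with ∫_0^r f(t) dt ≤ c·r^{n+1}·(1 − ε). Set λ = r·(ε/3)^{1/(n+1)}. Then the set { t ∈ (λ, r) : f(t) < (n+1)·c·t^n·(1 − ε/3) } has positive Lebesgue measure. -/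
/-!
If the set were null, then `f t ≥ (n+1)·c·t^n·(1-ε/3)` for almost every `t ∈ (λ, r)`. Integrating
over `(λ, r)` and using `λ^{n+1} = r^{n+1}·ε/3`, the integral of `f` over `(0, r)` would be at least
`c·(r^{n+1} - λ^{n+1})·(1-ε/3) = c·r^{n+1}·(1-ε/3)²`, which exceeds `c·r^{n+1}·(1-ε)`.
-/

open Set MeasureTheory
open scoped ENNReal

/-- Let `n ≥ 0`, `c > 0`, `ε ∈ (0,1)`, `r > 0`, and let `f : (0,r) → [0,∞]` be measurable
with `∫_0^r f ≤ c·r^{n+1}·(1−ε)`. Set `λ = r·(ε/3)^{1/(n+1)}`. Then the set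
`{t ∈ (λ, r) | f t < (n+1)·c·t^n·(1−ε/3)}` has positive Lebesgue measure. -/
theorem stmt12 (n : ℕ) (c ε r : ℝ) (hc : 0 < c) (hε : ε ∈ Set.Ioo (0 : ℝ) 1) (hr : 0 < r)
    (f : ℝ → ℝ≥0∞) (hf : Measurable f)
    (hint : ∫⁻ t in Set.Ioo (0 : ℝ) r, f t ≤
      ENNReal.ofReal (c * r ^ (n + 1) * (1 - ε))) :
    0 < volume {t ∈ Set.Ioo (r * (ε / 3) ^ (((n : ℝ) + 1)⁻¹)) r |
      f t < ENNReal.ofReal (((n : ℝ) + 1) * c * t ^ n * (1 - ε / 3))} := by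
  obtain ⟨hε0, hε1⟩ := hε
  set l : ℝ := r * (ε / 3) ^ (((n : ℝ) + 1)⁻¹) with hl
  have hl0 : 0 ≤ l := by positivity
  have hlpow : l ^ (n + 1) = r ^ (n + 1) * (ε / 3) := by
    have h := Real.rpow_inv_natCast_pow (x := ε / 3) (by positivity) (Nat.succ_ne_zero n)
    rw [Nat.cast_succ] at h
    rw [hl, mul_pow, h]
  have hrpow : 0 < r ^ (n + 1) := by positivity
  have hlr : l ≤ r := by
    refine le_of_pow_le_pow_left₀ (Nat.succ_ne_zero n) hr.le ?_
    rw [Nat.succ_eq_add_one, hlpow]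
    nlinarith
  rw [pos_iff_ne_zero]
  intro hnull
  have hae : ∀ᵐ t ∂(volume.restrict (Ioo l r)),
      ENNReal.ofReal (((n : ℝ) + 1) * c * t ^ n * (1 - ε / 3)) ≤ f t := by
    rw [ae_restrict_iff' measurableSet_Ioo, ae_iff]
    refine measure_mono_null (fun t ht => ?_) hnull
    simpa [and_assoc] using ht
  have hval : ∫⁻ t in Ioo l r, ENNReal.ofReal (((n : ℝ) + 1) * c * t ^ n * (1 - ε / 3)) =
      ENNReal.ofReal (c * r ^ (n + 1) * (1 - ε / 3) ^ 2) := by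
    have hcont : Continuous fun t : ℝ => ((n : ℝ) + 1) * c * t ^ n * (1 - ε / 3) := by fun_prop
    rw [← ofReal_integral_eq_lintegral_ofReal
      ((hcont.integrableOn_Icc (a := l) (b := r)).mono_set Ioo_subset_Icc_self)]
    · congr 1
      rw [← integral_Ioc_eq_integral_Ioo, ← intervalIntegral.integral_of_le hlr,
        intervalIntegral.integral_mul_const, intervalIntegral.integral_const_mul, integral_pow,
        hlpow]
      field_simp
    · filter_upwards [ae_restrict_mem measurableSet_Ioo] with t ht
      have ht0 : 0 ≤ t := hl0.trans ht.1.le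
      have : 0 ≤ 1 - ε / 3 := by linarith
      simp only [Pi.zero_apply]
      positivity
  have hle : ENNReal.ofReal (c * r ^ (n + 1) * (1 - ε / 3) ^ 2) ≤
      ENNReal.ofReal (c * r ^ (n + 1) * (1 - ε)) :=
    calc _ = _ := hval.symm
      _ ≤ ∫⁻ t in Ioo l r, f t := lintegral_mono_ae hae
      _ ≤ ∫⁻ t in Ioo 0 r, f t := lintegral_mono_set (Ioo_subset_Ioo_left hl0)
      _ ≤ _ := hint
  have hcr : 0 < c * r ^ (n + 1) := by positivity
  rw [ENNReal.ofReal_le_ofReal_iff (mul_nonneg hcr.le (by linarith))] at hle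
  have := le_of_mul_le_mul_left hle hcr
  nlinarith
end
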